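/- arXiv:2503.11222 — 5 statements merged into one kernel-verified Lean document; each statement's English description precedes it below -/
import Mathlib

section
/- Let G=(V,w,μ,d) be a finite connected weighted graph with a general path distance and non-negative Ollivier curvature satisfying β₁(M₂(G)) = deg_max/2 =: m. Then there exists a basis (α₁,…,α_m) of H₁(M₂(G)) such that for every i∈{1,…,m} and every x∈V there exist y=y(i,x) and z=z(i,x) with x∼y, x∼z, and α_i(x,x') = d(x,x')·(1_y(x') − 1_z(x')) for every x'∈V. -/
/-!
Call an edge `x ∼ y` maximal for a form `α` in `H1set` with `|α| ≤ d` if `α x y = d x y`. The heart of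
the proof is that a form with one maximal edge has an outgoing maximal edge at *every* vertex
(`exists_max_edge`).

Closedness on the cycles of `X₂` controls paths of at most three steps: their `α`-integral is at most
the distance of the end points, with equality only if the end points are joined by a chain of maximal
edges (`IsForm.lip_two`, `IsForm.lip_three`). So near an edge `x ∼ y` the form has a 1-Lipschitz
primitive `pot` (`pot_lip`). If `x ∼ y` is maximal, this primitive plus a small multiple of a function
`g` that is non-increasing along maximal increments, with `g x = g y`, is still a test function for the
curvature of `x ∼ y`. As `α` is divergence free, non-negative curvature gives `Δ g y ≤ Δ g x`
(`lap_le_of_perturb`). Measuring the chains of maximal edges that start at a vertex, suitable choices of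
`g` show first that at some vertex these chains are arbitrarily long (`exists_live`), and then that they
are so at all vertices (`all_live`).

Consequently the norm `max α x y / d x y` on `H1set` is, for every vertex `x`, already the maximum of the
functionals `α ↦ α x y / d x y` over the neighbours `y` of `x` (`exists_evalAt_eq`). There are at most
`deg_max = 2 m` of them, while the dimension is `m`. A norm on an `m`-dimensional space that is a maximum
of at most `2 m` functionals is a maximum norm: the functionals that coincide with the norm near some
point are intrinsic to the norm, come in pairs `±ℓ` and span the dual space, so they are `±b i` for a
basis `b` of the dual, the same for all `x` (`exists_basis_of_nrm`). The basis of `H1set` predual to `b`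
is the required one: at `x`, the only neighbours on which its `i`-th element does not vanish are the one
representing `b i` and the one representing `-b i`.
-/


open Finset

namespace Paper

variable {V : Type*}

/-- Adjacency relation of a weighted graph: `x ∼ y` iff `w x y > 0`. -/
def Adj (w : V → V → ℝ) (x y : V) : Prop := 0 < w x y

/-- The axioms of a weighted graph `(V, w, μ)`: `w` symmetric, nonnegative, vanishing on the
diagonal, and `μ` positive. -/
structure IsWeightedGraph (w : V → V → ℝ) (μ : V → ℝ) : Prop where
  symm : ∀ x y, w x y = w y x
  nonneg : ∀ x y, 0 ≤ w x y
  loopless : ∀ x, w x x = 0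
  mu_pos : ∀ x, 0 < μ x

/-- Connectedness of the weighted graph. -/
def GraphConnected (w : V → V → ℝ) : Prop :=
  ∀ x y : V, ∃ (n : ℕ) (c : Fin (n + 1) → V), c 0 = x ∧ c (Fin.last n) = y ∧
    ∀ i : Fin n, Adj w (c i.castSucc) (c i.succ)

/-- `d` is a general path distance for the graph with edge weight `w`:
symmetric, vanishing exactly on the diagonal, nonnegative, and equal to the infimum of the
lengths of paths joining the two points. -/
def IsPathDistance (w : V → V → ℝ) (d : V → V → ℝ) : Prop :=
  (∀ x y, d x y = d y x) ∧ (∀ x y, d x y = 0 ↔ x = y) ∧ (∀ x y, 0 ≤ d x y) ∧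
  ∀ x y : V, IsGLB { s : ℝ |
      ∃ (n : ℕ) (c : Fin (n + 1) → V), c 0 = x ∧ c (Fin.last n) = y ∧
        (∀ i : Fin n, Adj w (c i.castSucc) (c i.succ)) ∧
        s = ∑ i : Fin n, d (c i.castSucc) (c i.succ) } (d x y)

section Finite

variable [Fintype V]

/-- The (negative) graph Laplacian `Δ f (x) = ∑_y (w x y / μ x) (f y - f x)`. -/
noncomputable def lap (w : V → V → ℝ) (μ : V → ℝ) (f : V → ℝ) (x : V) : ℝ :=
  ∑ y, w x y / μ x * (f y - f x)

/-- The gradient `∇_{xy} f = (f x - f y)/d(x,y)`. -/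
noncomputable def grad (d : V → V → ℝ) (f : V → ℝ) (x y : V) : ℝ := (f x - f y) / d x y

/-- The Lipschitz norm `‖∇ f‖_∞ = sup_{x ∼ y} |∇_{xy} f|`. -/
noncomputable def gradNorm (w d : V → V → ℝ) (f : V → ℝ) : ℝ :=
  sSup { r : ℝ | ∃ x y, Adj w x y ∧ r = |grad d f x y| }

/-- The Ollivier curvature `κ(x,y) = inf {∇_{xy} Δ f : ∇_{yx} f = 1, ‖∇ f‖_∞ = 1}`. -/
noncomputable def kappa (w : V → V → ℝ) (μ : V → ℝ) (d : V → V → ℝ) (x y : V) : ℝ :=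
  sInf { r : ℝ | ∃ f : V → ℝ, grad d f y x = 1 ∧ gradNorm w d f = 1 ∧
      r = grad d (lap w μ f) x y }

/-- Non-negative Ollivier curvature on every edge. -/
def NonnegCurv (w : V → V → ℝ) (μ : V → ℝ) (d : V → V → ℝ) : Prop :=
  ∀ x y, Adj w x y → 0 ≤ kappa w μ d x y

/-- A cycle of length `n + 3`: an injective cyclic path along edges. -/
def IsCycle {n : ℕ} (w : V → V → ℝ) (c : ZMod (n + 3) → V) : Prop :=
  Function.Injective c ∧ ∀ i, Adj w (c i) (c (i + 1))

/-- Membership of a cycle in `X₂`: either a triangle, or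
`d(x₀,x₃) < d(x₀,x₁)+d(x₁,x₂)+d(x₂,x₃)` and `x₃ ∼ … ∼ x_{n-1} ∼ x₀` is a geodesic. -/
def InX2 {n : ℕ} (w d : V → V → ℝ) (c : ZMod (n + 3) → V) : Prop :=
  n = 0 ∨
    (d (c 0) (c 3) < d (c 0) (c 1) + d (c 1) (c 2) + d (c 2) (c 3) ∧
      ∑ i ∈ Finset.univ.filter (fun i : ZMod (n + 3) => i ≠ 0 ∧ i ≠ 1 ∧ i ≠ 2),
          d (c i) (c (i + 1)) = d (c 3) (c 0))

/-- The set of harmonic 1-forms `H₁(M₂(G))`: antisymmetric functions supported on edges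
with vanishing cyclic sum along every cycle of `X₂` and vanishing divergence `δ* α`. -/
def H1set (w : V → V → ℝ) (μ : V → ℝ) (d : V → V → ℝ) : Set (V → V → ℝ) :=
  { α | (∀ x y, α x y = -α y x) ∧ (∀ x y, ¬Adj w x y → α x y = 0) ∧
      (∀ (n : ℕ) (c : ZMod (n + 3) → V), IsCycle w c → InX2 w d c →
          ∑ i, α (c i) (c (i + 1)) = 0) ∧
      (∀ x, ∑ y, w x y / μ x * α x y = 0) }

/-- The first Betti number `β₁(M₂(G)) = dim H₁(M₂(G))`. -/
noncomputable def betti1 (w : V → V → ℝ) (μ : V → ℝ) (d : V → V → ℝ) : ℕ :=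
  Module.finrank ℝ (Submodule.span ℝ (H1set w μ d))

/-- The combinatorial vertex degree. -/
noncomputable def deg (w : V → V → ℝ) (x : V) : ℕ := Nat.card { y : V // Adj w x y }

/-- The minimal combinatorial vertex degree. -/
noncomputable def degMin (w : V → V → ℝ) : ℕ := ⨅ x : V, deg w x

/-- The maximal combinatorial vertex degree. -/
noncomputable def degMax (w : V → V → ℝ) : ℕ := ⨆ x : V, deg w x

end Finite

end Paper

/-! ### Path distances and geodesics -/

namespace Paper

section Distance

variable {V : Type*}

/-- The consequences of the axioms of a weighted graph with path distance on a finite vertex set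
that the argument uses: `d` is a metric in which every pair of distinct points `u`, `v` admits a
neighbour `z` of `u` lying between them. -/
structure DistFacts (w d : V → V → ℝ) : Prop where
  adj_symm : ∀ {x y}, Adj w x y → Adj w y x
  adj_ne : ∀ {x y}, Adj w x y → x ≠ y
  symm : ∀ x y, d x y = d y x
  self : ∀ x, d x x = 0
  pos : ∀ {x y}, x ≠ y → 0 < d x y
  nonneg : ∀ x y, 0 ≤ d x y
  tri : ∀ x y z, d x z ≤ d x y + d y z
  step : ∀ {u v}, u ≠ v → ∃ z, Adj w u z ∧ d u v = d u z + d z v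

theorem tri_of_adj {w d : V → V → ℝ} (hd : IsPathDistance w d) {x y : V} (hxy : Adj w x y)
    (z : V) : d x z ≤ d x y + d y z := by
  obtain ⟨-, -, -, hglb⟩ := hd
  have : d x z - d x y ≤ d y z := by
    refine (hglb y z).2 ?_
    rintro s ⟨n, c, h0, h1, hc, rfl⟩
    rw [sub_le_iff_le_add']
    refine (hglb x z).1 ⟨n + 1, Fin.cons x c, rfl, ?_, ?_, ?_⟩
    · rw [← Fin.succ_last, Fin.cons_succ, h1]
    · intro i
      refine Fin.cases ?_ (fun i => ?_) i
      · simpa [h0] using hxy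
      · rw [← Fin.succ_castSucc, Fin.cons_succ, Fin.cons_succ]
        exact hc i
    · rw [Fin.sum_univ_succ]
      congr 1
      simp [h0]
  linarith

theorem tri_of_path {w d : V → V → ℝ} (hd : IsPathDistance w d) (z : V) (n : ℕ) :
    ∀ c : Fin (n + 1) → V, (∀ i : Fin n, Adj w (c i.castSucc) (c i.succ)) →
      d (c 0) z ≤ ∑ i : Fin n, d (c i.castSucc) (c i.succ) + d (c (Fin.last n)) z := by
  induction n with
  | zero => intro c _; simp
  | succ n ih =>
    intro c hc
    have h1 := ih (fun i => c i.succ) (fun i => by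
      have := hc i.succ
      rwa [← Fin.succ_castSucc] at this)
    have h2 := tri_of_adj hd (hc 0) z
    rw [Fin.sum_univ_succ]
    simp only [Fin.castSucc_zero, Fin.succ_zero_eq_one, Fin.succ_last, Fin.succ_castSucc] at *
    linarith

theorem distFacts [Finite V] {w d : V → V → ℝ} {μ : V → ℝ} (hG : IsWeightedGraph w μ)
    (hd : IsPathDistance w d) : DistFacts w d := by
  have tri : ∀ x y z, d x z ≤ d x y + d y z := by
    intro x y z
    have : d x z - d y z ≤ d x y := by
      refine (hd.2.2.2 x y).2 ?_
      rintro s ⟨n, c, rfl, rfl, hc, rfl⟩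
      have := tri_of_path hd z n c hc
      linarith
    linarith
  have adj_ne : ∀ {x y}, Adj w x y → x ≠ y := by
    rintro x _ h rfl
    have := hG.loopless x
    unfold Adj at h
    linarith
  refine ⟨fun {x y} h => by unfold Adj at *; rwa [hG.symm y x], adj_ne, hd.1,
    fun x => (hd.2.1 x x).2 rfl, fun {x y} h => lt_of_le_of_ne (hd.2.2.1 x y)
      (fun h' => h ((hd.2.1 x y).1 h'.symm)), hd.2.2.1, tri, ?_⟩
  intro u v huv
  -- The infimum over paths is realised on the first step, because `u` has finitely many neighbours.
  by_contra! hcon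
  have hlt : ∀ z, Adj w u z → d u v < d u z + d z v := fun z hz =>
    lt_of_le_of_ne (tri u z v) (hcon z hz)
  obtain ⟨e, he, hev⟩ : ∃ e, d u v < e ∧ ∀ z, Adj w u z → e ≤ d u z + d z v := by
    have : Fintype V := Fintype.ofFinite V
    classical
    by_cases hne : (univ.filter fun z => Adj w u z).Nonempty
    · obtain ⟨z, hz, hmin⟩ := exists_min_image _ (fun z => d u z + d z v) hne
      exact ⟨_, hlt z (by simpa using hz), fun z' hz' => hmin z' (by simpa using hz')⟩
    · refine ⟨d u v + 1, by linarith, fun z hz => ?_⟩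
      exact absurd ⟨z, by simpa using hz⟩ hne
  refine absurd ((hd.2.2.2 u v).2 (?_ : e ∈ lowerBounds _)) (not_le.2 he)
  rintro s ⟨n, c, rfl, rfl, hc, rfl⟩
  cases n with
  | zero => exact absurd rfl huv
  | succ n =>
    have h1 := tri_of_path hd (c (Fin.last (n + 1))) n (fun i => c i.succ) (fun i => by
      have := hc i.succ
      rwa [← Fin.succ_castSucc] at this)
    have h2 := hev _ (hc 0)
    rw [Fin.sum_univ_succ]
    simp only [Fin.castSucc_zero, Fin.succ_zero_eq_one, Fin.succ_last, Fin.succ_castSucc,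
      (hd.2.1 _ _).2 rfl] at *
    linarith

theorem forall_of_connected {w : V → V → ℝ} (hconn : GraphConnected w) {S : V → Prop}
    (hS : ∀ a b, Adj w a b → S a → S b) {a : V} (ha : S a) (b : V) : S b := by
  obtain ⟨n, c, rfl, rfl, hc⟩ := hconn a b
  have : ∀ i : Fin (n + 1), S (c i) := by
    intro i
    induction i using Fin.induction with
    | zero => exact ha
    | succ i ih => exact hS _ _ (hc i) ih
  exact this _

end Distance

section Geodesic

variable {V : Type*} {w d : V → V → ℝ}

/-- `p 0, …, p L` is a geodesic from `u` to `v`: each edge makes full progress towards `v`.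
The values `p i` with `i > L` are irrelevant. -/
structure Geo (w d : V → V → ℝ) (p : ℕ → V) (L : ℕ) (u v : V) : Prop where
  zero : p 0 = u
  last : p L = v
  adj : ∀ i < L, Adj w (p i) (p (i + 1))
  prog : ∀ i < L, d (p i) v = d (p i) (p (i + 1)) + d (p (i + 1)) v

theorem Geo.tail {p : ℕ → V} {L : ℕ} {u v : V} (h : Geo w d p (L + 1) u v) :
    Geo w d (fun i => p (i + 1)) L (p 1) v :=
  ⟨rfl, h.last, fun i hi => h.adj (i + 1) (by omega), fun i hi => h.prog (i + 1) (by omega)⟩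

theorem Geo.sum_add {p : ℕ → V} {L : ℕ} {u v : V} (h : Geo w d p L u v) {i : ℕ} (hi : i ≤ L) :
    ∑ k ∈ range i, d (p k) (p (k + 1)) + d (p i) v = d u v := by
  induction i with
  | zero => simp [h.zero]
  | succ i ih =>
    rw [sum_range_succ, ← ih (by omega), h.prog i (by omega)]
    ring

theorem Geo.sum {p : ℕ → V} {L : ℕ} {u v : V} (hF : DistFacts w d) (h : Geo w d p L u v) :
    ∑ k ∈ range L, d (p k) (p (k + 1)) = d u v := by
  have := h.sum_add le_rfl
  rwa [h.last, hF.self, add_zero] at this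

theorem Geo.between {p : ℕ → V} {L : ℕ} {u v : V} (hF : DistFacts w d) (h : Geo w d p L u v)
    {i : ℕ} (hi : i ≤ L) : d u v = d u (p i) + d (p i) v := by
  refine le_antisymm (hF.tri _ _ _) ?_
  rw [← h.sum_add hi]
  have : d u (p i) ≤ ∑ k ∈ range i, d (p k) (p (k + 1)) := by
    clear hi
    induction i with
    | zero => simp [h.zero, hF.self]
    | succ i ih =>
      rw [sum_range_succ]
      linarith [hF.tri u (p i) (p (i + 1))]
  linarith

theorem Geo.lt {p : ℕ → V} {L : ℕ} {u v : V} (hF : DistFacts w d) (h : Geo w d p L u v)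
    {i j : ℕ} (hij : i < j) (hj : j ≤ L) : d (p j) v < d (p i) v := by
  induction j, hij using Nat.le_induction with
  | base =>
    rw [h.prog i (by omega)]
    linarith [hF.pos (hF.adj_ne (h.adj i (by omega)))]
  | succ j hij ih =>
    refine lt_trans ?_ (ih (by omega))
    rw [h.prog j (by omega)]
    linarith [hF.pos (hF.adj_ne (h.adj j (by omega)))]

theorem Geo.inj {p : ℕ → V} {L : ℕ} {u v : V} (hF : DistFacts w d) (h : Geo w d p L u v)
    {i j : ℕ} (hi : i ≤ L) (hj : j ≤ L) (hij : p i = p j) : i = j := by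
  rcases lt_trichotomy i j with hl | hl | hl
  · have := h.lt hF hl hj
    rw [hij] at this
    exact absurd this (lt_irrefl _)
  · exact hl
  · have := h.lt hF hl hi
    rw [hij] at this
    exact absurd this (lt_irrefl _)

theorem exists_geo [Finite V] (hF : DistFacts w d) (v u : V) :
    ∃ p L, Geo w d p L u v := by
  have wf : WellFounded (fun a b : V => d a v < d b v) :=
    haveI : IsTrans V (fun a b : V => d a v < d b v) := ⟨fun _ _ _ => lt_trans⟩
    haveI : Std.Irrefl (fun a b : V => d a v < d b v) := ⟨fun _ => lt_irrefl _⟩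
    Finite.wellFounded_of_trans_of_irrefl _
  induction u using wf.induction with
  | _ u ih =>
    by_cases huv : u = v
    · exact ⟨fun _ => u, 0, rfl, huv, by simp, by simp⟩
    · obtain ⟨z, hz, hs⟩ := hF.step huv
      obtain ⟨p, L, hp⟩ := ih z (by linarith [hF.pos (hF.adj_ne hz)])
      refine ⟨fun i => Nat.casesOn i u p, L + 1, rfl, hp.last, ?_, ?_⟩
      · intro i hi
        cases i with
        | zero => simpa [hp.zero] using hz
        | succ i => exact hp.adj i (by omega)
      · intro i hi
        cases i with
        | zero => simpa [hp.zero] using hs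
        | succ i => exact hp.prog i (by omega)

end Geodesic

end Paper

/-! ### Closed forms along short paths and maximal chains -/

namespace Paper

section Forms

variable {V : Type*} {w d α : V → V → ℝ}

/-- The 1-form `α` is closed on the cycles of `X₂` and satisfies `|α| ≤ d`; these are the
properties of a normalised element of `H1set` that do not involve the divergence. -/
structure IsForm (w d α : V → V → ℝ) : Prop where
  anti : ∀ x y, α x y = -α y x
  supp : ∀ x y, ¬Adj w x y → α x y = 0
  bound : ∀ x y, α x y ≤ d x y
  closed : ∀ (n : ℕ) (c : ZMod (n + 3) → V), IsCycle w c → InX2 w d c →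
    ∑ i, α (c i) (c (i + 1)) = 0

theorem IsForm.self (hα : IsForm w d α) (x : V) : α x x = 0 := by
  have := hα.anti x x
  linarith

theorem sum_zmod (n : ℕ) (F : ℕ → ℝ) : ∑ i : ZMod (n + 3), F i.val = ∑ i ∈ range (n + 3), F i :=
  Fin.sum_univ_eq_sum_range F (n + 3)

theorem IsForm.triangle (hF : DistFacts w d) (hα : IsForm w d α) {x y z : V} (hxy : Adj w x y)
    (hyz : Adj w y z) (hzx : Adj w z x) : α x y + α y z + α z x = 0 := by
  have h := hα.closed 0 (![x, y, z] : Fin 3 → V) ⟨?_, ?_⟩ (Or.inl rfl)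
  · rw [← h]
    exact (Fin.sum_univ_three (fun i : Fin 3 =>
      α ((![x, y, z] : Fin 3 → V) i) ((![x, y, z] : Fin 3 → V) (i + 1)))).symm
  · have h1 := hF.adj_ne hxy
    have h2 := hF.adj_ne hyz
    have h3 := hF.adj_ne hzx
    intro i j hij
    change Fin 3 at i j
    fin_cases i <;> fin_cases j <;> first | rfl | simp_all
  · intro i
    change Fin 3 at i
    fin_cases i
    · exact hxy
    · exact hyz
    · exact hzx

/-- Closedness of `α` on a cycle `x₀ ∼ x₁ ∼ x₂ ∼ x₃ = p 0 ∼ … ∼ p L = x₀` of `X₂`, with the cyclic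
index set unfolded. -/
theorem IsForm.cycle (hF : DistFacts w d) (hα : IsForm w d α) {x0 x1 x2 x3 : V} {p : ℕ → V}
    {L : ℕ} (hp : Geo w d p L x3 x0) (hL : 1 ≤ L) (h01 : Adj w x0 x1) (h12 : Adj w x1 x2)
    (h23 : Adj w x2 x3) (hp1 : ∀ i ≤ L, p i ≠ x1) (hp2 : ∀ i ≤ L, p i ≠ x2)
    (hlt : d x0 x3 < d x0 x1 + d x1 x2 + d x2 x3) :
    α x0 x1 + α x1 x2 + α x2 x3 + ∑ i ∈ range L, α (p i) (p (i + 1)) = 0 := by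
  obtain ⟨v, hv⟩ : ∃ v : ℕ → V, v = fun i => match i with
    | 0 => x0
    | 1 => x1
    | 2 => x2
    | j + 3 => p j := ⟨_, rfl⟩
  have v0 : v 0 = x0 := by rw [hv]
  have v1 : v 1 = x1 := by rw [hv]
  have v2 : v 2 = x2 := by rw [hv]
  have v3 : ∀ j, v (j + 3) = p j := by intro j; rw [hv]
  have hsucc : ∀ i : ZMod (L + 3), v (i + 1).val = v (i.val + 1) := by
    intro i
    have hi : i.val < L + 3 := ZMod.val_lt i
    have h1 : (1 : ZMod (L + 3)).val = 1 := ZMod.val_one'' (by omega)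
    rw [ZMod.val_add, h1]
    by_cases h : i.val + 1 = L + 3
    · rw [h, Nat.mod_self, v0, v3, hp.last]
    · rw [Nat.mod_eq_of_lt (by omega)]
  have hval : ∀ k : ℕ, k < L + 3 → ((k : ℕ) : ZMod (L + 3)).val = k := fun k hk =>
    ZMod.val_cast_of_lt hk
  have split : ∀ β : V → V → ℝ, ∑ i ∈ range (L + 3), β (v i) (v (i + 1)) =
      β x0 x1 + β x1 x2 + β x2 x3 + ∑ i ∈ range L, β (p i) (p (i + 1)) := by
    intro β
    rw [sum_range_succ', sum_range_succ', sum_range_succ']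
    have e : ∀ i, v (i + 1 + 1 + 1) = p i := v3
    simp only [e, zero_add, v0, v1, v2, Nat.reduceAdd]
    rw [hp.zero]
    ring
  have key := hα.closed L (fun i => v i.val) ⟨?_, ?_⟩ (Or.inr ⟨?_, ?_⟩)
  · simp only [hsucc] at key
    rw [sum_zmod L (fun i => α (v i) (v (i + 1))), split] at key
    exact key
  · -- injectivity of the cycle
    have hx01 := hF.adj_ne h01
    have hx12 := hF.adj_ne h12
    have hx02 : x0 ≠ x2 := by
      have := hp2 L le_rfl
      rwa [hp.last] at this
    have hp0 : ∀ i < L, p i ≠ x0 := by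
      intro i hi h
      have := hp.inj hF hi.le le_rfl (h.trans hp.last.symm)
      omega
    have hinj : ∀ a b : ℕ, a < L + 3 → b < L + 3 → v a = v b → a = b := by
      intro a b hi hj hij
      match a, b, hi, hj, hij with
      | 0, 0, hi, hj, hij => rfl
      | 0, 1, hi, hj, hij => rw [v0, v1] at hij; exact absurd hij hx01
      | 0, 2, hi, hj, hij => rw [v0, v2] at hij; exact absurd hij hx02
      | 0, b + 3, hi, hj, hij => rw [v0, v3] at hij; exact absurd hij.symm (hp0 b (by omega))
      | 1, 0, hi, hj, hij => rw [v0, v1] at hij; exact absurd hij.symm hx01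
      | 1, 1, hi, hj, hij => rfl
      | 1, 2, hi, hj, hij => rw [v1, v2] at hij; exact absurd hij hx12
      | 1, b + 3, hi, hj, hij => rw [v1, v3] at hij; exact absurd hij.symm (hp1 b (by omega))
      | 2, 0, hi, hj, hij => rw [v0, v2] at hij; exact absurd hij.symm hx02
      | 2, 1, hi, hj, hij => rw [v1, v2] at hij; exact absurd hij.symm hx12
      | 2, 2, hi, hj, hij => rfl
      | 2, b + 3, hi, hj, hij => rw [v2, v3] at hij; exact absurd hij.symm (hp2 b (by omega))
      | a + 3, 0, hi, hj, hij => rw [v0, v3] at hij; exact absurd hij (hp0 a (by omega))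
      | a + 3, 1, hi, hj, hij => rw [v1, v3] at hij; exact absurd hij (hp1 a (by omega))
      | a + 3, 2, hi, hj, hij => rw [v2, v3] at hij; exact absurd hij (hp2 a (by omega))
      | a + 3, b + 3, hi, hj, hij =>
        rw [v3, v3] at hij
        have := hp.inj hF (by omega) (by omega) hij
        omega
    intro i j hij
    exact ZMod.val_injective _ (hinj _ _ (ZMod.val_lt i) (ZMod.val_lt j) hij)
  · intro i
    have hi : i.val < L + 3 := ZMod.val_lt i
    simp only [hsucc]
    generalize i.val = a at *
    match a with
    | 0 => simpa [v0, v1] using h01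
    | 1 => simpa [v1, v2] using h12
    | 2 =>
      have := v3 0
      rw [hp.zero] at this
      simpa [v2, this] using h23
    | a + 3 =>
      have : v (a + 3 + 1) = p (a + 1) := v3 (a + 1)
      rw [v3, this]
      exact hp.adj a (by omega)
  · have e0 : ((0 : ZMod (L + 3))).val = 0 := ZMod.val_zero
    have e1 : ((1 : ZMod (L + 3))).val = 1 := by simpa using hval 1 (by omega)
    have e2 : ((2 : ZMod (L + 3))).val = 2 := by simpa using hval 2 (by omega)
    have e3 : ((3 : ZMod (L + 3))).val = 3 := by simpa using hval 3 (by omega)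
    have := v3 0
    simp only [e0, e1, e2, e3, v0, v1, v2]
    simp only [zero_add] at this
    rw [this, hp.zero]
    exact hlt
  · have e0 : ((0 : ZMod (L + 3))).val = 0 := ZMod.val_zero
    have e3 : ((3 : ZMod (L + 3))).val = 3 := by simpa using hval 3 (by omega)
    have hcond : ∀ i : ZMod (L + 3), (i ≠ 0 ∧ i ≠ 1 ∧ i ≠ 2) ↔ 3 ≤ i.val := by
      intro i
      have h0 : i = 0 ↔ i.val = 0 := (ZMod.val_eq_zero i).symm
      have h1 : i = 1 ↔ i.val = 1 := by
        rw [← (ZMod.val_injective (L + 3)).eq_iff]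
        rw [show ((1 : ZMod (L + 3))).val = 1 by simpa using hval 1 (by omega)]
      have h2 : i = 2 ↔ i.val = 2 := by
        rw [← (ZMod.val_injective (L + 3)).eq_iff]
        rw [show ((2 : ZMod (L + 3))).val = 2 by simpa using hval 2 (by omega)]
      rw [Ne, Ne, Ne, h0, h1, h2]
      omega
    rw [sum_filter]
    simp only [hcond, hsucc]
    rw [sum_zmod L (fun i => if 3 ≤ i then d (v i) (v (i + 1)) else 0), sum_range_succ',
      sum_range_succ', sum_range_succ']
    have e : ∀ i, v (i + 1 + 1 + 1) = p i := v3
    simp only [e, e0, e3, v0, hp.zero]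
    simp only [add_assoc, Nat.reduceAdd, Nat.le_add_left, if_true]
    simp [hp.sum hF]

/-- `MChain w d α a b s`: there is a chain of maximal edges, i.e. edges on which `α = d`, from `a`
to `b`, of total length `s`. -/
inductive MChain (w d α : V → V → ℝ) : V → V → ℝ → Prop
  | nil (a : V) : MChain w d α a a 0
  | cons {a z b : V} {s : ℝ} : Adj w a z → α a z = d a z → MChain w d α z b s →
      MChain w d α a b (d a z + s)

theorem MChain.append {a b c : V} {s t : ℝ} (h : MChain w d α a b s) (h' : MChain w d α b c t) :
    MChain w d α a c (s + t) := by
  induction h with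
  | nil => simpa using h'
  | cons h1 h2 _ ih =>
    rw [add_assoc]
    exact .cons h1 h2 (ih h')

/-- `s`, thought of as the integral of `α` along some path from `a` to `b`, is at most `d a b`, and
in case of equality `a` and `b` are joined by a chain of maximal edges which is a geodesic. -/
def Lip (w d α : V → V → ℝ) (a b : V) (s : ℝ) : Prop :=
  s ≤ d a b ∧ (s = d a b → MChain w d α a b (d a b))

theorem Lip.refl (hF : DistFacts w d) (a : V) : Lip w d α a a 0 := by
  refine ⟨hF.nonneg a a, fun _ => ?_⟩
  rw [hF.self]
  exact .nil a

theorem IsForm.lip_edge (hα : IsForm w d α) {a b : V} (h : Adj w a b) :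
    Lip w d α a b (α a b) := by
  refine ⟨hα.bound a b, fun h' => ?_⟩
  simpa using MChain.cons h h' (.nil b)

theorem Lip.trans {a z b : V} {s t : ℝ} (h : Lip w d α a z s) (h' : Lip w d α z b t)
    (hz : d a b = d a z + d z b) : Lip w d α a b (s + t) := by
  refine ⟨by linarith [h.1, h'.1], fun he => ?_⟩
  rw [hz]
  exact (h.2 (by linarith [h.1, h'.1])).append (h'.2 (by linarith [h.1, h'.1]))

/-- The integral of `α` along a geodesic traversed backwards. -/
theorem IsForm.lip_geo (hF : DistFacts w d) (hα : IsForm w d α) {p : ℕ → V} {L : ℕ} {u v : V}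
    (h : Geo w d p L u v) : Lip w d α v u (-∑ i ∈ range L, α (p i) (p (i + 1))) := by
  induction L generalizing p u with
  | zero =>
    have : u = v := h.zero.symm.trans h.last
    subst this
    simpa using Lip.refl hF u
  | succ L ih =>
    have h1 := ih h.tail
    have h2 := hα.lip_edge (hF.adj_symm (h.adj 0 (by omega)))
    have h3 := h.prog 0 (by omega)
    simp only [zero_add, h.zero] at h2 h3
    rw [hF.symm u v, hF.symm u, hF.symm _ v] at h3
    have h4 := h1.trans h2 (by linarith)
    rw [sum_range_succ', zero_add, h.zero]
    rw [hα.anti] at h4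
    convert h4 using 1
    ring

/-- Two-step paths. If `a ∼ c ∼ b` is not a geodesic then it bounds, together with any geodesic from
`b` to `a`, a cycle of `X₂`. -/
theorem IsForm.lip_two [Finite V] (hF : DistFacts w d) (hα : IsForm w d α) {a c b : V}
    (hac : Adj w a c) (hcb : Adj w c b) : Lip w d α a b (α a c + α c b) := by
  by_cases hd : d a b = d a c + d c b
  · exact (hα.lip_edge hac).trans (hα.lip_edge hcb) hd
  have hlt : d a b < d a c + d c b := lt_of_le_of_ne (hF.tri _ _ _) hd
  obtain ⟨p, L, hp⟩ := exists_geo hF a b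
  have hc : ∀ i ≤ L, p i ≠ c := by
    rintro i hi rfl
    apply hd
    rw [hF.symm a b, hp.between hF hi, hF.symm b, hF.symm a]
    ring
  match L with
  | 0 =>
    have : b = a := hp.zero.symm.trans hp.last
    subst this
    rw [hα.anti b c, neg_add_cancel]
    exact Lip.refl hF b
  | 1 =>
    have hba : Adj w b a := by
      have := hp.adj 0 (by omega)
      rwa [hp.zero, hp.last] at this
    have h := hα.triangle hF hac hcb hba
    have h' := hα.lip_edge (hF.adj_symm hba)
    rw [hα.anti] at h'
    convert h' using 1
    linarith
  | L + 2 =>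
    have h0 := hp.adj 0 (by omega)
    rw [hp.zero, zero_add] at h0
    have hb := hp.between hF (i := 1) (by omega)
    have h1 := hα.cycle hF hp.tail (by omega) hac hcb h0 (fun i hi => hc _ (by omega)) ?_ ?_
    · have h2 := hα.lip_geo hF hp
      rw [sum_range_succ', zero_add, hp.zero] at h2
      convert h2 using 1
      linarith
    · intro i hi h
      have := hp.inj hF (i := i + 1) (j := 0) (by omega) (by omega) (h.trans hp.zero.symm)
      omega
    · have h3 := hF.pos (hF.adj_ne h0)
      rw [hF.symm a b] at hlt
      rw [hF.symm a]
      linarith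

/-- Three-step paths; the analogue of `IsForm.lip_two`. -/
theorem IsForm.lip_three [Finite V] (hF : DistFacts w d) (hα : IsForm w d α) {a q r b : V}
    (haq : Adj w a q) (hqr : Adj w q r) (hrb : Adj w r b) :
    Lip w d α a b (α a q + α q r + α r b) := by
  by_cases har : a = r
  · subst har
    have := hα.lip_edge hrb
    rw [hα.anti a q]
    simpa using this
  by_cases hqb : q = b
  · subst hqb
    have := hα.lip_edge haq
    rw [hα.anti r q]
    simpa using this
  by_cases hab : a = b
  · subst hab
    rw [hα.triangle hF haq hqr hrb]
    exact Lip.refl hF a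
  by_cases h1 : d a b = d a q + d q b
  · rw [add_assoc]
    exact (hα.lip_edge haq).trans (hα.lip_two hF hqr hrb) h1
  by_cases h2 : d a b = d a r + d r b
  · exact (hα.lip_two hF haq hqr).trans (hα.lip_edge hrb) h2
  obtain ⟨p, L, hp⟩ := exists_geo hF a b
  have hq : ∀ i ≤ L, p i ≠ q := by
    rintro i hi rfl
    apply h1
    rw [hF.symm a b, hp.between hF hi, hF.symm b, hF.symm a]
    ring
  have hr : ∀ i ≤ L, p i ≠ r := by
    rintro i hi rfl
    apply h2
    rw [hF.symm a b, hp.between hF hi, hF.symm b, hF.symm a]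
    ring
  have hL : 1 ≤ L := by
    by_contra! h0
    have : L = 0 := by omega
    subst this
    exact hab (hp.last.symm.trans hp.zero)
  have hlt : d a b < d a q + d q b := lt_of_le_of_ne (hF.tri _ _ _) h1
  have h3 := hα.cycle hF hp hL haq hqr hrb hq hr (by linarith [hF.tri q r b])
  have h4 := hα.lip_geo hF hp
  convert h4 using 1
  linarith

end Forms

end Paper

/-! ### Local primitives and the curvature inequality -/

namespace Paper

section Perturbation

open Filter Topology

variable {V : Type*} {w d α : V → V → ℝ} {μ : V → ℝ}

/-- The closed combinatorial unit ball. -/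
def Nb (w : V → V → ℝ) (x a : V) : Prop := a = x ∨ Adj w x a

open Classical in
/-- The primitive of `α` on the union of the unit balls around `x` and `y`, for an edge `x ∼ y`,
normalised to vanish at `x`. -/
noncomputable def pot (w α : V → V → ℝ) (x y u : V) : ℝ :=
  if Nb w x u then α x u else α x y + α y u

theorem pot_left {x y u : V} (h : Nb w x u) : pot w α x y u = α x u := if_pos h

theorem pot_right (hF : DistFacts w d) (hα : IsForm w d α) {x y u : V} (hxy : Adj w x y)
    (h : Nb w y u) : pot w α x y u = α x y + α y u := by
  by_cases hx : Nb w x u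
  · rw [pot_left hx]
    rcases hx with rfl | hx
    · rw [hα.anti u y, hα.self, neg_add_cancel]
    · rcases h with rfl | h
      · rw [hα.self, add_zero]
      · have := hα.triangle hF hxy h (hF.adj_symm hx)
        rw [hα.anti u x] at this
        linarith
  · exact if_neg hx

theorem lip_star [Finite V] (hF : DistFacts w d) (hα : IsForm w d α) {x a b : V} (ha : Nb w x a)
    (hb : Nb w x b) : Lip w d α a b (α x b - α x a) := by
  rcases ha with rfl | ha
  · rw [hα.self, sub_zero]
    rcases hb with rfl | hb
    · rw [hα.self]
      exact Lip.refl hF _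
    · exact hα.lip_edge hb
  · rw [sub_eq_neg_add, ← hα.anti]
    rcases hb with rfl | hb
    · rw [hα.self, add_zero]
      exact hα.lip_edge (hF.adj_symm ha)
    · exact hα.lip_two hF (hF.adj_symm ha) hb

theorem lip_double_star [Finite V] (hF : DistFacts w d) (hα : IsForm w d α) {x y a b : V}
    (hxy : Adj w x y) (ha : Nb w x a) (hb : Nb w y b) :
    Lip w d α a b (α x y + α y b - α x a) := by
  by_cases hax : Nb w y a
  · have h := lip_star hF hα hax hb
    have e : pot w α x y a = α x a := pot_left ha
    rw [pot_right hF hα hxy hax] at e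
    convert h using 1
    linarith
  · by_cases hbx : Nb w x b
    · have h := lip_star hF hα ha hbx
      have e : pot w α x y b = α x b := pot_left hbx
      rw [pot_right hF hα hxy hb] at e
      convert h using 1
      linarith
    · have hxa : Adj w x a := by
        rcases ha with rfl | ha
        · exact absurd (Or.inr (hF.adj_symm hxy)) hax
        · exact ha
      have hyb : Adj w y b := by
        rcases hb with rfl | hb
        · exact absurd (Or.inr hxy) hbx
        · exact hb
      convert hα.lip_three hF (hF.adj_symm hxa) hxy hyb using 1
      rw [hα.anti a x]
      ring

/-- The local primitive of a normalised form is 1-Lipschitz, and maximal increments come from chains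
of maximal edges. -/
theorem pot_lip [Finite V] (hF : DistFacts w d) (hα : IsForm w d α) {x y a b : V}
    (hxy : Adj w x y) (ha : Nb w x a ∨ Nb w y a) (hb : Nb w x b ∨ Nb w y b) :
    Lip w d α a b (pot w α x y b - pot w α x y a) := by
  rcases ha with ha | ha <;> rcases hb with hb | hb
  · rw [pot_left ha, pot_left hb]
    exact lip_star hF hα ha hb
  · rw [pot_left ha, pot_right hF hα hxy hb]
    exact lip_double_star hF hα hxy ha hb
  · rw [pot_right hF hα hxy ha, pot_left hb]
    convert lip_double_star hF hα (hF.adj_symm hxy) ha hb using 1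
    rw [hα.anti y x]
    ring
  · rw [pot_right hF hα hxy ha, pot_right hF hα hxy hb]
    convert lip_star hF hα ha hb using 1
    ring

variable [Fintype V]

/-- Non-negative curvature in usable form: the infimum defining the curvature is over a set bounded
below, so each admissible function is a legitimate test function. -/
theorem lap_le_of_curv (hF : DistFacts w d) (hG : IsWeightedGraph w μ)
    (hcurv : NonnegCurv w μ d) {x y : V} (hxy : Adj w x y) (f : V → ℝ)
    (hf : ∀ a b, Adj w a b → f b - f a ≤ d a b) (hfxy : f y - f x = d x y) :
    lap w μ f y ≤ lap w μ f x := by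
  have hdpos := hF.pos (hF.adj_ne hxy)
  have bdd : ∀ g : V → ℝ, BddAbove { r : ℝ | ∃ x y, Adj w x y ∧ r = |grad d g x y| } := by
    intro g
    refine ((Set.finite_range (fun q : V × V => |grad d g q.1 q.2|)).subset ?_).bddAbove
    rintro r ⟨a, b, -, rfl⟩
    exact ⟨(a, b), rfl⟩
  have hbelow : BddBelow { r : ℝ | ∃ g : V → ℝ, grad d g y x = 1 ∧ gradNorm w d g = 1 ∧
      r = grad d (lap w μ g) x y } := by
    refine ⟨(-(∑ u, w x u / μ x * d x u) - ∑ u, w y u / μ y * d y u) / d x y, ?_⟩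
    rintro r ⟨g, -, hg, rfl⟩
    have hlip : ∀ a b, Adj w a b → |g b - g a| ≤ d a b := by
      intro a b hab
      have : |grad d g a b| ≤ 1 := hg ▸ le_csSup (bdd g) ⟨a, b, hab, rfl⟩
      rwa [grad, abs_div, abs_of_pos (hF.pos (hF.adj_ne hab)),
        div_le_one (hF.pos (hF.adj_ne hab)), abs_sub_comm] at this
    have hterm : ∀ a u, |w a u / μ a * (g u - g a)| ≤ w a u / μ a * d a u := by
      intro a u
      have h0 : 0 ≤ w a u / μ a := div_nonneg (hG.nonneg a u) (hG.mu_pos a).le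
      rw [abs_mul, abs_of_nonneg h0]
      rcases (hG.nonneg a u).eq_or_lt with h | h
      · rw [← h]; simp
      · exact mul_le_mul_of_nonneg_left (hlip a u h) h0
    have hlap : ∀ a, |lap w μ g a| ≤ ∑ u, w a u / μ a * d a u := fun a =>
      (abs_sum_le_sum_abs _ _).trans (sum_le_sum fun u _ => hterm a u)
    rw [grad]
    refine div_le_div_of_nonneg_right ?_ hdpos.le
    linarith [(abs_le.1 (hlap x)).1, (abs_le.1 (hlap y)).2]
  have habs : ∀ a b, Adj w a b → |grad d f a b| ≤ 1 := by
    intro a b hab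
    have h1 := hf a b hab
    have h2 := hf b a (hF.adj_symm hab)
    rw [hF.symm b a] at h2
    rw [grad, abs_div, abs_of_pos (hF.pos (hF.adj_ne hab)),
        div_le_one (hF.pos (hF.adj_ne hab)), abs_le]
    constructor <;> linarith
  have hgrad : grad d f y x = 1 := by
    rw [grad, hfxy, hF.symm y x, div_self hdpos.ne']
  have hnorm : gradNorm w d f = 1 := by
    refine le_antisymm (csSup_le ⟨_, x, y, hxy, rfl⟩ ?_) ?_
    · rintro r ⟨a, b, hab, rfl⟩
      exact habs a b hab
    · have : (1 : ℝ) = |grad d f y x| := by rw [hgrad, abs_one]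
      exact le_csSup (bdd f) ⟨y, x, hF.adj_symm hxy, this⟩
  have hk : 0 ≤ grad d (lap w μ f) x y :=
    (hcurv x y hxy).trans (csInf_le hbelow ⟨f, hgrad, hnorm, rfl⟩)
  rw [grad, le_div_iff₀ hdpos] at hk
  linarith

/-- First-order perturbation of a harmonic form. Let `x ∼ y` be a maximal edge of `α` and let `g` be
non-increasing along maximal increments of the local primitive of `α`. Then a small multiple of `g`
may be added to that primitive without destroying the Lipschitz bound, and testing the curvature of
`x ∼ y` with the sum compares the Laplacians of `g`. -/
theorem lap_le_of_perturb (hF : DistFacts w d) (hG : IsWeightedGraph w μ)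
    (hcurv : NonnegCurv w μ d) (hα : IsForm w d α) (hdiv : ∀ x, ∑ y, w x y / μ x * α x y = 0)
    {x y : V} (hxy : Adj w x y) (hmax : α x y = d x y) (g : V → ℝ)
    (hg : ∀ a b, (Nb w x a ∨ Nb w y a) → (Nb w x b ∨ Nb w y b) →
      pot w α x y b - pot w α x y a = d a b → g b ≤ g a)
    (hgxy : g x = g y) : lap w μ g y ≤ lap w μ g x := by
  classical
  set f := pot w α x y with hf
  have hx : Nb w x x := Or.inl rfl
  have hy : Nb w y y := Or.inl rfl
  obtain ⟨ε, hε, hε0⟩ : ∃ ε : ℝ, (∀ a b, (Nb w x a ∨ Nb w y a) → (Nb w x b ∨ Nb w y b) →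
      (f b - f a) + ε * (g b - g a) ≤ d a b) ∧ 0 < ε := by
    have hev : ∀ᶠ ε : ℝ in 𝓝[>] 0, ∀ a b, (Nb w x a ∨ Nb w y a) → (Nb w x b ∨ Nb w y b) →
        (f b - f a) + ε * (g b - g a) ≤ d a b := by
      refine eventually_all.2 fun a => eventually_all.2 fun b => ?_
      by_cases ha : Nb w x a ∨ Nb w y a
      swap
      · exact Eventually.of_forall fun ε h => absurd h ha
      by_cases hb : Nb w x b ∨ Nb w y b
      swap
      · exact Eventually.of_forall fun ε _ h => absurd h hb
      have hle : f b - f a ≤ d a b := (pot_lip hF hα hxy ha hb).1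
      rcases hle.eq_or_lt with he | hlt
      · filter_upwards [self_mem_nhdsWithin] with ε hε _ _
        have := mul_nonneg (le_of_lt hε) (sub_nonneg.2 (hg a b ha hb he))
        linarith
      · have hc : Tendsto (fun ε : ℝ => (f b - f a) + ε * (g b - g a)) (𝓝[>] 0)
            (𝓝 ((f b - f a) + 0 * (g b - g a))) := by
          apply Tendsto.mono_left _ nhdsWithin_le_nhds
          exact Continuous.tendsto (by fun_prop) 0
        rw [zero_mul, add_zero] at hc
        filter_upwards [hc.eventually_lt_const hlt] with ε hε _ _ using hε.le
    exact (hev.and self_mem_nhdsWithin).exists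
  -- The McShane extension of the perturbed primitive to the whole graph.
  let N : Finset V := univ.filter fun a => Nb w x a ∨ Nb w y a
  have hN : N.Nonempty := ⟨x, by simp [N, hx]⟩
  let h : V → ℝ := fun z => N.inf' hN fun a => f a + ε * g a + d a z
  have hext : ∀ z, (Nb w x z ∨ Nb w y z) → h z = f z + ε * g z := by
    intro z hz
    refine le_antisymm ?_ ?_
    · have := inf'_le (fun a => f a + ε * g a + d a z) (show z ∈ N by simp [N, hz])
      rwa [hF.self, add_zero] at this
    · refine le_inf' _ _ fun a ha => ?_
      have := hε a z (by simpa [N] using ha) hz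
      linarith
  have hlip : ∀ a b, h b - h a ≤ d a b := by
    intro a b
    obtain ⟨c, hc, he⟩ := exists_mem_eq_inf' hN (fun c => f c + ε * g c + d c a)
    have h1 : h a = f c + ε * g c + d c a := he
    have h2 : h b ≤ f c + ε * g c + d c b := inf'_le _ hc
    linarith [hF.tri c a b]
  have hfx : f x = 0 := by rw [hf, pot_left hx, hα.self]
  have hfy : f y = d x y := by rw [hf, pot_right hF hα hxy hy, hα.self, hmax, add_zero]
  have key := lap_le_of_curv hF hG hcurv hxy h (fun a b _ => hlip a b) (by
    rw [hext x (Or.inl hx), hext y (Or.inr hy), hfx, hfy, hgxy]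
    ring)
  have hlapx : lap w μ h x = ε * lap w μ g x := by
    have e : ∀ u, w x u / μ x * (h u - h x) =
        w x u / μ x * α x u + ε * (w x u / μ x * (g u - g x)) := by
      intro u
      by_cases hu : Adj w x u
      · rw [hext x (Or.inl hx), hext u (Or.inl (Or.inr hu)), hfx, hf, pot_left (Or.inr hu)]
        ring
      · rw [le_antisymm (not_lt.1 hu) (hG.nonneg x u)]
        ring
    rw [lap, lap, sum_congr rfl fun u _ => e u, sum_add_distrib, hdiv, mul_sum, zero_add]
  have hlapy : lap w μ h y = ε * lap w μ g y := by
    have e : ∀ u, w y u / μ y * (h u - h y) =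
        w y u / μ y * α y u + ε * (w y u / μ y * (g u - g y)) := by
      intro u
      by_cases hu : Adj w y u
      · rw [hext y (Or.inr hy), hext u (Or.inr (Or.inr hu)), hfy, hf,
          pot_right hF hα hxy (Or.inr hu), hmax]
        ring
      · rw [le_antisymm (not_lt.1 hu) (hG.nonneg y u)]
        ring
    rw [lap, lap, sum_congr rfl fun u _ => e u, sum_add_distrib, hdiv, mul_sum, zero_add]
  rw [hlapx, hlapy] at key
  exact le_of_mul_le_mul_left key hε0

end Perturbation

end Paper

/-! ### Maximal edges at every vertex -/

namespace Paper

section MaximalEdges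

variable {V : Type*} {w d α : V → V → ℝ} {μ : V → ℝ}

/-- The lengths of the chains of maximal edges that start at `a`. -/
def heights (w d α : V → V → ℝ) (a : V) : Set ℝ := {s | ∃ b, MChain w d α a b s}

/-- A vertex is live if arbitrarily long chains of maximal edges start at it. -/
def Live (w d α : V → V → ℝ) (a : V) : Prop := ¬BddAbove (heights w d α a)

/-- The length of the longest chain of maximal edges starting at `a`, if `a` is not live; for a live
vertex this is the junk value `0`. -/
noncomputable def height (w d α : V → V → ℝ) (a : V) : ℝ := sSup (heights w d α a)

theorem zero_mem_heights (a : V) : (0 : ℝ) ∈ heights w d α a := ⟨a, .nil a⟩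

theorem MChain.not_live {a b : V} {s : ℝ} (h : MChain w d α a b s) (ha : ¬Live w d α a) :
    ¬Live w d α b ∧ s + height w d α b ≤ height w d α a := by
  rw [Live, not_not] at *
  have hle : ∀ t ∈ heights w d α b, t ≤ height w d α a - s := by
    rintro t ⟨c, hc⟩
    have := le_csSup ha ⟨c, h.append hc⟩
    rw [height]
    linarith
  have hb : BddAbove (heights w d α b) := ⟨_, hle⟩
  refine ⟨hb, ?_⟩
  have : height w d α b ≤ _ := csSup_le ⟨0, zero_mem_heights b⟩ hle
  linarith

theorem height_nonneg {a : V} (ha : ¬Live w d α a) : 0 ≤ height w d α a := by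
  rw [Live, not_not] at ha
  exact le_csSup ha (zero_mem_heights a)

theorem exists_succ [Finite V] {a : V} (hd : ∀ x y, 0 ≤ d x y)
    (ha : ∀ z, Adj w a z → α a z = d a z → ¬Live w d α z) :
    ¬Live w d α a ∧ (height w d α a = 0 ∨
      ∃ z, Adj w a z ∧ α a z = d a z ∧ height w d α a = d a z + height w d α z) := by
  classical
  have := Fintype.ofFinite V
  by_cases hne : (univ.filter fun z => Adj w a z ∧ α a z = d a z).Nonempty
  · obtain ⟨z, hz, hmax⟩ := exists_max_image _ (fun z => d a z + height w d α z) hne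
    simp only [mem_filter, mem_univ, true_and] at hz hmax
    have hbd : ∀ s ∈ heights w d α a, s ≤ d a z + height w d α z := by
      rintro s ⟨b, hb⟩
      cases hb with
      | nil => exact add_nonneg (hd _ _) (height_nonneg (ha z hz.1 hz.2))
      | @cons _ z' _ s h1 h2 h3 =>
        refine le_trans ?_ (hmax z' ⟨h1, h2⟩)
        have h4 := ha z' h1 h2
        rw [Live, not_not] at h4
        have := le_csSup h4 ⟨b, h3⟩
        rw [height]
        linarith
    have hla : ¬Live w d α a := not_not.2 ⟨_, hbd⟩
    refine ⟨hla, Or.inr ⟨z, hz.1, hz.2, le_antisymm (csSup_le ⟨0, zero_mem_heights a⟩ hbd) ?_⟩⟩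
    have := ((MChain.cons hz.1 hz.2 (.nil z)).not_live hla).2
    rwa [add_zero] at this
  · have : heights w d α a = {0} := by
      refine Set.eq_singleton_iff_unique_mem.2 ⟨zero_mem_heights a, ?_⟩
      rintro s ⟨b, hb⟩
      cases hb with
      | nil => rfl
      | @cons _ z _ _ h1 h2 _ => exact absurd ⟨z, by simp [h1, h2]⟩ hne
    rw [Live, height, this]
    simp

variable [Fintype V]

/-- A function on a finite connected graph with non-negative Laplacian is constant. -/
theorem const_of_lap_nonneg (hG : IsWeightedGraph w μ) (hconn : GraphConnected w) (g : V → ℝ)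
    (hg : ∀ x, 0 ≤ lap w μ g x) (a b : V) : g a = g b := by
  have : Nonempty V := ⟨a⟩
  obtain ⟨x, hx⟩ := Finite.exists_max g
  have hstep : ∀ u v, Adj w u v → g u = g x → g v = g x := by
    intro u v huv hu
    have hnonpos : ∀ z ∈ univ, w u z / μ u * (g z - g u) ≤ 0 := fun z _ =>
      mul_nonpos_of_nonneg_of_nonpos (div_nonneg (hG.nonneg u z) (hG.mu_pos u).le)
        (by rw [hu]; linarith [hx z])
    have h0 := (sum_eq_zero_iff_of_nonpos hnonpos).1
      (le_antisymm (sum_nonpos hnonpos) (hg u)) v (mem_univ v)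
    rcases mul_eq_zero.1 h0 with h | h
    · exact absurd h (div_pos huv (hG.mu_pos u)).ne'
    · linarith
  have := forall_of_connected hconn (S := fun z => g z = g x) hstep rfl
  rw [this a, this b]

/-- If some edge is maximal, then some vertex is live. Otherwise all heights are finite, and
perturbing by `pot + height` along the first edge of a longest chain shows, by induction on the
height, that the height function has non-negative Laplacian everywhere. Hence it is constant; but it
decreases strictly along maximal edges. -/
theorem exists_live (hF : DistFacts w d) (hG : IsWeightedGraph w μ) (hconn : GraphConnected w)
    (hcurv : NonnegCurv w μ d) (hα : IsForm w d α) (hdiv : ∀ x, ∑ y, w x y / μ x * α x y = 0)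
    {x y : V} (hxy : Adj w x y) (hmax : α x y = d x y) : ∃ a, Live w d α a := by
  by_contra! hlive
  have wf : WellFounded (fun a b : V => height w d α a < height w d α b) :=
    haveI : IsTrans V (fun a b : V => height w d α a < height w d α b) := ⟨fun _ _ _ => lt_trans⟩
    haveI : Std.Irrefl (fun a b : V => height w d α a < height w d α b) := ⟨fun _ => lt_irrefl _⟩
    Finite.wellFounded_of_trans_of_irrefl _
  have hlap : ∀ a, 0 ≤ lap w μ (height w d α) a := by
    intro a
    induction a using wf.induction with
    | _ a ih =>
      rcases (exists_succ (a := a) hF.nonneg fun z _ _ => hlive z).2 with h | ⟨z, haz, hz, h⟩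
      · refine sum_nonneg fun u _ => ?_
        rw [h, sub_zero]
        exact mul_nonneg (div_nonneg (hG.nonneg a u) (hG.mu_pos a).le) (height_nonneg (hlive u))
      · refine (ih z (by linarith [hF.pos (hF.adj_ne haz)])).trans ?_
        have key := lap_le_of_perturb hF hG hcurv hα hdiv haz hz
          (fun u => pot w α a z u + height w d α u) ?_ ?_
        · have e1 : lap w μ (fun u => pot w α a z u + height w d α u) a =
              lap w μ (height w d α) a := by
            have e : ∀ u, w a u / μ a * ((pot w α a z u + height w d α u) -
                (pot w α a z a + height w d α a)) = w a u / μ a * α a u +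
                w a u / μ a * (height w d α u - height w d α a) := by
              intro u
              by_cases hu : Adj w a u
              · rw [pot_left (Or.inr hu), pot_left (Or.inl rfl), hα.self]
                ring
              · rw [le_antisymm (not_lt.1 hu) (hG.nonneg a u)]
                ring
            rw [lap, lap, sum_congr rfl fun u _ => e u, sum_add_distrib, hdiv, zero_add]
          have e2 : lap w μ (fun u => pot w α a z u + height w d α u) z =
              lap w μ (height w d α) z := by
            have e : ∀ u, w z u / μ z * ((pot w α a z u + height w d α u) -
                (pot w α a z z + height w d α z)) = w z u / μ z * α z u +
                w z u / μ z * (height w d α u - height w d α z) := by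
              intro u
              by_cases hu : Adj w z u
              · rw [pot_right hF hα haz (Or.inr hu), pot_right hF hα haz (Or.inl rfl), hα.self]
                ring
              · rw [le_antisymm (not_lt.1 hu) (hG.nonneg z u)]
                ring
            rw [lap, lap, sum_congr rfl fun u _ => e u, sum_add_distrib, hdiv, zero_add]
          rwa [e1, e2] at key
        · intro u v hu hv huv
          have := (((pot_lip hF hα haz hu hv).2 huv).not_live (hlive u)).2
          linarith
        · rw [pot_left (Or.inl rfl), pot_left (Or.inr haz), hα.self, hz, h]
          ring
  have h1 := const_of_lap_nonneg hG hconn _ hlap x y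
  have h2 := ((MChain.cons hxy hmax (.nil y)).not_live (hlive x)).2
  linarith [hF.pos (hF.adj_ne hxy)]

/-- If some edge is maximal, then all vertices are live. Otherwise choose a live `x` and a non-live
neighbour `u` of `x` for which `α x u + height u` is least. For a maximal edge `x ∼ y` with `y`
live, lowering the primitive on the non-live vertices whose chains end no higher than those of `u`
produces a non-live neighbour of `y` with a smaller value. -/
theorem all_live (hF : DistFacts w d) (hG : IsWeightedGraph w μ) (hconn : GraphConnected w)
    (hcurv : NonnegCurv w μ d) (hα : IsForm w d α) (hdiv : ∀ x, ∑ y, w x y / μ x * α x y = 0)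
    {x₀ y₀ : V} (hxy₀ : Adj w x₀ y₀) (hmax₀ : α x₀ y₀ = d x₀ y₀) (a : V) : Live w d α a := by
  classical
  obtain ⟨b, hb⟩ := exists_live hF hG hconn hcurv hα hdiv hxy₀ hmax₀
  by_contra ha
  let T : Finset (V × V) :=
    univ.filter fun q => Live w d α q.1 ∧ ¬Live w d α q.2 ∧ Adj w q.1 q.2
  have hT : T.Nonempty := by
    by_contra hT
    refine ha (forall_of_connected hconn (S := Live w d α) (fun u v huv hu => ?_) hb a)
    by_contra hv
    exact hT ⟨(u, v), by simp [T, hu, hv, huv]⟩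
  obtain ⟨⟨x, u⟩, hxu, hmin⟩ := exists_min_image T (fun q => α q.1 q.2 + height w d α q.2) hT
  simp only [T, mem_filter, mem_univ, true_and] at hxu hmin
  obtain ⟨hx, hu, hadj⟩ := hxu
  obtain ⟨y, hxy, hmax, hy⟩ : ∃ y, Adj w x y ∧ α x y = d x y ∧ Live w d α y := by
    by_contra! hcon
    exact (exists_succ hF.nonneg hcon).1 hx
  let t := α x u + height w d α u
  let g : V → ℝ := fun v =>
    if ¬Live w d α v ∧ pot w α x y v + height w d α v ≤ t then -1 else 0
  have hgx : g x = 0 := if_neg fun h => h.1 hx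
  have hgy : g y = 0 := if_neg fun h => h.1 hy
  have hgle : ∀ v, g v ≤ 0 := by
    intro v
    simp only [g]
    split_ifs <;> norm_num
  have hgu : g u = -1 := if_pos ⟨hu, by rw [pot_left (Or.inr hadj)]⟩
  have key := lap_le_of_perturb hF hG hcurv hα hdiv hxy hmax g ?_ (hgx.trans hgy.symm)
  · have hneg : lap w μ g x < 0 := by
      refine sum_neg' (fun v _ => ?_) ⟨u, mem_univ u, ?_⟩
      · exact mul_nonpos_of_nonneg_of_nonpos (div_nonneg (hG.nonneg x v) (hG.mu_pos x).le)
          (by linarith [hgle v])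
      · rw [hgu, hgx]
        have := div_pos hadj (hG.mu_pos x)
        linarith
    obtain ⟨v, -, hv⟩ := exists_lt_of_sum_lt (s := univ)
      (f := fun v => w y v / μ y * (g v - g y)) (g := fun _ => 0)
      (by rw [sum_const_zero]; exact lt_of_le_of_lt key hneg)
    simp only [hgy, sub_zero] at hv
    have hyv : Adj w y v := by
      by_contra h
      rw [le_antisymm (not_lt.1 h) (hG.nonneg y v)] at hv
      simp at hv
    have hgv : ¬Live w d α v ∧ pot w α x y v + height w d α v ≤ t := by
      by_contra h
      simp only [g, if_neg h, mul_zero, lt_irrefl] at hv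
    have h1 := hmin (y, v) ⟨hy, hgv.1, hyv⟩
    have h2 := hgv.2
    rw [pot_right hF hα hxy (Or.inr hyv), hmax] at h2
    simp only [t] at h1 h2
    linarith [hF.pos (hF.adj_ne hxy)]
  · intro p q hp hq hpq
    by_cases hgp : ¬Live w d α p ∧ pot w α x y p + height w d α p ≤ t
    · have h := ((pot_lip hF hα hxy hp hq).2 hpq).not_live hgp.1
      have hgq : g q = -1 := if_pos ⟨h.1, by linarith [h.2, hgp.2]⟩
      have hgp' : g p = -1 := if_pos hgp
      rw [hgq, hgp']
    · have hgp' : g p = 0 := if_neg hgp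
      rw [hgp']
      exact hgle q

/-- If a harmonic form bounded by `d` has a maximal edge at all, then it has an outgoing maximal edge
at every vertex. -/
theorem exists_max_edge (hF : DistFacts w d) (hG : IsWeightedGraph w μ) (hconn : GraphConnected w)
    (hcurv : NonnegCurv w μ d) (hα : IsForm w d α) (hdiv : ∀ x, ∑ y, w x y / μ x * α x y = 0)
    {x₀ y₀ : V} (hxy₀ : Adj w x₀ y₀) (hmax₀ : α x₀ y₀ = d x₀ y₀) (x : V) :
    ∃ y, Adj w x y ∧ α x y = d x y := by
  by_contra! hcon
  exact (exists_succ hF.nonneg fun z h h' => absurd h' (hcon z h)).1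
    (all_live hF hG hconn hcurv hα hdiv hxy₀ hmax₀ x)

end MaximalEdges

end Paper

/-! ### The maximum norm on harmonic forms -/

namespace Paper

section LinearAlgebra

open Filter Topology

/-- Let `E` be an `m`-dimensional space with a norm `nrm` which is, for each index `x`, the pointwise
maximum of a set `F x` of at most `2 m` functionals. Then all `F x` are equal, and consist of the
functionals `±b i` for a basis `b` of the dual space: `nrm` is a maximum norm.

The functionals `ℓ` that agree with `nrm` near some point in every direction form a symmetric set
which does not depend on `x` and is contained in each `F x`. It spans the dual space because every
functional in a minimal subset of `F x` that still has maximum `nrm` belongs to it. -/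
theorem exists_basis_of_nrm {E X : Type*} [AddCommGroup E] [Module ℝ E] [FiniteDimensional ℝ E]
    (nrm : E → ℝ) (F : X → Finset (Module.Dual ℝ E)) (m : ℕ) (x₀ : X)
    (hle : ∀ x, ∀ ℓ ∈ F x, ∀ φ, ℓ φ ≤ nrm φ) (hatt : ∀ x φ, ∃ ℓ ∈ F x, ℓ φ = nrm φ)
    (hneg : ∀ φ, nrm (-φ) = nrm φ) (hzero : ∀ φ, nrm φ = 0 → φ = 0)
    (hdim : Module.finrank ℝ E = m) (hcard : ∀ x, (F x).card ≤ 2 * m) :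
    ∃ b : Module.Basis (Fin m) ℝ (Module.Dual ℝ E), ∀ x, (F x).card = 2 * m ∧
      ∀ ℓ, ℓ ∈ F x ↔ ∃ i, ℓ = b i ∨ ℓ = -b i := by
  classical
  let S : Set (Module.Dual ℝ E) :=
    {ℓ | ∃ φ, ∀ ψ, ∀ᶠ t : ℝ in 𝓝 0, nrm (φ + t • ψ) = ℓ (φ + t • ψ)}
  have hSneg : ∀ ℓ ∈ S, -ℓ ∈ S := by
    rintro ℓ ⟨φ, hφ⟩
    refine ⟨-φ, fun ψ => ?_⟩
    filter_upwards [hφ (-ψ)] with t ht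
    have e : -φ + t • ψ = -(φ + t • -ψ) := by
      rw [neg_add, smul_neg, neg_neg]
    rw [e, hneg, ht, map_neg, LinearMap.neg_apply, neg_neg]
  have hSF : ∀ x, ∀ ℓ ∈ S, ℓ ∈ F x := by
    rintro x ℓ ⟨φ, hφ⟩
    obtain ⟨ℓ', hℓ', he⟩ := hatt x φ
    have h0 : nrm φ = ℓ φ := by simpa using (hφ 0).self_of_nhds
    suffices ℓ = ℓ' from this ▸ hℓ'
    ext ψ
    obtain ⟨δ, hδ, h⟩ := Metric.eventually_nhds_iff.1 (hφ ψ)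
    have hineq : ∀ t : ℝ, |t| < δ → 0 ≤ t * (ℓ ψ - ℓ' ψ) := by
      intro t ht
      have h1 := h (y := t) (by simpa using ht)
      have h2 := hle x ℓ' hℓ' (φ + t • ψ)
      rw [h1] at h2
      simp only [map_add, map_smul, smul_eq_mul] at h2
      linarith
    have h1 := hineq (δ / 2) (by rw [abs_of_pos] <;> linarith)
    have h2 := hineq (-(δ / 2)) (by rw [abs_neg, abs_of_pos] <;> linarith)
    have h3 : 0 ≤ ℓ ψ - ℓ' ψ := nonneg_of_mul_nonneg_right h1 (by linarith)
    have h4 : 0 ≤ -(ℓ ψ - ℓ' ψ) := by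
      refine nonneg_of_mul_nonneg_right (a := δ / 2) ?_ (by linarith)
      linarith
    linarith
  -- A minimal subset of `F x₀` with pointwise maximum `nrm`.
  obtain ⟨J, hJ⟩ : ∃ J, Minimal (fun J : Finset (Module.Dual ℝ E) =>
      J ⊆ F x₀ ∧ ∀ φ, ∃ ℓ ∈ J, ℓ φ = nrm φ) J :=
    exists_minimal_of_wellFoundedLT _ ⟨F x₀, subset_rfl, hatt x₀⟩
  have hJS : ∀ ℓ ∈ J, ℓ ∈ S := by
    intro ℓ hℓ
    have hnot : ¬∀ φ, ∃ ℓ' ∈ J.erase ℓ, ℓ' φ = nrm φ := by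
      intro h
      have := hJ.2 ⟨(erase_subset ℓ J).trans hJ.1.1, h⟩ (erase_subset ℓ J) hℓ
      exact notMem_erase ℓ J this
    push Not at hnot
    obtain ⟨φ, hφ⟩ := hnot
    have hℓφ : ℓ φ = nrm φ := by
      obtain ⟨ℓ', h1, h2⟩ := hJ.1.2 φ
      by_cases h : ℓ' = ℓ
      · rwa [h] at h2
      · exact absurd h2 (hφ ℓ' (mem_erase.2 ⟨h, h1⟩))
    refine ⟨φ, fun ψ => ?_⟩
    have hev : ∀ᶠ t : ℝ in 𝓝 0, ∀ ℓ' ∈ J.erase ℓ, ℓ' (φ + t • ψ) < ℓ (φ + t • ψ) := by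
      refine (eventually_all_finset _).2 fun ℓ' hℓ' => ?_
      have hlt : ℓ' φ + 0 * ℓ' ψ < ℓ φ + 0 * ℓ ψ := by
        rw [zero_mul, zero_mul, add_zero, add_zero, hℓφ]
        exact lt_of_le_of_ne (hle x₀ ℓ' (hJ.1.1 (mem_of_mem_erase hℓ')) φ) (hφ ℓ' hℓ')
      have hc : Continuous fun t : ℝ => ℓ' φ + t * ℓ' ψ := by fun_prop
      have hc' : Continuous fun t : ℝ => ℓ φ + t * ℓ ψ := by fun_prop
      filter_upwards [(hc.tendsto 0).eventually_lt (hc'.tendsto 0) hlt] with t ht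
      simpa using ht
    filter_upwards [hev] with t ht
    obtain ⟨ℓ', h1, h2⟩ := hJ.1.2 (φ + t • ψ)
    by_cases h : ℓ' = ℓ
    · rw [← h, h2]
    · have h3 := ht ℓ' (mem_erase.2 ⟨h, h1⟩)
      have h4 := hle x₀ ℓ (hJ.1.1 hℓ) (φ + t • ψ)
      linarith
  have hspan : Submodule.span ℝ S = ⊤ := by
    have hco : (Submodule.span ℝ S).dualCoannihilator = ⊥ := by
      rw [eq_bot_iff]
      intro φ hφ
      rw [Submodule.mem_dualCoannihilator] at hφ
      obtain ⟨ℓ, h1, h2⟩ := hJ.1.2 φ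
      rw [hφ ℓ (Submodule.subset_span (hJS ℓ h1))] at h2
      exact hzero φ h2.symm
    rw [← Subspace.dualCoannihilator_dualAnnihilator_eq (W := Submodule.span ℝ S), hco,
      Submodule.dualAnnihilator_bot]
  obtain ⟨B, hBS, hBspan, hBli⟩ := exists_linearIndependent ℝ S
  let b₀ : Module.Basis B ℝ (Module.Dual ℝ E) := Module.Basis.mk hBli (by
    rw [Subtype.range_coe, hBspan, hspan])
  have hfin : Finite B := Module.Finite.finite_basis b₀
  have := Fintype.ofFinite B
  have hB : Fintype.card B = m := by
    rw [← Module.finrank_eq_card_basis b₀, Subspace.dual_finrank_eq, hdim]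
  let b := b₀.reindex (Fintype.equivFinOfCardEq hB)
  have hbS : ∀ i, b i ∈ S := by
    intro i
    have : b i = ((Fintype.equivFinOfCardEq hB).symm i : Module.Dual ℝ E) := by
      simp [b, b₀]
    rw [this]
    exact hBS (Subtype.coe_prop _)
  let g : Fin m ⊕ Fin m → Module.Dual ℝ E := Sum.elim b (fun i => -b i)
  have hne : ∀ i j, b i ≠ -b j := by
    intro i j h
    have h1 : b.repr (b i) i = -(b.repr (b j) i) := by
      rw [h, map_neg, Finsupp.neg_apply]
    rw [b.repr_self, b.repr_self, Finsupp.single_eq_same, Finsupp.single_apply] at h1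
    split_ifs at h1 <;> norm_num at h1
  have hg : Function.Injective g := by
    rintro (i | i) (j | j) h
    · exact congrArg _ (b.injective h)
    · exact absurd h (hne i j)
    · exact absurd h.symm (hne j i)
    · exact congrArg _ (b.injective (neg_injective h))
  have hcardg : (univ.image g).card = 2 * m := by
    rw [card_image_of_injective _ hg, card_univ, Fintype.card_sum, Fintype.card_fin]
    ring
  refine ⟨b, fun x => ?_⟩
  have hsub : univ.image g ⊆ F x := by
    intro ℓ hℓ
    obtain ⟨i | i, -, rfl⟩ := mem_image.1 hℓ
    · exact hSF x _ (hbS i)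
    · exact hSF x _ (hSneg _ (hbS i))
  have heq := eq_of_subset_of_card_le hsub (by rw [hcardg]; exact hcard x)
  refine ⟨heq ▸ hcardg, fun ℓ => ?_⟩
  rw [← heq, mem_image]
  constructor
  · rintro ⟨i | i, -, rfl⟩
    · exact ⟨i, Or.inl rfl⟩
    · exact ⟨i, Or.inr rfl⟩
  · rintro ⟨i, rfl | rfl⟩
    · exact ⟨Sum.inl i, mem_univ _, rfl⟩
    · exact ⟨Sum.inr i, mem_univ _, rfl⟩

end LinearAlgebra

section Homology

variable {V : Type*} [Fintype V] {w d : V → V → ℝ} {μ : V → ℝ}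

/-- `H1set` as a linear subspace of the space of all functions on `V × V`. -/
def H1sub (w : V → V → ℝ) (μ : V → ℝ) (d : V → V → ℝ) : Submodule ℝ (V → V → ℝ) where
  carrier := H1set w μ d
  zero_mem' := ⟨by simp, by simp, by simp, by simp⟩
  add_mem' := by
    rintro α β ⟨a1, a2, a3, a4⟩ ⟨b1, b2, b3, b4⟩
    refine ⟨fun x y => ?_, fun x y h => ?_, fun n c h h' => ?_, fun x => ?_⟩
    · simp only [Pi.add_apply]
      rw [a1, b1]
      ring
    · simp only [Pi.add_apply]
      rw [a2 x y h, b2 x y h, add_zero]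
    · simp only [Pi.add_apply]
      rw [sum_add_distrib, a3 n c h h', b3 n c h h', add_zero]
    · simp only [Pi.add_apply, mul_add]
      rw [sum_add_distrib, a4, b4, add_zero]
  smul_mem' := by
    rintro r α ⟨a1, a2, a3, a4⟩
    refine ⟨fun x y => ?_, fun x y h => ?_, fun n c h h' => ?_, fun x => ?_⟩
    · simp only [Pi.smul_apply, smul_eq_mul]
      rw [a1]
      ring
    · simp only [Pi.smul_apply, smul_eq_mul]
      rw [a2 x y h, mul_zero]
    · simp only [Pi.smul_apply, smul_eq_mul]
      rw [← mul_sum, a3 n c h h', mul_zero]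
    · simp only [Pi.smul_apply, smul_eq_mul, mul_left_comm _ r]
      rw [← mul_sum, a4, mul_zero]

theorem span_H1set : Submodule.span ℝ (H1set w μ d) = H1sub w μ d :=
  Submodule.span_eq (H1sub w μ d)

/-- The normalised value `α x y / d x y` of a harmonic form, as a functional of the form. -/
noncomputable def evalAt (w : V → V → ℝ) (μ : V → ℝ) (d : V → V → ℝ) (x y : V) :
    Module.Dual ℝ (H1sub w μ d) where
  toFun α := α.1 x y / d x y
  map_add' α β := by simp [add_div]
  map_smul' r α := by simp [mul_div_assoc]

theorem evalAt_swap (hF : DistFacts w d) (α : H1sub w μ d) (x y : V) :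
    evalAt w μ d x y α = -evalAt w μ d y x α := by
  change α.1 x y / d x y = -(α.1 y x / d y x)
  rw [α.2.1 x y, hF.symm x y, neg_div]

variable [Nonempty V]

/-- The norm `max α(x,y) / d(x,y)` of a harmonic form. The diagonal contributes `0 / 0 = 0`. -/
noncomputable def supNorm (w : V → V → ℝ) (μ : V → ℝ) (d : V → V → ℝ) (α : H1sub w μ d) : ℝ :=
  univ.sup' univ_nonempty fun q : V × V => evalAt w μ d q.1 q.2 α

theorem evalAt_le (α : H1sub w μ d) (x y : V) : evalAt w μ d x y α ≤ supNorm w μ d α :=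
  le_sup' (fun q : V × V => evalAt w μ d q.1 q.2 α) (mem_univ (x, y))

theorem supNorm_neg (hF : DistFacts w d) (α : H1sub w μ d) :
    supNorm w μ d (-α) = supNorm w μ d α := by
  have h : ∀ β : H1sub w μ d, supNorm w μ d (-β) ≤ supNorm w μ d β := by
    intro β
    refine sup'_le _ _ fun q _ => ?_
    rw [map_neg, ← evalAt_swap hF]
    exact evalAt_le β q.2 q.1
  refine le_antisymm (h α) ?_
  simpa using h (-α)

theorem eq_zero_of_supNorm (hF : DistFacts w d) (α : H1sub w μ d) (h : supNorm w μ d α = 0) :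
    α = 0 := by
  have h0 : ∀ x y, evalAt w μ d x y α = 0 := by
    intro x y
    have h1 := evalAt_le α x y
    have h2 := evalAt_le α y x
    rw [evalAt_swap hF] at h2
    linarith
  ext x y
  by_cases hxy : x = y
  · have := α.2.1 x y
    subst hxy
    change α.1 x x = 0
    linarith
  · have : α.1 x y / d x y = 0 := h0 x y
    exact (div_eq_zero_iff.1 this).resolve_right (hF.pos hxy).ne'

/-- At every vertex the norm of a harmonic form is the value on some outgoing edge. -/
theorem exists_evalAt_eq (hF : DistFacts w d) (hG : IsWeightedGraph w μ)
    (hconn : GraphConnected w) (hcurv : NonnegCurv w μ d) (hnb : ∀ x, ∃ y, Adj w x y)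
    (α : H1sub w μ d) (x : V) : ∃ y, Adj w x y ∧ evalAt w μ d x y α = supNorm w μ d α := by
  obtain ⟨⟨p, q⟩, -, hpq⟩ := exists_mem_eq_sup' univ_nonempty
    (fun q : V × V => evalAt w μ d q.1 q.2 α)
  replace hpq : supNorm w μ d α = evalAt w μ d p q α := hpq
  have hself : ∀ y, evalAt w μ d y y α = 0 := by
    intro y
    have := evalAt_swap hF α y y
    linarith
  have hnn : 0 ≤ supNorm w μ d α := by
    rw [← hself x]
    exact evalAt_le α x x
  rcases hnn.eq_or_lt with h0 | hpos
  · obtain ⟨y, hy⟩ := hnb x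
    refine ⟨y, hy, ?_⟩
    rw [eq_zero_of_supNorm hF α h0.symm, map_zero]
    rw [eq_zero_of_supNorm hF α h0.symm] at h0
    exact h0
  · set K := supNorm w μ d α with hK
    have hpq0 : evalAt w μ d p q α ≠ 0 := by
      rw [← hpq]
      exact hpos.ne'
    have hne : p ≠ q := by
      rintro rfl
      exact hpq0 (hself p)
    have hadj : Adj w p q := by
      by_contra h
      refine hpq0 ?_
      change α.1 p q / d p q = 0
      rw [α.2.2.1 p q h, zero_div]
    -- The rescaled form `K⁻¹ • α` is bounded by the distance and attains it on the edge `p q`.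
    have hform : IsForm w d (fun x y => K⁻¹ * α.1 x y) := by
      refine ⟨fun u v => ?_, fun u v h => ?_, fun u v => ?_, ?_⟩
      · rw [α.2.1 u v, mul_neg]
      · rw [α.2.2.1 u v h, mul_zero]
      · by_cases huv : u = v
        · subst huv
          have := α.2.1 u u
          rw [show α.1 u u = 0 by linarith, mul_zero]
          exact hF.nonneg u u
        · have h : α.1 u v / d u v ≤ K := evalAt_le α u v
          rw [div_le_iff₀ (hF.pos huv)] at h
          rwa [inv_mul_le_iff₀ hpos]
      · exact (K⁻¹ • α).2.2.2.1
    have hdiv : ∀ x, ∑ y, w x y / μ x * (K⁻¹ * α.1 x y) = 0 := (K⁻¹ • α).2.2.2.2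
    have hmax : K⁻¹ * α.1 p q = d p q := by
      have h : K = α.1 p q / d p q := hpq
      rw [eq_div_iff (hF.pos hne).ne'] at h
      rw [← h, inv_mul_cancel_left₀ hpos.ne']
    obtain ⟨y, hy, hxy⟩ := exists_max_edge hF hG hconn hcurv hform hdiv hadj hmax x
    refine ⟨y, hy, ?_⟩
    change α.1 x y / d x y = K
    rw [div_eq_iff (hF.pos (hF.adj_ne hy)).ne', ← hxy, mul_inv_cancel_left₀ hpos.ne']

end Homology

end Paper

/-! ### The adapted basis -/

open Paper in
/-- **Lemma (a suitable basis of the homology group).**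
Let `G = (V, w, μ)` be a finite connected weighted graph with a general path distance `d` and
non-negative Ollivier curvature satisfying `β₁(M₂(G)) = deg_max/2 =: m`. Then there is a basis
`α₁,…,α_m` of `H₁(M₂(G))` such that for every `i` and every vertex `x` there are neighbours
`y = y(i,x)` and `z = z(i,x)` of `x` with `αᵢ(x,x') = d(x,x')·(1_y(x') − 1_z(x'))` for all
`x'`. -/
theorem exists_adapted_basis_of_H1
    {V : Type*} [Fintype V] [DecidableEq V] [Nonempty V]
    (w : V → V → ℝ) (μ : V → ℝ) (d : V → V → ℝ)
    (hG : IsWeightedGraph w μ) (hconn : GraphConnected w) (hd : IsPathDistance w d)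
    (hcurv : NonnegCurv w μ d)
    (m : ℕ) (hm : degMax w = 2 * m) (hsharp : betti1 w μ d = m) :
    ∃ α : Fin m → (V → V → ℝ),
      (∀ i, α i ∈ H1set w μ d) ∧ LinearIndependent ℝ α ∧
      Submodule.span ℝ (Set.range α) = Submodule.span ℝ (H1set w μ d) ∧
      ∀ (i : Fin m) (x : V), ∃ y z : V, Adj w x y ∧ Adj w x z ∧
        ∀ x' : V, α i x x' = d x x' * ((if x' = y then (1:ℝ) else 0) -
          (if x' = z then (1:ℝ) else 0)) := by
  classical
  have hF := distFacts hG hd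
  rcases Nat.eq_zero_or_pos m with rfl | hmpos
  · refine ⟨fun i => i.elim0, fun i => i.elim0, linearIndependent_empty_type, ?_,
      fun i => i.elim0⟩
    rw [Set.range_eq_empty, Submodule.span_empty]
    exact (Submodule.finrank_eq_zero.1 hsharp).symm
  have hnb : ∀ x, ∃ y, Adj w x y := by
    obtain ⟨a, ha⟩ := exists_eq_ciSup_of_finite (f := fun x : V => deg w x)
    have hdeg : deg w a ≠ 0 := by
      have : deg w a = 2 * m := ha.trans hm
      omega
    obtain ⟨⟨b, hab⟩⟩ : Nonempty {y : V // Adj w a y} := by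
      by_contra h
      rw [not_nonempty_iff] at h
      exact hdeg Nat.card_of_isEmpty
    intro x
    by_contra! h
    have hall := forall_of_connected hconn (S := fun u => u = x)
      (fun u v huv hu => absurd (hu ▸ huv) (h v)) (a := x) rfl
    exact hF.adj_ne hab ((hall a).trans (hall b).symm)
  have hcardN : ∀ x, (univ.filter (Adj w x)).card ≤ 2 * m := by
    intro x
    have h1 : (univ.filter (Adj w x)).card = deg w x := by
      rw [deg, Nat.card_eq_fintype_card, Fintype.card_subtype]
    rw [h1, ← hm]
    exact le_ciSup (f := fun x : V => deg w x) (Set.finite_range _).bddAbove x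
  have hdim : Module.finrank ℝ (H1sub w μ d) = m := by
    rw [← hsharp, betti1, span_H1set]
  obtain ⟨b, hb⟩ := exists_basis_of_nrm (supNorm w μ d)
    (fun x => (univ.filter (Adj w x)).image (evalAt w μ d x)) m (Classical.arbitrary V)
    (by
      intro x ℓ hℓ α
      obtain ⟨y, -, rfl⟩ := mem_image.1 hℓ
      exact evalAt_le α x y)
    (by
      intro x α
      obtain ⟨y, hy, h⟩ := exists_evalAt_eq hF hG hconn hcurv hnb α x
      exact ⟨_, mem_image_of_mem _ (mem_filter.2 ⟨mem_univ y, hy⟩), h⟩)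
    (supNorm_neg hF) (eq_zero_of_supNorm hF) hdim
    (fun x => card_image_le.trans (hcardN x))
  have hinj : ∀ x y y', Adj w x y → Adj w x y' → evalAt w μ d x y = evalAt w μ d x y' →
      y = y' := by
    intro x y y' hy hy' h
    have hc := le_antisymm card_image_le ((hcardN x).trans (hb x).1.ge)
    exact card_image_iff.1 hc (by simpa using hy) (by simpa using hy') h
  let A : Module.Basis (Fin m) ℝ (H1sub w μ d) :=
    b.dualBasis.map (Module.evalEquiv ℝ (H1sub w μ d)).symm
  have hA : ∀ i j, b j (A i) = if j = i then 1 else 0 := by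
    intro i j
    have h : b j (A i) = b.dualBasis i (b j) := by
      simp only [A, Module.Basis.map_apply, Module.apply_evalEquiv_symm_apply]
    rw [h, Module.Basis.dualBasis_apply_self]
  refine ⟨fun i => (A i).1, fun i => (A i).2, ?_, ?_, fun i x => ?_⟩
  · exact A.linearIndependent.map' (H1sub w μ d).subtype (Submodule.ker_subtype _)
  · have h : Set.range (fun i => (A i).1) = (H1sub w μ d).subtype '' Set.range A := by
      rw [← Set.range_comp]
      rfl
    rw [h, Submodule.span_image, A.span_eq, Submodule.map_top, Submodule.range_subtype,
      span_H1set]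
  · have hmem : ∀ ℓ, (∃ k, ℓ = b k ∨ ℓ = -b k) → ∃ y, Adj w x y ∧ evalAt w μ d x y = ℓ := by
      intro ℓ hℓ
      obtain ⟨y, hy, h⟩ := mem_image.1 (((hb x).2 ℓ).2 hℓ)
      exact ⟨y, (mem_filter.1 hy).2, h⟩
    obtain ⟨y, hy, hyb⟩ := hmem (b i) ⟨i, Or.inl rfl⟩
    obtain ⟨z, hz, hzb⟩ := hmem (-b i) ⟨i, Or.inr rfl⟩
    have hyi : evalAt w μ d x y (A i) = 1 := by
      rw [hyb, hA, if_pos rfl]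
    have hzi : evalAt w μ d x z (A i) = -1 := by
      rw [hzb, LinearMap.neg_apply, hA, if_pos rfl]
    have hyz : y ≠ z := by
      rintro rfl
      rw [hyi] at hzi
      norm_num at hzi
    refine ⟨y, z, hy, hz, fun x' => ?_⟩
    by_cases hx' : Adj w x x'
    · have hval : (A i).1 x x' = d x x' * evalAt w μ d x x' (A i) :=
        (mul_div_cancel₀ _ (hF.pos (hF.adj_ne hx')).ne').symm
      change (A i).1 x x' = _
      rw [hval]
      congr 1
      by_cases h1 : x' = y
      · rw [h1, hyi, if_pos rfl, if_neg hyz, sub_zero]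
      by_cases h2 : x' = z
      · rw [h2, hzi, if_pos rfl, if_neg hyz.symm, zero_sub]
      rw [if_neg h1, if_neg h2, sub_zero]
      -- The functional at `x'` is `±b k`, and `k = i` would force `x' = y` or `x' = z`.
      obtain ⟨k, hk | hk⟩ := ((hb x).2 (evalAt w μ d x x')).1
        (mem_image_of_mem _ (mem_filter.2 ⟨mem_univ x', hx'⟩))
      · have hki : k ≠ i := by
          rintro rfl
          exact h1 (hinj x x' y hx' hy (hk.trans hyb.symm))
        rw [hk, hA, if_neg hki]
      · have hki : k ≠ i := by
          rintro rfl
          exact h2 (hinj x x' z hx' hz (hk.trans hzb.symm))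
        rw [hk, LinearMap.neg_apply, hA, if_neg hki, neg_zero]
    · have h1 : x' ≠ y := by
        rintro rfl
        exact hx' hy
      have h2 : x' ≠ z := by
        rintro rfl
        exact hx' hz
      rw [if_neg h1, if_neg h2, sub_zero, mul_zero]
      exact (A i).2.2.1 x x' hx'
end

section
/- Let G=(V,w,μ) be a connected locally finite weighted graph with non-negative Bakry-Émery curvature, i.e. satisfying CD(K,N) for some K≥0 and N∈(0,∞]. Assume f:V→ℝ satisfies Δf = C for some constant C, Γ(f,f) is bounded, and ‖Γ(f,f)‖_∞ = Γ(f,f)(x) for some x∈V. Then Γ(f,f) is constant, equal to ‖Γ(f,f)‖_∞, everywhere on V. -/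
/-!
The function `Γ(f,f)` is subharmonic: since `Δf` is constant, `Γ(f,Δf) = 0`, so
`Γ₂(f) = ½ ΔΓ(f,f)`, and non-negative curvature together with `Γ(f,f) ≥ 0` gives
`ΔΓ(f,f) ≥ 0` everywhere (`lapLF_Gamma_nonneg`). The strong maximum principle
(`eq_of_adj_of_lapLF_nonneg`) says that a function which is maximal at a vertex and has
non-negative Laplacian there takes the same value at all neighbours; connectedness propagates
the maximal value along paths to all of `V`.
-/

open Finset

namespace Paper

variable {V : Type*}

/-- The graph Laplacian on a locally finite graph (a finite sum at each vertex). -/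
noncomputable def lapLF (w : V → V → ℝ) (μ : V → ℝ) (f : V → ℝ) (x : V) : ℝ :=
  ∑ᶠ y, w x y / μ x * (f y - f x)

/-- The Ollivier curvature `κ(x,y) = inf {∇_{xy} Δ f : ∇_{yx} f = 1, ‖∇ f‖_∞ = 1}`. -/
noncomputable def kappaLF (w : V → V → ℝ) (μ : V → ℝ) (d : V → V → ℝ) (x y : V) : ℝ :=
  sInf { r : ℝ | ∃ f : V → ℝ, grad d f y x = 1 ∧ gradNorm w d f = 1 ∧
      r = grad d (lapLF w μ f) x y }

/-- Non-negative Ollivier curvature on every edge. -/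
def NonnegCurvLF (w : V → V → ℝ) (μ : V → ℝ) (d : V → V → ℝ) : Prop :=
  ∀ x y, Adj w x y → 0 ≤ kappaLF w μ d x y

end Paper

open ENNReal

namespace Paper

variable {V : Type*}

/-- The carré du champ operator `Γ(f,g) = ½(Δ(fg) − fΔg − gΔf)` on a locally finite graph. -/
noncomputable def GammaLF (w : V → V → ℝ) (μ : V → ℝ) (f g : V → ℝ) (x : V) : ℝ :=
  (lapLF w μ (fun y => f y * g y) x - f x * lapLF w μ g x - g x * lapLF w μ f x) / 2

/-- The iterated carré du champ operator `Γ₂(f) = ½(ΔΓ(f,f) − 2Γ(f,Δf))`. -/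
noncomputable def Gamma2LF (w : V → V → ℝ) (μ : V → ℝ) (f : V → ℝ) (x : V) : ℝ :=
  (lapLF w μ (fun y => GammaLF w μ f f y) x - 2 * GammaLF w μ f (lapLF w μ f) x) / 2

/-- The Bakry-Émery curvature-dimension condition `CD(K,N)` (with `1/∞ = 0`). -/
def SatisfiesCDLF (w : V → V → ℝ) (μ : V → ℝ) (K : ℝ) (N : ℝ≥0∞) : Prop :=
  ∀ (f : V → ℝ) (x : V),
    (1 / N).toReal * (lapLF w μ f x) ^ 2 + K * GammaLF w μ f f x ≤ Gamma2LF w μ f x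

/-- Non-negative Bakry-Émery curvature: `CD(K,N)` for some `K ≥ 0`, `N ∈ (0,∞]`. -/
def NonnegBakryEmeryLF (w : V → V → ℝ) (μ : V → ℝ) : Prop :=
  ∃ (K : ℝ) (N : ℝ≥0∞), 0 ≤ K ∧ 0 < N ∧ SatisfiesCDLF w μ K N

end Paper

namespace Paper

variable {V : Type*}

theorem lapLF_eq_sum {w : V → V → ℝ} {μ : V → ℝ} (hG : IsWeightedGraph w μ)
    (hlf : ∀ x : V, {y : V | Adj w x y}.Finite) (g : V → ℝ) (x : V) :
    lapLF w μ g x = ∑ y ∈ (hlf x).toFinset, w x y / μ x * (g y - g x) := by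
  unfold lapLF
  apply finsum_eq_sum_of_support_subset
  intro y hy
  have hne : w x y ≠ 0 := by
    rintro h
    simp [h] at hy
  simpa [Adj] using lt_of_le_of_ne (hG.nonneg x y) hne.symm

/-- This rests on the identity `Γ(f,f)(x) = ½ ∑_y (w(x,y)/μ(x)) (f(y) − f(x))²`. -/
theorem GammaLF_self_nonneg {w : V → V → ℝ} {μ : V → ℝ} (hG : IsWeightedGraph w μ)
    (hlf : ∀ x : V, {y : V | Adj w x y}.Finite) (f : V → ℝ) (x : V) :
    0 ≤ GammaLF w μ f f x := by
  have h : GammaLF w μ f f x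
      = (∑ y ∈ (hlf x).toFinset, w x y / μ x * (f y - f x) ^ 2) / 2 := by
    unfold GammaLF
    simp only [lapLF_eq_sum hG hlf, Finset.mul_sum, ← Finset.sum_sub_distrib]
    congr 1
    exact Finset.sum_congr rfl fun y _ => by ring
  rw [h]
  have : 0 ≤ ∑ y ∈ (hlf x).toFinset, w x y / μ x * (f y - f x) ^ 2 :=
    Finset.sum_nonneg fun y _ =>
      mul_nonneg (div_nonneg (hG.nonneg x y) (hG.mu_pos x).le) (sq_nonneg _)
  linarith

theorem GammaLF_const_right {w : V → V → ℝ} {μ : V → ℝ} (hG : IsWeightedGraph w μ)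
    (hlf : ∀ x : V, {y : V | Adj w x y}.Finite) (f : V → ℝ) (C : ℝ) (x : V) :
    GammaLF w μ f (fun _ => C) x = 0 := by
  unfold GammaLF
  simp only [lapLF_eq_sum hG hlf, Finset.mul_sum, ← Finset.sum_sub_distrib]
  rw [Finset.sum_eq_zero fun y _ => by ring, zero_div]

/-- Under non-negative Bakry-Émery curvature, `Γ(f,f)` is subharmonic when `Δf` is constant. -/
theorem lapLF_Gamma_nonneg {w : V → V → ℝ} {μ : V → ℝ} (hG : IsWeightedGraph w μ)
    (hlf : ∀ x : V, {y : V | Adj w x y}.Finite) (hBE : NonnegBakryEmeryLF w μ)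
    {f : V → ℝ} {C : ℝ} (hharm : ∀ x, lapLF w μ f x = C) (x : V) :
    0 ≤ lapLF w μ (fun y => GammaLF w μ f f y) x := by
  obtain ⟨K, N, hK, -, hCD⟩ := hBE
  have h := hCD f x
  have hΔ : lapLF w μ f = fun _ => C := funext hharm
  unfold Gamma2LF at h
  rw [hΔ, GammaLF_const_right hG hlf] at h
  have h1 : 0 ≤ (1 / N).toReal * C ^ 2 := mul_nonneg ENNReal.toReal_nonneg (sq_nonneg C)
  have h2 := mul_nonneg hK (GammaLF_self_nonneg hG hlf f x)
  linarith

/-- Local form of the strong maximum principle. -/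
theorem eq_of_adj_of_lapLF_nonneg {w : V → V → ℝ} {μ : V → ℝ} (hG : IsWeightedGraph w μ)
    (hlf : ∀ x : V, {y : V | Adj w x y}.Finite) {g : V → ℝ} {x : V}
    (hmax : ∀ y, g y ≤ g x) (hΔ : 0 ≤ lapLF w μ g x) {y : V} (hxy : Adj w x y) :
    g y = g x := by
  have hnonpos : ∀ z ∈ (hlf x).toFinset, w x z / μ x * (g z - g x) ≤ 0 := fun z _ =>
    mul_nonpos_of_nonneg_of_nonpos (div_nonneg (hG.nonneg x z) (hG.mu_pos x).le)
      (sub_nonpos.mpr (hmax z))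
  rw [lapLF_eq_sum hG hlf] at hΔ
  have hzero := (Finset.sum_eq_zero_iff_of_nonpos hnonpos).mp
    (le_antisymm (Finset.sum_nonpos hnonpos) hΔ) y (by simpa using hxy)
  have hpos : 0 < w x y / μ x := div_pos hxy (hG.mu_pos x)
  exact sub_eq_zero.mp ((mul_eq_zero.mp hzero).resolve_left hpos.ne')

end Paper

open Paper in
/-- **Lemma (Γ of a function with constant Laplacian is constant once it attains its sup).**
Let `G = (V, w, μ)` be a connected locally finite weighted graph on a countable vertex set
with non-negative Bakry-Émery curvature. Let `f` satisfy `Δ f ≡ C` and suppose `Γ(f,f)` is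
bounded with `‖Γ(f,f)‖_∞ = Γ(f,f)(x)` for some vertex `x` (i.e. `Γ(f,f)` attains its
supremum at `x`). Then `Γ(f,f)` is constant, equal to that supremum, everywhere. -/
theorem Gamma_constant_of_attains_sup
    {V : Type*} [Countable V] (w : V → V → ℝ) (μ : V → ℝ)
    (hG : IsWeightedGraph w μ) (hlf : ∀ x : V, {y : V | Adj w x y}.Finite)
    (hconn : GraphConnected w)
    (hBE : NonnegBakryEmeryLF w μ)
    (f : V → ℝ) (C : ℝ) (hharm : ∀ x, lapLF w μ f x = C)
    (x : V) (hmax : ∀ y, GammaLF w μ f f y ≤ GammaLF w μ f f x) :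
    ∀ y, GammaLF w μ f f y = GammaLF w μ f f x := by
  intro y
  obtain ⟨n, c, h0, hlast, hadj⟩ := hconn x y
  have key : ∀ i : Fin (n + 1), GammaLF w μ f f (c i) = GammaLF w μ f f x := by
    intro i
    induction i using Fin.induction with
    | zero => rw [h0]
    | succ i ih =>
      exact (eq_of_adj_of_lapLF_nonneg hG hlf (g := fun z => GammaLF w μ f f z)
        (fun z => (hmax z).trans_eq ih.symm)
        (lapLF_Gamma_nonneg hG hlf hBE hharm _) (hadj i)).trans ih
  rw [← hlast]
  exact key _
end

section
/- Let G=(V,w,μ) be a finite connected weighted graph with non-negative Bakry-Émery curvature, i.e. satisfying CD(K,N) for some K≥0 and N∈(0,∞]. Let α∈H₁(M₂^path(G)) be a harmonic 1-form. Then the function |α|²(x) := (1/(2μ(x))) Σ_{y∼x} w(x,y) α(x,y)² is constant on V. -/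
/-!
The function `|α|²` is subharmonic, hence constant on a finite connected graph by the maximum
principle.

Subharmonicity at `x` comes from integrating `α` near `x`. Since `α` is closed along triangles and
quadrilaterals, there is a function `f` whose differential agrees with `α` on every edge meeting
`x` or a neighbour of `x` (`exists_local_potential`). Consequently `Γ(f, f) = |α|²` and
`Δ f = δ* α = 0` at `x` and at all neighbours of `x`. Thus
`Γ₂(f)(x) = ½ Δ|α|²(x)`, and the curvature condition makes the left side non-negative.
-/

open Finset

open ENNReal

namespace Paper

variable {V : Type*} [Fintype V]

/-- The carré du champ operator `Γ(f,g) = ½(Δ(fg) − fΔg − gΔf)`. -/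
noncomputable def Gamma (w : V → V → ℝ) (μ : V → ℝ) (f g : V → ℝ) (x : V) : ℝ :=
  (lap w μ (fun y => f y * g y) x - f x * lap w μ g x - g x * lap w μ f x) / 2

/-- The iterated carré du champ operator `Γ₂(f) = ½(ΔΓ(f,f) − 2Γ(f,Δf))`. -/
noncomputable def Gamma2 (w : V → V → ℝ) (μ : V → ℝ) (f : V → ℝ) (x : V) : ℝ :=
  (lap w μ (fun y => Gamma w μ f f y) x - 2 * Gamma w μ f (lap w μ f) x) / 2

/-- The Bakry-Émery curvature-dimension condition `CD(K,N)`: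
`Γ₂(f)(x) ≥ (1/N)(Δf(x))² + K Γ(f,f)(x)` for all `f` and `x` (with `1/∞ = 0`). -/
def SatisfiesCD (w : V → V → ℝ) (μ : V → ℝ) (K : ℝ) (N : ℝ≥0∞) : Prop :=
  ∀ (f : V → ℝ) (x : V),
    (1 / N).toReal * (lap w μ f x) ^ 2 + K * Gamma w μ f f x ≤ Gamma2 w μ f x

/-- Non-negative Bakry-Émery curvature: `CD(K,N)` for some `K ≥ 0` and `N ∈ (0,∞]`. -/
def NonnegBakryEmery (w : V → V → ℝ) (μ : V → ℝ) : Prop :=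
  ∃ (K : ℝ) (N : ℝ≥0∞), 0 ≤ K ∧ 0 < N ∧ SatisfiesCD w μ K N

/-- The harmonic 1-forms of the path homology complex `M₂^path(G)`, whose 2-cells are all
triangles and quadrilaterals: antisymmetric, supported on edges, with vanishing cyclic sums
along all cycles of combinatorial length 3 and 4, and vanishing divergence. -/
def H1pathSet (w : V → V → ℝ) (μ : V → ℝ) : Set (V → V → ℝ) :=
  { α | (∀ x y, α x y = -α y x) ∧ (∀ x y, ¬Adj w x y → α x y = 0) ∧
      (∀ c : ZMod 3 → V, Function.Injective c → (∀ i, Adj w (c i) (c (i + 1))) →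
          ∑ i, α (c i) (c (i + 1)) = 0) ∧
      (∀ c : ZMod 4 → V, Function.Injective c → (∀ i, Adj w (c i) (c (i + 1))) →
          ∑ i, α (c i) (c (i + 1)) = 0) ∧
      (∀ x, ∑ y, w x y / μ x * α x y = 0) }

/-- The first Betti number of the path homology complex `β₁(M₂^path(G))`. -/
noncomputable def betti1path (w : V → V → ℝ) (μ : V → ℝ) : ℕ :=
  Module.finrank ℝ (Submodule.span ℝ (H1pathSet w μ))

end Paper

namespace Paper

/-- The differential of `f` agrees with the closed form `α` on every edge meeting `x` or a
neighbour of `x`. On the sphere of radius two around `x` the value of `f` is the integral of `α`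
along a path of length two, which does not depend on the path by closedness on quadrilaterals;
closedness on triangles takes care of edges between neighbours of `x`. -/
lemma exists_local_potential {V : Type*} [Fintype V] {w : V → V → ℝ} {μ : V → ℝ}
    (hG : IsWeightedGraph w μ) {α : V → V → ℝ} (hα : α ∈ H1pathSet w μ) (x : V) :
    ∃ f : V → ℝ, (∀ y, Adj w x y → f y - f x = α x y) ∧
      ∀ y z, Adj w x y → Adj w y z → f z - f y = α y z := by
  classical
  obtain ⟨hanti, -, h3, h4, -⟩ := hα
  have hsymm : ∀ {a b}, Adj w a b → Adj w b a := by
    intro a b h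
    unfold Adj at *
    rwa [hG.symm b a]
  have hne : ∀ {a b}, Adj w a b → a ≠ b := by
    rintro a b h rfl
    unfold Adj at h
    rw [hG.loopless a] at h
    exact lt_irrefl _ h
  have tri : ∀ a b c, Adj w a b → Adj w b c → Adj w c a → α a b + α b c + α c a = 0 := by
    intro a b c hab hbc hca
    have h1 := hne hab
    have h2 := hne hbc
    have h3' := hne hca
    have := h3 (![a, b, c] : Fin 3 → V)
      (by
        intro i j hij
        change Fin 3 at i j
        fin_cases i <;> fin_cases j <;> first
          | rfl
          | exact absurd hij h1
          | exact absurd hij.symm h1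
          | exact absurd hij h2
          | exact absurd hij.symm h2
          | exact absurd hij h3'
          | exact absurd hij.symm h3')
      (by
        intro i
        change Fin 3 at i
        fin_cases i
        · exact hab
        · exact hbc
        · exact hca)
    exact (Fin.sum_univ_three (fun i : Fin 3 => α ((![a, b, c] : Fin 3 → V) i)
      ((![a, b, c] : Fin 3 → V) (i + 1)))).symm.trans this
  have quad : ∀ a b c d, Adj w a b → Adj w b c → Adj w c d → Adj w d a → a ≠ c → b ≠ d →
      α a b + α b c + α c d + α d a = 0 := by
    intro a b c d hab hbc hcd hda hac hbd
    have h1 := hne hab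
    have h2 := hne hbc
    have h3' := hne hcd
    have h4' := hne hda
    have := h4 (![a, b, c, d] : Fin 4 → V)
      (by
        intro i j hij
        change Fin 4 at i j
        fin_cases i <;> fin_cases j <;> first
          | rfl
          | exact absurd hij h1
          | exact absurd hij.symm h1
          | exact absurd hij h2
          | exact absurd hij.symm h2
          | exact absurd hij h3'
          | exact absurd hij.symm h3'
          | exact absurd hij h4'
          | exact absurd hij.symm h4'
          | exact absurd hij hac
          | exact absurd hij.symm hac
          | exact absurd hij hbd
          | exact absurd hij.symm hbd)
      (by
        intro i
        change Fin 4 at i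
        fin_cases i
        · exact hab
        · exact hbc
        · exact hcd
        · exact hda)
    exact (Fin.sum_univ_four (fun i : Fin 4 => α ((![a, b, c, d] : Fin 4 → V) i)
      ((![a, b, c, d] : Fin 4 → V) (i + 1)))).symm.trans this
  let f : V → ℝ := fun z =>
    if z = x then 0 else if Adj w x z then α x z else
      if h : ∃ y, Adj w x y ∧ Adj w y z then α x h.choose + α h.choose z else 0
  have f0 : f x = 0 := by simp [f]
  have f1 : ∀ y, Adj w x y → f y = α x y := by
    intro y hy
    simp [f, (hne hy).symm, hy]
  refine ⟨f, fun y hy => by rw [f0, f1 y hy, sub_zero], fun y z hy hz => ?_⟩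
  rw [f1 y hy]
  by_cases hzx : z = x
  · subst hzx
    rw [f0, hanti y z]
    ring
  by_cases hxz : Adj w x z
  · rw [f1 z hxz]
    have := tri x y z hy hz (hsymm hxz)
    have := hanti z x
    linarith
  · have h : ∃ y, Adj w x y ∧ Adj w y z := ⟨y, hy, hz⟩
    have f2 : f z = α x h.choose + α h.choose z := by
      simp only [f, if_neg hzx, if_neg hxz, dif_pos h]
    rw [f2]
    obtain ⟨hu1, hu2⟩ := h.choose_spec
    generalize h.choose = u at hu1 hu2 ⊢
    by_cases huy : y = u
    · subst huy
      ring
    · have := quad x y z u hy hz (hsymm hu2) (hsymm hu1) (Ne.symm hzx) huy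
      have := hanti z u
      have := hanti u x
      linarith

lemma Gamma_eq {V : Type*} [Fintype V] (w : V → V → ℝ) (μ : V → ℝ) (f g : V → ℝ) (x : V) :
    Gamma w μ f g x = (∑ y, w x y / μ x * ((f y - f x) * (g y - g x))) / 2 := by
  unfold Gamma lap
  rw [Finset.mul_sum, Finset.mul_sum, ← Finset.sum_sub_distrib, ← Finset.sum_sub_distrib]
  congr 1
  exact Finset.sum_congr rfl fun y _ => by ring

/-- Sums weighted by `w x ·` only see the neighbours of `x`. -/
lemma sum_congr_adj {V : Type*} [Fintype V] {w : V → V → ℝ} {μ : V → ℝ}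
    (hG : IsWeightedGraph w μ) (x : V) {F G : V → ℝ} (h : ∀ y, Adj w x y → F y = G y) :
    ∑ y, w x y / μ x * F y = ∑ y, w x y / μ x * G y := by
  refine Finset.sum_congr rfl fun y _ => ?_
  rcases (hG.nonneg x y).eq_or_lt with h0 | h0
  · simp [← h0]
  · rw [h y h0]

/-- Maximum principle: a subharmonic function on a finite connected graph is constant. -/
lemma eq_of_subharmonic {V : Type*} [Fintype V] [Nonempty V] {w : V → V → ℝ} {μ : V → ℝ}
    (hG : IsWeightedGraph w μ) (hconn : GraphConnected w) {g : V → ℝ}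
    (hg : ∀ x, 0 ≤ lap w μ g x) (x y : V) : g x = g y := by
  obtain ⟨m, hm⟩ := Finite.exists_max g
  have step : ∀ a b, g a = g m → Adj w a b → g b = g m := by
    intro a b ha hab
    have hc : ∀ z, 0 ≤ w a z / μ a := fun z => div_nonneg (hG.nonneg a z) (hG.mu_pos a).le
    have hle : ∀ z ∈ Finset.univ, w a z / μ a * (g z - g a) ≤ 0 := fun z _ =>
      mul_nonpos_of_nonneg_of_nonpos (hc z) (by rw [ha]; linarith [hm z])
    have h0 : ∑ z, w a z / μ a * (g z - g a) = 0 :=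
      le_antisymm (Finset.sum_nonpos hle) (hg a)
    have hb := (Finset.sum_eq_zero_iff_of_nonpos hle).1 h0 b (Finset.mem_univ b)
    have hpos : 0 < w a b / μ a := div_pos hab (hG.mu_pos a)
    rcases mul_eq_zero.1 hb with h | h
    · exact absurd h hpos.ne'
    · linarith
  have key : ∀ z, g z = g m := by
    intro z
    obtain ⟨n, c, hc0, hcn, hc⟩ := hconn m z
    have : ∀ i, g (c i) = g m := by
      intro i
      induction i using Fin.induction with
      | zero => rw [hc0]
      | succ i ih => exact step _ _ ih (hc i)
    rw [← hcn]
    exact this _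
  rw [key x, key y]

/-- `|α|²` is subharmonic: with `f` a local potential of `α` around `x`, the curvature condition
for `f` at `x` reads `0 ≤ ½ Δ|α|²(x)`. -/
lemma lap_normSq_nonneg {V : Type*} [Fintype V] {w : V → V → ℝ} {μ : V → ℝ}
    (hG : IsWeightedGraph w μ) (hBE : NonnegBakryEmery w μ)
    {α : V → V → ℝ} (hα : α ∈ H1pathSet w μ) (x : V) :
    0 ≤ lap w μ (fun y => 1 / (2 * μ y) * ∑ z, w y z * (α y z) ^ 2) x := by
  obtain ⟨f, hfx, hfy⟩ := exists_local_potential hG hα x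
  obtain ⟨-, -, -, -, hdiv⟩ := hα
  obtain ⟨K, N, hK, -, hCD⟩ := hBE
  have lap0 : ∀ a, (∀ z, Adj w a z → f z - f a = α a z) → lap w μ f a = 0 := fun a ha =>
    (sum_congr_adj hG a ha).trans (hdiv a)
  have gam : ∀ a, (∀ z, Adj w a z → f z - f a = α a z) →
      Gamma w μ f f a = 1 / (2 * μ a) * ∑ z, w a z * (α a z) ^ 2 := by
    intro a ha
    rw [Gamma_eq, sum_congr_adj hG a (G := fun z => α a z ^ 2)
      (fun z hz => by rw [ha z hz]; ring), Finset.mul_sum, Finset.sum_div]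
    have := (hG.mu_pos a).ne'
    exact Finset.sum_congr rfl fun z _ => by field_simp
  have hΓ : Gamma w μ f (lap w μ f) x = 0 := by
    rw [Gamma_eq, sum_congr_adj hG x (G := fun _ => 0)
      (fun y hy => by rw [lap0 x hfx, lap0 y (fun z => hfy y z hy)]; ring)]
    simp
  have hlap : lap w μ (fun y => Gamma w μ f f y) x =
      lap w μ (fun y => 1 / (2 * μ y) * ∑ z, w y z * (α y z) ^ 2) x :=
    sum_congr_adj hG x fun y hy => by
      beta_reduce
      rw [gam x hfx, gam y (fun z => hfy y z hy)]
  have hΓnn : 0 ≤ Gamma w μ f f x := by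
    rw [Gamma_eq]
    refine div_nonneg (Finset.sum_nonneg fun y _ => ?_) two_pos.le
    exact mul_nonneg (div_nonneg (hG.nonneg x y) (hG.mu_pos x).le) (mul_self_nonneg _)
  have h := hCD f x
  rw [lap0 x hfx, Gamma2, hΓ, hlap] at h
  have := mul_nonneg hK hΓnn
  linarith

end Paper

open Paper in
/-- **Lemma (the norm of a harmonic 1-form is constant under non-negative Bakry-Émery
curvature).** Let `G = (V, w, μ)` be a finite connected weighted graph with non-negative
Bakry-Émery curvature and let `α ∈ H₁(M₂^path(G))` be a harmonic 1-form. Then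
`|α|²(x) = (1/(2μ(x))) ∑_{y} w(x,y) α(x,y)²` is constant on `V`. -/
theorem normSq_of_harmonic_one_form_constant
    {V : Type*} [Fintype V] [Nonempty V] (w : V → V → ℝ) (μ : V → ℝ)
    (hG : IsWeightedGraph w μ) (hconn : GraphConnected w)
    (hBE : NonnegBakryEmery w μ)
    (α : V → V → ℝ) (hα : α ∈ H1pathSet w μ) :
    ∀ x y : V,
      1 / (2 * μ x) * ∑ z, w x z * (α x z) ^ 2 =
        1 / (2 * μ y) * ∑ z, w y z * (α y z) ^ 2 := by
  exact eq_of_subharmonic hG hconn (lap_normSq_nonneg hG hBE hα)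
end

section
/- Let G=(V,w,μ,d) be a finite weighted graph with a general path distance, and suppose there is an abelian group structure · on V with generating set {a_1,…,a_m}⊆V satisfying a_i≠a_j^ε for all i≠j and ε∈{−1,1}, such that: (i) w(x,y)>0 iff y∈{a_i^ε·x : i=1,…,m, ε=±1} for all x,y; (ii) w(x,a_i·x)d(x,a_i·x)=w(x,a_i^{−1}·x)d(x,a_i^{−1}·x) for all x and i; (iii) p(x,a_i^{ε₁}·x)=p(a_j^{ε₂}·x, a_i^{ε₁}·a_j^{ε₂}·x), where p(x,y)=w(x,y)/μ(x), for all x, all i≠j and ε₁,ε₂∈{−1,1}; (iv) d(x,a_i·x)=d(a_j·x, a_i·a_j·x) for all x and all i≠j. Then G has non-negative Ollivier curvature. -/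
/-!
Let `y = b * x` be an edge, with `b` a generator or the inverse of one, and let `f` be `1`-Lipschitz
along edges with `f y - f x = d x y`. The claim is `Δ f y ≤ Δ f x`. Both Laplacians are written as
sums over group elements `c`, the neighbour in direction `c` being `c * x`, resp. `c * y`.

* For `c ≠ b, b⁻¹` the terms compare one by one (`transversal_le`): the transition rates agree
  by (iii), and the parallel edge from `c * x` to `c * y` has the same length as `x ∼ y` by (iv), so
  `f` cannot grow more along it than along `x ∼ y`.
* For `c ∈ {b, b⁻¹}` the two terms at `x` add up to something nonnegative (`longitudinal_nonneg`):
  `f` grows at full speed towards `y`, falls at most at full speed in the opposite direction, and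
  (ii) balances the two rates. The same bound at `y`, applied to `-f` and `b⁻¹`, shows that the two
  terms at `y` add up to something nonpositive. If `b = b⁻¹`, each side has only one term, whose
  sign is immediate.
-/

open Finset

namespace Paper

lemma lap_eq_sum_group {V : Type*} [Fintype V] [CommGroup V] (w : V → V → ℝ) (μ f : V → ℝ)
    (x : V) : lap w μ f x = ∑ c, w x (c * x) / μ x * (f (c * x) - f x) :=
  (Equiv.sum_comp (Equiv.mulRight x) (fun y => w x y / μ x * (f y - f x))).symm

lemma lipschitz_of_gradNorm {V : Type*} [Fintype V] {w d : V → V → ℝ} {f : V → ℝ}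
    (hpos : ∀ u v, Adj w u v → 0 < d u v) (hf : gradNorm w d f = 1) {u v : V}
    (huv : Adj w u v) : |f u - f v| ≤ d u v := by
  have hbdd : BddAbove { r : ℝ | ∃ x y, Adj w x y ∧ r = |grad d f x y| } := by
    refine ((Set.finite_range fun p : V × V => |grad d f p.1 p.2|).subset ?_).bddAbove
    rintro r ⟨x, y, -, rfl⟩
    exact ⟨(x, y), rfl⟩
  have h : |grad d f u v| ≤ 1 := hf ▸ le_csSup hbdd ⟨u, v, huv, rfl⟩
  rwa [grad, abs_div, abs_of_pos (hpos u v huv), div_le_one (hpos u v huv)] at h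

/-- In the directions `b` and `b⁻¹`, the contributions to `Δ f x` balance out when `f` has full
slope from `x` to `b * x`. If `b` is an involution, the index set `{b, b⁻¹}` is a singleton. -/
lemma longitudinal_nonneg {V : Type*} [CommGroup V] [DecidableEq V] {w d : V → V → ℝ}
    {μ : V → ℝ} (hG : IsWeightedGraph w μ) (hd0 : ∀ u v, 0 ≤ d u v) {f : V → ℝ} {b x : V}
    (hb : w x (b * x) * d x (b * x) = w x (b⁻¹ * x) * d x (b⁻¹ * x))
    (hup : f (b * x) - f x = d x (b * x)) (hdown : f x - f (b⁻¹ * x) ≤ d x (b⁻¹ * x)) :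
    0 ≤ ∑ c ∈ {b, b⁻¹}, w x (c * x) / μ x * (f (c * x) - f x) := by
  have hμ := hG.mu_pos x
  by_cases h : b = b⁻¹
  · rw [← h, Finset.pair_eq_singleton, Finset.sum_singleton, hup]
    exact mul_nonneg (div_nonneg (hG.nonneg _ _) hμ.le) (hd0 _ _)
  · rw [Finset.sum_pair h, hup]
    have h1 : w x (b⁻¹ * x) * (f x - f (b⁻¹ * x)) ≤ w x (b⁻¹ * x) * d x (b⁻¹ * x) :=
      mul_le_mul_of_nonneg_left hdown (hG.nonneg _ _)
    have h2 : w x (b * x) / μ x * d x (b * x)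
          + w x (b⁻¹ * x) / μ x * (f (b⁻¹ * x) - f x)
        = (w x (b * x) * d x (b * x) - w x (b⁻¹ * x) * (f x - f (b⁻¹ * x))) / μ x := by ring
    rw [h2]
    exact div_nonneg (by linarith) hμ.le

/-- In a direction `c` transversal to the edge `x ∼ b * x`, equal transition rates and equal lengths
of the parallel edges make the contribution to `Δ f` at `b * x` at most that at `x`. -/
lemma transversal_le {V : Type*} [CommGroup V] {w d : V → V → ℝ} {μ : V → ℝ}
    (hG : IsWeightedGraph w μ) {f : V → ℝ} {b c x : V}
    (hrate : w x (c * x) / μ x = w (b * x) (c * (b * x)) / μ (b * x))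
    (hlen : d x (b * x) = d (c * x) (b * (c * x)))
    (hup : f (b * x) - f x = d x (b * x))
    (hpar : f (b * (c * x)) - f (c * x) ≤ d (c * x) (b * (c * x))) :
    w (b * x) (c * (b * x)) / μ (b * x) * (f (c * (b * x)) - f (b * x))
      ≤ w x (c * x) / μ x * (f (c * x) - f x) := by
  rw [← hrate, mul_left_comm c b x]
  refine mul_le_mul_of_nonneg_left ?_ (div_nonneg (hG.nonneg _ _) (hG.mu_pos _).le)
  linarith

/-- The comparison of Laplacians along a single edge `x ∼ b * x`. Every direction `c ≠ b, b⁻¹` either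
carries no edges at all, or has the same transition rate at `x` and at `b * x`, with the opposite
side `c * x ∼ b * (c * x)` as long as `x ∼ b * x`. -/
lemma lap_le_of_direction {V : Type*} [Fintype V] [CommGroup V] {w d : V → V → ℝ} {μ : V → ℝ}
    (hG : IsWeightedGraph w μ) (hsymm : ∀ u v, d u v = d v u) (hd0 : ∀ u v, 0 ≤ d u v)
    {f : V → ℝ} (hf : ∀ u v, Adj w u v → |f u - f v| ≤ d u v) {b x : V}
    (hadj : ∀ u, Adj w u (b * u))
    (hii : ∀ u, w u (b * u) * d u (b * u) = w u (b⁻¹ * u) * d u (b⁻¹ * u))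
    (hc : ∀ c, c ≠ b → c ≠ b⁻¹ → (∀ u, w u (c * u) = 0) ∨
      (w x (c * x) / μ x = w (b * x) (c * (b * x)) / μ (b * x) ∧
        d x (b * x) = d (c * x) (b * (c * x))))
    (hup : f (b * x) - f x = d x (b * x)) :
    lap w μ f (b * x) ≤ lap w μ f x := by
  classical
  have hstep : ∀ u, f (b * u) - f u ≤ d u (b * u) := fun u => by
    have := (abs_le.1 (hf u (b * u) (hadj u))).1
    linarith
  rw [lap_eq_sum_group, lap_eq_sum_group, ← Finset.sum_add_sum_compl {b, b⁻¹},
    ← Finset.sum_add_sum_compl {b, b⁻¹} fun c => w x (c * x) / μ x * (f (c * x) - f x)]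
  have hx : 0 ≤ ∑ c ∈ {b, b⁻¹}, w x (c * x) / μ x * (f (c * x) - f x) := by
    refine longitudinal_nonneg hG hd0 (hii x) hup ?_
    have := hstep (b⁻¹ * x)
    rwa [mul_inv_cancel_left, hsymm] at this
  -- At `b * x` the function `-f` has full slope in the direction `b⁻¹`, back to `x`.
  have hy : 0 ≤ ∑ c ∈ {b⁻¹, b⁻¹⁻¹}, w (b * x) (c * (b * x)) / μ (b * x)
      * ((-f) (c * (b * x)) - (-f) (b * x)) := by
    refine longitudinal_nonneg hG hd0 ?_ ?_ ?_
    · rw [inv_inv]; exact (hii (b * x)).symm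
    · rw [inv_mul_cancel_left, hsymm]
      simp only [Pi.neg_apply]
      linarith
    · rw [inv_inv]
      have := hstep (b * x)
      simp only [Pi.neg_apply]
      linarith
  have hy' : ∑ c ∈ {b, b⁻¹}, w (b * x) (c * (b * x)) / μ (b * x)
      * (f (c * (b * x)) - f (b * x)) ≤ 0 := by
    rw [inv_inv, Finset.pair_comm] at hy
    rw [← neg_nonneg, ← Finset.sum_neg_distrib]
    refine hy.trans_eq (Finset.sum_congr rfl fun c _ => ?_)
    simp only [Pi.neg_apply]
    ring
  refine add_le_add (hy'.trans hx) (Finset.sum_le_sum fun c hcm => ?_)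
  simp only [Finset.mem_compl, Finset.mem_insert, Finset.mem_singleton, not_or] at hcm
  rcases hc c hcm.1 hcm.2 with h0 | ⟨hrate, hlen⟩
  · simp [h0]
  · exact transversal_le hG hrate hlen hup (hstep _)

end Paper

open Paper in
/-- **Lemma (torus conditions imply non-negative Ollivier curvature).**
Let `G = (V, w, μ)` be a finite weighted graph with a general path distance `d`, and suppose
`V` carries an abelian group structure with generating set `a_1,…,a_m` (with `a_i ≠ a_j^ε`
for `i ≠ j`, `ε = ±1`) satisfying the torus conditions (i)–(iv). Then `G` has non-negative
Ollivier curvature. -/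
theorem nonneg_curvature_of_torus_conditions
    {V : Type*} [Fintype V] [CommGroup V] (w : V → V → ℝ) (μ : V → ℝ) (d : V → V → ℝ)
    (hG : IsWeightedGraph w μ) (hd : IsPathDistance w d)
    (m : ℕ) (a : Fin m → V)
    (hgen : Subgroup.closure (Set.range a) = ⊤)
    (hdistinct : ∀ i j : Fin m, i ≠ j → a i ≠ a j ∧ a i ≠ (a j)⁻¹)
    -- (i)
    (hadj : ∀ x y : V, Adj w x y ↔ ∃ i, y = a i * x ∨ y = (a i)⁻¹ * x)
    -- (ii)
    (hwd : ∀ (x : V) (i : Fin m),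
      w x (a i * x) * d x (a i * x) = w x ((a i)⁻¹ * x) * d x ((a i)⁻¹ * x))
    -- (iii)
    (hp : ∀ (x : V) (i j : Fin m) (ε₁ ε₂ : ℤ), i ≠ j →
      (ε₁ = 1 ∨ ε₁ = -1) → (ε₂ = 1 ∨ ε₂ = -1) →
      w x (a i ^ ε₁ * x) / μ x
        = w (a j ^ ε₂ * x) (a i ^ ε₁ * (a j ^ ε₂ * x)) / μ (a j ^ ε₂ * x))
    -- (iv)
    (hdd : ∀ (x : V) (i j : Fin m), i ≠ j →
      d x (a i * x) = d (a j * x) (a i * (a j * x))) :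
    NonnegCurv w μ d := by
  obtain ⟨hsymm, hzero, hd0, -⟩ := hd
  have hpos : ∀ u v, Adj w u v → 0 < d u v := fun u v huv =>
    (hd0 u v).lt_of_ne' fun h => by
      obtain rfl := (hzero u v).1 h
      exact huv.ne' (hG.loopless u)
  intro x y hxy
  refine Real.sInf_nonneg ?_
  rintro r ⟨f, hgrad, hnorm, rfl⟩
  have hf : ∀ u v, Adj w u v → |f u - f v| ≤ d u v :=
    fun u v huv => lipschitz_of_gradNorm hpos hnorm huv
  have hup : f y - f x = d x y := by
    rwa [grad, hsymm y x, div_eq_one_iff_eq (hpos x y hxy).ne'] at hgrad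
  refine div_nonneg (sub_nonneg.2 ?_) (hd0 _ _)
  -- (iv) also holds for the inverse generators, in either of the two directions.
  have hlen : ∀ (i j : Fin m), i ≠ j → ∀ (b c u : V), (b = a i ∨ b = (a i)⁻¹) →
      (c = a j ∨ c = (a j)⁻¹) → d u (b * u) = d (c * u) (b * (c * u)) := by
    intro i j hij b c u hb hc
    have h1 : ∀ u, d u (a i * u) = d (c * u) (a i * (c * u)) := fun u => by
      rcases hc with rfl | rfl
      · exact hdd u i j hij
      · have := hdd ((a j)⁻¹ * u) i j hij
        rw [mul_inv_cancel_left] at this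
        exact this.symm
    rcases hb with rfl | rfl
    · exact h1 u
    · have := h1 ((a i)⁻¹ * u)
      rw [mul_left_comm c, mul_inv_cancel_left, mul_inv_cancel_left] at this
      rw [hsymm, this, hsymm]
  have hrate : ∀ (i j : Fin m), i ≠ j → ∀ (b c u : V), (b = a i ∨ b = (a i)⁻¹) →
      (c = a j ∨ c = (a j)⁻¹) → w u (c * u) / μ u = w (b * u) (c * (b * u)) / μ (b * u) := by
    have hpow : ∀ (k : Fin m) (b : V), (b = a k ∨ b = (a k)⁻¹) →
        ∃ ε : ℤ, (ε = 1 ∨ ε = -1) ∧ b = a k ^ ε := by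
      rintro k b (rfl | rfl)
      · exact ⟨1, Or.inl rfl, (zpow_one _).symm⟩
      · exact ⟨-1, Or.inr rfl, (zpow_neg_one _).symm⟩
    intro i j hij b c u hb hc
    obtain ⟨ε, hε, rfl⟩ := hpow i b hb
    obtain ⟨δ, hδ, rfl⟩ := hpow j c hc
    exact hp u j i δ ε hij.symm hδ hε
  obtain ⟨i, b, hb, rfl⟩ : ∃ i b, (b = a i ∨ b = (a i)⁻¹) ∧ y = b * x := by
    obtain ⟨i, h | h⟩ := (hadj x y).1 hxy
    exacts [⟨i, _, Or.inl rfl, h⟩, ⟨i, _, Or.inr rfl, h⟩]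
  refine lap_le_of_direction hG hsymm hd0 hf ?_ ?_ ?_ hup
  · intro u
    refine (hadj _ _).2 ⟨i, ?_⟩
    rcases hb with rfl | rfl <;> simp
  · intro u
    rcases hb with rfl | rfl
    · exact hwd u i
    · rw [inv_inv]; exact (hwd u i).symm
  · intro c hcb hcb'
    by_cases hj : ∃ j, c = a j ∨ c = (a j)⁻¹
    · obtain ⟨j, hj⟩ := hj
      have hij : i ≠ j := by
        rintro rfl
        rcases hb with rfl | rfl <;> rcases hj with rfl | rfl <;> simp at hcb hcb'
      exact Or.inr ⟨hrate i j hij b c x hb hj, hlen i j hij b c x hb hj⟩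
    · left
      intro u
      refine le_antisymm (not_lt.1 fun h => hj ?_) (hG.nonneg _ _)
      obtain ⟨j, h⟩ := (hadj u (c * u)).1 h
      exact ⟨j, h.imp mul_right_cancel mul_right_cancel⟩
end

section
/- Let C_n=(V={0,…,n−1},p) with n≥5 be a (possibly non-reversible) Markov chain on a cycle, i.e. p:V×V→[0,1] with Σ_j p(i,j)=1 and p(i,j)>0 iff j≡i±1 (mod n). Then there exists a general path distance d on C_n whose Ollivier curvature is constant, i.e. κ(x,y)=K for every edge x∼y and some K∈ℝ; this constant curvature metric is unique up to multiplication by a positive constant; and its constant curvature satisfies K≥0. -/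
/-!
Write `ℓ k = d k (k + 1)` for the edge lengths of a path distance on the cycle, and let
`P = 1 + Δ / 4` be the lazy kernel. By Kantorovich duality the Wasserstein distance between the
distributions `P(k, ·)` and `P(k + 1, ·)` is
`T ℓ k = max {P f (k + 1) - P f k : f is 1-Lipschitz}`. If `ℓ` satisfies the polygon inequality
(no edge is longer than all the others together), then laziness lets the maximum be taken over
`f` with `f (k + 1) - f k = ℓ k`, so that `T ℓ k = (1 - κ(k, k + 1) / 4) ℓ k`
(`kappaMC_right`). Path distances on the cycle correspond exactly to positive edge lengths with the
polygon inequality (`polygon_of_isPathDistance`, `exists_pathDistance`, `eq_mul_of_edges`).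
A constant curvature metric is therefore a positive eigenvector of `T` satisfying the polygon
inequality, with eigenvalue `1 - K / 4`, and the claim is a nonlinear Perron–Frobenius theorem
for `T`.

The operator `T` is monotone, homogeneous, concave and continuous, it does not increase the total
length (so every eigenvalue is at most `1`, whence `K ≥ 0`), and its values always satisfy the
polygon inequality, because the increments of `P f` around the cycle sum to zero.

*Irreducibility.* If `x ≤ y` and `y` is strictly larger on a neighbour of `i` and on some edge
far from `i`, then `T x i < T y i` (`T_lt`): an optimal gradient can be raised on the neighbour
and lowered far away. For `n ≥ 5` this implies that a set of edges along which strictness never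
propagates misses at most one edge (`exists_forall_ne`).

*Existence.* For `δ > 0` the operator `T + δ ∑ ℓ` is strictly monotone, and a maximiser of the
Collatz–Wielandt quotient is an eigenvector (`exists_eigen_perturbed`). As `δ → 0` compactness of
the simplex gives an eigenvector of `T`, which is positive by irreducibility and the
polygon inequality (`exists_eigen`).

*Uniqueness.* If `c x ≤ y` are eigenvectors that touch, they have the same eigenvalue and, by
irreducibility, differ in at most one edge; that edge is handled by concavity
(`eigen_unique`).
-/

open Finset

namespace Paper

variable {V : Type*} [Fintype V]

/-- The Laplacian of a Markov chain `(V,p)`: `Δ f (x) = ∑_y p(x,y)(f(y) − f(x))`. -/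
noncomputable def lapMC (p : V → V → ℝ) (f : V → ℝ) (x : V) : ℝ :=
  ∑ y, p x y * (f y - f x)

/-- The Ollivier curvature of a Markov chain `(V,p)` with respect to a path distance `d`. -/
noncomputable def kappaMC (p : V → V → ℝ) (d : V → V → ℝ) (x y : V) : ℝ :=
  sInf { r : ℝ | ∃ f : V → ℝ, grad d f y x = 1 ∧ gradNorm p d f = 1 ∧
      r = grad d (lapMC p f) x y }

end Paper

namespace MarkovCycle

set_option linter.unusedSectionVars false

section

variable {n : ℕ} [NeZero n]

/-- Nonnegative rates bounded by one on the cycle, positive in both directions. The rows need not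
sum to one. -/
structure IsCycleChain (p : ZMod n → ZMod n → ℝ) : Prop where
  right : ∀ k, 0 < p k (k + 1)
  left : ∀ k, 0 < p k (k - 1)
  nonneg : ∀ x y, 0 ≤ p x y
  le_one : ∀ x y, p x y ≤ 1

/-- The action of the lazy kernel `1 + Δ / 4` on gradients: if `g k = f (k + 1) - f k`, then
`flow p g k = P f (k + 1) - P f k` where `P f = f + Δ f / 4`. -/
noncomputable def flow (p : ZMod n → ZMod n → ℝ) (g : ZMod n → ℝ) (k : ZMod n) : ℝ :=
  g k + 1 / 4 * (p (k + 1) (k + 1 + 1) * g (k + 1) - p (k + 1) k * g k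
    - p k (k + 1) * g k + p k (k - 1) * g (k - 1))

/-- `g` is the gradient of a function on the cycle that is 1-Lipschitz for the edge lengths `ℓ`.
The absolute value around `ℓ k` only makes the notion nonempty for every `ℓ`. -/
def Feas (ℓ g : ZMod n → ℝ) : Prop := (∀ k, |g k| ≤ |ℓ k|) ∧ ∑ k, g k = 0

/-- The transport operator on edge lengths: by Kantorovich duality, `T p ℓ k` is the
Wasserstein distance, for the lengths `ℓ`, between the lazy one-step distributions started from
`k` and from `k + 1`. -/
noncomputable def T (p : ZMod n → ZMod n → ℝ) (ℓ : ZMod n → ℝ) (k : ZMod n) : ℝ :=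
  sSup ((fun g => flow p g k) '' {g | Feas ℓ g})

/-! ### Elementary properties of the transport operator -/

lemma feas_zero (ℓ : ZMod n → ℝ) : Feas ℓ (0 : ZMod n → ℝ) := by
  refine ⟨fun k => by simp, by simp⟩

lemma Feas.neg {ℓ g : ZMod n → ℝ} (h : Feas ℓ g) : Feas ℓ (-g) :=
  ⟨fun k => by simpa using h.1 k, by simp [h.2]⟩

lemma Feas.smul {ℓ g : ZMod n → ℝ} (h : Feas ℓ g) (c : ℝ) : Feas (c • ℓ) (c • g) := by
  refine ⟨fun k => ?_, by simp [← Finset.mul_sum, h.2]⟩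
  simp only [Pi.smul_apply, smul_eq_mul, abs_mul]
  exact mul_le_mul_of_nonneg_left (h.1 k) (abs_nonneg c)

lemma Feas.mono {x y g : ZMod n → ℝ} (h : Feas x g) (hx : ∀ k, 0 ≤ x k) (hxy : ∀ k, x k ≤ y k) :
    Feas y g := by
  refine ⟨fun k => (h.1 k).trans ?_, h.2⟩
  rw [abs_of_nonneg (hx k), abs_of_nonneg ((hx k).trans (hxy k))]
  exact hxy k

lemma flow_add (p : ZMod n → ZMod n → ℝ) (g h : ZMod n → ℝ) (k : ZMod n) :
    flow p (g + h) k = flow p g k + flow p h k := by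
  simp only [flow, Pi.add_apply]; ring

lemma flow_smul (p : ZMod n → ZMod n → ℝ) (c : ℝ) (g : ZMod n → ℝ) (k : ZMod n) :
    flow p (c • g) k = c * flow p g k := by
  simp only [flow, Pi.smul_apply, smul_eq_mul]; ring

lemma flow_neg (p : ZMod n → ZMod n → ℝ) (g : ZMod n → ℝ) (k : ZMod n) :
    flow p (-g) k = - flow p g k := by
  simp only [flow, Pi.neg_apply]; ring

lemma sum_flow (p : ZMod n → ZMod n → ℝ) (g : ZMod n → ℝ) :
    ∑ k, flow p g k = ∑ k, g k := by
  have h1 : ∑ k, p (k + 1) (k + 1 + 1) * g (k + 1) = ∑ k, p k (k + 1) * g k :=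
    Equiv.sum_comp (Equiv.addRight (1 : ZMod n)) (fun k => p k (k + 1) * g k)
  have h2 : ∑ k, p k (k - 1) * g (k - 1) = ∑ k, p (k + 1) k * g k := by
    rw [← Equiv.sum_comp (Equiv.addRight (1 : ZMod n)) (fun k => p k (k - 1) * g (k - 1))]
    simp
  simp only [flow, Finset.sum_add_distrib, ← Finset.mul_sum, Finset.sum_sub_distrib, h1, h2]
  ring

lemma flow_mono {p : ZMod n → ZMod n → ℝ} (hp : IsCycleChain p) {g h : ZMod n → ℝ}
    (hgh : ∀ k, g k ≤ h k) (k : ZMod n) : flow p g k ≤ flow p h k := by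
  have e1 := mul_le_mul_of_nonneg_left (hgh (k + 1)) (hp.nonneg (k + 1) (k + 1 + 1))
  have e2 := mul_le_mul_of_nonneg_left (hgh (k - 1)) (hp.nonneg k (k - 1))
  have e3 := mul_le_mul_of_nonneg_left (hgh k)
    (show 0 ≤ 4 - p (k + 1) k - p k (k + 1) by
      linarith [hp.le_one (k + 1) k, hp.le_one k (k + 1)])
  simp only [flow]
  linarith

lemma isCompact_feas (ℓ : ZMod n → ℝ) : IsCompact {g | Feas ℓ g} := by
  have hc : IsCompact (Set.Icc (fun k => -|ℓ k|) (fun k => |ℓ k|)) := isCompact_Icc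
  refine hc.of_isClosed_subset ?_ ?_
  · simp only [Feas, Set.ofPred_and, Set.ofPred_forall]
    refine IsClosed.inter (isClosed_iInter fun k => ?_) ?_
    · exact isClosed_le (by fun_prop) (by fun_prop)
    · exact isClosed_eq (by fun_prop) (by fun_prop)
  · intro g hg
    exact ⟨fun k => (abs_le.1 (hg.1 k)).1, fun k => (abs_le.1 (hg.1 k)).2⟩

lemma isGreatest_T (p : ZMod n → ZMod n → ℝ) (ℓ : ZMod n → ℝ) (k : ZMod n) :
    IsGreatest ((fun g => flow p g k) '' {g | Feas ℓ g}) (T p ℓ k) := by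
  refine IsCompact.isGreatest_sSup ((isCompact_feas ℓ).image ?_) ⟨_, 0, feas_zero ℓ, rfl⟩
  unfold flow
  fun_prop

lemma le_T {p : ZMod n → ZMod n → ℝ} {ℓ g : ZMod n → ℝ} (h : Feas ℓ g) (k : ZMod n) :
    flow p g k ≤ T p ℓ k := (isGreatest_T p ℓ k).2 ⟨g, h, rfl⟩

lemma exists_T (p : ZMod n → ZMod n → ℝ) (ℓ : ZMod n → ℝ) (k : ZMod n) :
    ∃ g, Feas ℓ g ∧ flow p g k = T p ℓ k := (isGreatest_T p ℓ k).1

lemma T_nonneg (p : ZMod n → ZMod n → ℝ) (ℓ : ZMod n → ℝ) (k : ZMod n) : 0 ≤ T p ℓ k := by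
  have := le_T (p := p) (feas_zero ℓ) k
  simpa [flow] using this

lemma T_mono (p : ZMod n → ZMod n → ℝ) {x y : ZMod n → ℝ} (hx : ∀ k, 0 ≤ x k)
    (hxy : ∀ k, x k ≤ y k) (k : ZMod n) : T p x k ≤ T p y k := by
  obtain ⟨g, hg, e⟩ := exists_T p x k
  rw [← e]
  exact le_T (hg.mono hx hxy) k

lemma smul_T_le (p : ZMod n → ZMod n → ℝ) (x : ZMod n → ℝ) (c : ℝ) (k : ZMod n) :
    c * T p x k ≤ T p (c • x) k := by
  obtain ⟨g, hg, e⟩ := exists_T p x k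
  rw [← e, ← flow_smul]
  exact le_T (hg.smul c) k

/-- The transport operator does not increase the total length, because the flow conserves mass;
this is where nonnegativity of the curvature comes from. -/
lemma sum_T_le {p : ZMod n → ZMod n → ℝ} (hp : IsCycleChain p) {ℓ : ZMod n → ℝ}
    (hℓ : ∀ k, 0 ≤ ℓ k) : ∑ k, T p ℓ k ≤ ∑ k, ℓ k := by
  rw [← sum_flow p ℓ]
  refine Finset.sum_le_sum fun k _ => ?_
  obtain ⟨g, hg, e⟩ := exists_T p ℓ k
  rw [← e]
  refine flow_mono hp (fun j => ?_) k
  have := hg.1 j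
  rw [abs_of_nonneg (hℓ j)] at this
  exact (le_abs_self _).trans this

/-- Transport distances satisfy the polygon inequality: no edge is longer than
all the others together. -/
lemma polygon_T (p : ZMod n → ZMod n → ℝ) (ℓ : ZMod n → ℝ) (k : ZMod n) :
    2 * T p ℓ k ≤ ∑ i, T p ℓ i := by
  obtain ⟨g, hg, e⟩ := exists_T p ℓ k
  have h0 : ∑ i, flow p g i = 0 := by rw [sum_flow, hg.2]
  rw [← Finset.add_sum_erase _ _ (Finset.mem_univ k)] at h0 ⊢
  have h1 : ∑ i ∈ Finset.univ.erase k, -flow p g i ≤ ∑ i ∈ Finset.univ.erase k, T p ℓ i := by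
    refine Finset.sum_le_sum fun i _ => ?_
    rw [← flow_neg]
    exact le_T hg.neg i
  rw [Finset.sum_neg_distrib] at h1
  linarith

/-- Laziness: under the polygon inequality, an optimal gradient at `k` may be taken
maximal on the edge `k` itself, since moving weight onto that edge costs at most what it gains. -/
lemma lazy {p : ZMod n → ZMod n → ℝ} (hp : IsCycleChain p) {ℓ g : ZMod n → ℝ}
    (hn : (2 : ZMod n) ≠ 0) (hℓ : ∀ k, 0 ≤ ℓ k) (k : ZMod n) (hk : 2 * ℓ k ≤ ∑ i, ℓ i)
    (hg : Feas ℓ g) :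
    ∃ g', Feas ℓ g' ∧ g' k = ℓ k ∧ flow p g k ≤ flow p g' k := by
  have hb : ∀ j, -ℓ j ≤ g j ∧ g j ≤ ℓ j := fun j => by
    have := hg.1 j
    rw [abs_of_nonneg (hℓ j)] at this
    exact abs_le.1 this
  rcases (hb k).2.eq_or_lt with h | hlt
  · exact ⟨g, hg, h, le_rfl⟩
  set t := ℓ k - g k with ht
  have ht0 : 0 < t := by linarith
  set A := ∑ j ∈ Finset.univ.erase k, (g j + ℓ j) with hA
  have hA' : A = ∑ i, ℓ i - ℓ k - g k := by
    have h1 := Finset.add_sum_erase _ (fun j => g j + ℓ j) (Finset.mem_univ k)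
    have h2 : ∑ j, (g j + ℓ j) = ∑ j, ℓ j := by rw [Finset.sum_add_distrib, hg.2, zero_add]
    linarith
  have htA : t ≤ A := by linarith
  have hA0 : 0 < A := by linarith
  have hθ : 0 < t / A := by positivity
  have hθ1 : t / A ≤ 1 := (div_le_one hA0).2 htA
  refine ⟨fun j => if j = k then ℓ k else g j - t / A * (g j + ℓ j), ⟨fun j => ?_, ?_⟩,
    by simp, ?_⟩
  · by_cases hj : j = k
    · simp [hj]
    · simp only [hj, if_false]
      rw [abs_of_nonneg (hℓ j), abs_le]
      have h1 : 0 ≤ g j + ℓ j := by linarith [(hb j).1]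
      have h2 := mul_le_of_le_one_left h1 hθ1
      have h3 := mul_nonneg hθ.le h1
      constructor <;> linarith [(hb j).2]
  · rw [← Finset.add_sum_erase _ _ (Finset.mem_univ k)]
    have h1 : ∑ j ∈ Finset.univ.erase k,
        (if j = k then ℓ k else g j - t / A * (g j + ℓ j)) =
        ∑ j ∈ Finset.univ.erase k, (g j - t / A * (g j + ℓ j)) :=
      Finset.sum_congr rfl fun j hj => by simp [Finset.ne_of_mem_erase hj]
    rw [h1, Finset.sum_sub_distrib, ← Finset.mul_sum, ← hA, div_mul_cancel₀ _ hA0.ne']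
    have h2 := Finset.add_sum_erase _ g (Finset.mem_univ k)
    rw [hg.2] at h2
    simp only [if_true]
    linarith
  · have h10 : (1 : ZMod n) ≠ 0 := by
      intro h
      apply hn
      rw [← one_add_one_eq_two, h, add_zero]
    have n1 : k + 1 ≠ k := by simpa using h10
    have n2 : k - 1 ≠ k := by simpa using h10
    have n3 : k + 1 ≠ k - 1 := by
      intro h
      apply hn
      linear_combination h
    -- the two neighbours of `k` together lose at most `t`
    have hsum : (g (k + 1) + ℓ (k + 1)) + (g (k - 1) + ℓ (k - 1)) ≤ A := by
      rw [hA, ← Finset.sum_pair (f := fun j => g j + ℓ j) n3]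
      refine Finset.sum_le_sum_of_subset_of_nonneg ?_ fun j _ _ => by linarith [(hb j).1]
      intro j hj
      simp only [Finset.mem_insert, Finset.mem_singleton] at hj
      rcases hj with rfl | rfl <;> simp [n1, n2]
    have hsum' : t / A * (g (k + 1) + ℓ (k + 1)) + t / A * (g (k - 1) + ℓ (k - 1)) ≤ t := by
      rw [← mul_add]
      calc _ ≤ t / A * A := mul_le_mul_of_nonneg_left hsum hθ.le
        _ = t := div_mul_cancel₀ _ hA0.ne'
    simp only [flow, n1, n2, if_true, if_false]
    set u := t / A * (g (k + 1) + ℓ (k + 1)) with hu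
    set v := t / A * (g (k - 1) + ℓ (k - 1)) with hv
    have hu0 : 0 ≤ u := mul_nonneg hθ.le (by linarith [(hb (k + 1)).1])
    have hv0 : 0 ≤ v := mul_nonneg hθ.le (by linarith [(hb (k - 1)).1])
    have e1 := mul_le_of_le_one_left hu0 (hp.le_one (k + 1) (k + 1 + 1))
    have e2 := mul_le_of_le_one_left hv0 (hp.le_one k (k - 1))
    have e3 := mul_le_of_le_one_left ht0.le (hp.le_one (k + 1) k)
    have e4 := mul_le_of_le_one_left ht0.le (hp.le_one k (k + 1))
    have e5 : ℓ k = g k + t := by rw [ht]; ring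
    rw [e5]
    linarith

/-! ### Continuity of the transport operator -/

/-- A function within the Lipschitz bounds is moved to a closed gradient at a cost of its total
sum, by shrinking its positive (or negative) part. -/
lemma exists_feas_repair {ℓ c : ZMod n → ℝ} (hc : ∀ k, |c k| ≤ |ℓ k|) :
    ∃ g, Feas ℓ g ∧ ∑ k, |g k - c k| ≤ |∑ k, c k| := by
  wlog hs : 0 ≤ ∑ k, c k generalizing c with H
  · obtain ⟨g, hg, h⟩ := H (c := -c) (fun k => by simpa using hc k) (by
      simp only [Pi.neg_apply, Finset.sum_neg_distrib]; linarith)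
    refine ⟨-g, hg.neg, ?_⟩
    simp only [Pi.neg_apply, Finset.sum_neg_distrib, abs_neg] at h ⊢
    refine le_trans (le_of_eq (Finset.sum_congr rfl fun k _ => ?_)) h
    rw [← abs_neg]
    congr 1
    ring
  set P := ∑ k, max (c k) 0 with hP
  have hsP : ∑ k, c k ≤ P := Finset.sum_le_sum fun k _ => le_max_left _ _
  rcases hs.eq_or_lt with h0 | h0
  · exact ⟨c, ⟨hc, h0.symm⟩, by simp⟩
  have hP0 : 0 < P := h0.trans_le hsP
  set θ := (∑ k, c k) / P with hθ
  have hθ0 : 0 < θ := by positivity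
  have hθ1 : θ ≤ 1 := (div_le_one hP0).2 hsP
  refine ⟨fun k => c k - θ * max (c k) 0, ⟨fun k => (?_ : _ ≤ |c k|).trans (hc k), ?_⟩, ?_⟩
  · rcases le_total (c k) 0 with h | h
    · simp [max_eq_right h]
    · simp only [max_eq_left h]
      rw [abs_of_nonneg h, abs_of_nonneg]
      · nlinarith
      · nlinarith
  · rw [Finset.sum_sub_distrib, ← Finset.mul_sum, ← hP, hθ, div_mul_cancel₀ _ hP0.ne', sub_self]
  · have h1 : ∀ k, |c k - θ * max (c k) 0 - c k| = θ * max (c k) 0 := fun k => by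
      rw [sub_sub_cancel_left, abs_neg, abs_of_nonneg]
      exact mul_nonneg hθ0.le (le_max_right _ _)
    simp only [h1]
    rw [← Finset.mul_sum, ← hP, hθ, div_mul_cancel₀ _ hP0.ne', abs_of_pos h0]

lemma exists_feas_near {ℓ ℓ' g : ZMod n → ℝ} (hg : Feas ℓ' g) :
    ∃ g', Feas ℓ g' ∧ ∑ k, |g' k - g k| ≤ 2 * ∑ k, |ℓ' k - ℓ k| := by
  set c : ZMod n → ℝ := fun k => max (-|ℓ k|) (min |ℓ k| (g k)) with hcdef
  have hc : ∀ k, |c k| ≤ |ℓ k| := fun k => by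
    rw [abs_le]
    exact ⟨le_max_left _ _, max_le (by linarith [abs_nonneg (ℓ k)]) (min_le_left _ _)⟩
  have hcg : ∀ k, |c k - g k| ≤ |ℓ' k - ℓ k| := fun k => by
    have h1 := abs_le.1 (hg.1 k)
    have h2 := abs_sub_abs_le_abs_sub (ℓ' k) (ℓ k)
    have h3 := abs_nonneg (ℓ k)
    have h4 := abs_nonneg (ℓ' k - ℓ k)
    rw [abs_le]
    simp only [hcdef]
    rcases max_cases (-|ℓ k|) (min |ℓ k| (g k)) with ⟨e, h⟩ | ⟨e, h⟩ <;>
    rcases min_cases |ℓ k| (g k) with ⟨e', h'⟩ | ⟨e', h'⟩ <;> rw [e] <;> (try rw [e']) <;>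
    rw [e'] at h <;> constructor <;> linarith
  obtain ⟨g', hg', h⟩ := exists_feas_repair hc
  refine ⟨g', hg', ?_⟩
  have hD : ∑ k, |c k - g k| ≤ ∑ k, |ℓ' k - ℓ k| := Finset.sum_le_sum fun k _ => hcg k
  have h5 : |∑ k, c k| ≤ ∑ k, |c k - g k| := by
    have : ∑ k, c k = ∑ k, (c k - g k) := by rw [Finset.sum_sub_distrib, hg.2, sub_zero]
    rw [this]
    exact Finset.abs_sum_le_sum_abs _ _
  calc ∑ k, |g' k - g k| ≤ ∑ k, (|g' k - c k| + |c k - g k|) :=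
        Finset.sum_le_sum fun k _ => abs_sub_le _ _ _
    _ = ∑ k, |g' k - c k| + ∑ k, |c k - g k| := Finset.sum_add_distrib
    _ ≤ _ := by linarith

lemma T_le_add {p : ZMod n → ZMod n → ℝ} (hp : IsCycleChain p) (ℓ ℓ' : ZMod n → ℝ)
    (k : ZMod n) : T p ℓ' k ≤ T p ℓ k + 4 * ∑ i, |ℓ' i - ℓ i| := by
  obtain ⟨g, hg, e⟩ := exists_T p ℓ' k
  obtain ⟨g', hg', h⟩ := exists_feas_near (ℓ := ℓ) hg
  have h1 := le_T (p := p) hg' k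
  set H := ∑ i, |g' i - g i| with hH
  have hH0 : 0 ≤ H := Finset.sum_nonneg fun i _ => abs_nonneg _
  have h2 : flow p g k ≤ flow p (g' + fun _ => H) k := by
    refine flow_mono hp (fun i => ?_) k
    have h3 : |g' i - g i| ≤ H :=
      Finset.single_le_sum (f := fun i => |g' i - g i|) (fun i _ => abs_nonneg _)
        (Finset.mem_univ i)
    simp only [Pi.add_apply]
    linarith [(abs_le.1 h3).1]
  rw [flow_add] at h2
  have h3 : flow p (fun _ => H) k ≤ 2 * H := by
    simp only [flow]
    have e1 := mul_le_of_le_one_left hH0 (hp.le_one (k + 1) (k + 1 + 1))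
    have e2 := mul_le_of_le_one_left hH0 (hp.le_one k (k - 1))
    have e3 := mul_nonneg (hp.nonneg (k + 1) k) hH0
    have e4 := mul_nonneg (hp.nonneg k (k + 1)) hH0
    linarith
  linarith

lemma continuous_T {p : ZMod n → ZMod n → ℝ} (hp : IsCycleChain p) (k : ZMod n) :
    Continuous fun ℓ => T p ℓ k := by
  rw [continuous_iff_continuousAt]
  intro ℓ
  rw [ContinuousAt, tendsto_iff_dist_tendsto_zero]
  have h : Filter.Tendsto (fun ℓ' : ZMod n → ℝ => 4 * ∑ i, |ℓ' i - ℓ i|) (nhds ℓ) (nhds 0) := by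
    have : Continuous (fun ℓ' : ZMod n → ℝ => 4 * ∑ i, |ℓ' i - ℓ i|) := by fun_prop
    simpa using this.tendsto ℓ
  refine squeeze_zero (fun _ => dist_nonneg) (fun ℓ' => ?_) h
  rw [Real.dist_eq, abs_le]
  have h1 := T_le_add hp ℓ ℓ' k
  have h2 := T_le_add hp ℓ' ℓ k
  simp only [abs_sub_comm (ℓ _) (ℓ' _)] at h2
  constructor <;> linarith

/-! ### Pushing mass onto a neighbouring edge -/

/-- The edge `j` is neither `i` nor a neighbour of `i`. -/
def Far (i j : ZMod n) : Prop := j ≠ i - 1 ∧ j ≠ i ∧ j ≠ i + 1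

/-- Small nonzero integers stay nonzero modulo `n`. -/
lemma cast_ne_zero (hn : 5 ≤ n) (m : ℕ) (h0 : 0 < m) (hm : m < 5) : (m : ZMod n) ≠ 0 := by
  rw [Ne, ZMod.natCast_eq_zero_iff]
  exact fun h => absurd (Nat.le_of_dvd h0 h) (by omega)

lemma small_ne_zero (hn : 5 ≤ n) : (1 : ZMod n) ≠ 0 ∧ (2 : ZMod n) ≠ 0 ∧ (3 : ZMod n) ≠ 0 ∧
    (4 : ZMod n) ≠ 0 := by
  refine ⟨?_, ?_, ?_, ?_⟩
  · exact_mod_cast cast_ne_zero hn 1 (by norm_num) (by norm_num)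
  · exact_mod_cast cast_ne_zero hn 2 (by norm_num) (by norm_num)
  · exact_mod_cast cast_ne_zero hn 3 (by norm_num) (by norm_num)
  · exact_mod_cast cast_ne_zero hn 4 (by norm_num) (by norm_num)

/-- Raising a gradient on a neighbour of `i`, compensated far away from `i`, strictly increases
the flow at `i`. -/
lemma exists_push {p : ZMod n → ZMod n → ℝ} (hp : IsCycleChain p) (hn : 5 ≤ n) {i m j : ZMod n}
    (hm : m = i + 1 ∨ m = i - 1) (hj : Far i j) :
    ∃ q, 0 < q ∧ ∀ g t, flow p (g + (Pi.single m t - Pi.single j t)) i = flow p g i + q * t := by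
  obtain ⟨h1, h2, h3, h4⟩ := small_ne_zero hn
  obtain ⟨f1, f2, f3⟩ := hj
  have a1 : i + 1 ≠ i - 1 := fun h => h2 (by linear_combination h)
  rcases hm with rfl | rfl
  · refine ⟨1 / 4 * p (i + 1) (i + 1 + 1), by have := hp.right (i + 1); positivity, fun g t => ?_⟩
    rw [flow_add]
    simp [flow, f1.symm, f2.symm, f3.symm, h1, a1.symm]
    ring
  · refine ⟨1 / 4 * p i (i - 1), by have := hp.left i; positivity, fun g t => ?_⟩
    rw [flow_add]
    simp [flow, f1.symm, f2.symm, f3.symm, h1, a1]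
    ring

lemma feas_push {x y g : ZMod n → ℝ} (hg : Feas x g) (hx : ∀ k, 0 ≤ x k) (hxy : ∀ k, x k ≤ y k)
    {m j : ZMod n} (hmj : m ≠ j) {t : ℝ} (ht : 0 ≤ t) (htm : x m + t ≤ y m)
    (htj : x j + t ≤ y j) : Feas y (g + (Pi.single m t - Pi.single j t)) := by
  refine ⟨fun k => ?_, ?_⟩
  · have h := hg.1 k
    rw [abs_of_nonneg (hx k), abs_le] at h
    rw [abs_of_nonneg ((hx k).trans (hxy k)), abs_le]
    have := hxy k
    simp only [Pi.add_apply, Pi.sub_apply, Pi.single_apply]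
    by_cases hkm : k = m
    · subst hkm
      simp only [if_true, hmj, if_false]
      constructor <;> linarith
    · by_cases hkj : k = j
      · subst hkj
        simp only [if_true, hkm, if_false]
        constructor <;> linarith
      · simp only [hkm, hkj, if_false]
        constructor <;> linarith
  · simp only [Pi.add_apply, Pi.sub_apply, Finset.sum_add_distrib, Finset.sum_sub_distrib, hg.2]
    simp [Pi.single_apply]

lemma Far.ne_neighbour {i m j : ZMod n} (hm : m = i + 1 ∨ m = i - 1) (hj : Far i j) : m ≠ j := by
  rcases hm with rfl | rfl
  · exact hj.2.2.symm
  · exact hj.1.symm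

/-- Strict monotonicity: the transport cost at `i` grows when one neighbouring edge and one
far edge grow. -/
lemma T_lt {p : ZMod n → ZMod n → ℝ} (hp : IsCycleChain p) (hn : 5 ≤ n) {x y : ZMod n → ℝ}
    (hx : ∀ k, 0 ≤ x k) (hxy : ∀ k, x k ≤ y k) {i m j : ZMod n}
    (hm : m = i + 1 ∨ m = i - 1) (hj : Far i j) (hxm : x m < y m) (hxj : x j < y j) :
    T p x i < T p y i := by
  obtain ⟨q, hq, H⟩ := exists_push hp hn hm hj
  obtain ⟨g, hg, e⟩ := exists_T p x i
  set t := min (y m - x m) (y j - x j) with ht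
  have ht0 : 0 < t := lt_min (by linarith) (by linarith)
  have h := le_T (p := p) (feas_push (t := t) hg hx hxy (hj.ne_neighbour hm) ht0.le
    (by linarith [min_le_left (y m - x m) (y j - x j)])
    (by linarith [min_le_right (y m - x m) (y j - x j)])) i
  rw [H, e] at h
  linarith [mul_pos hq ht0]

/-- The combinatorial form of irreducibility: if no point of `S` has both a neighbour and a far
point outside `S`, then `S` misses at most one point. This is where `5 ≤ n` is needed. -/
lemma exists_forall_ne (hn : 5 ≤ n) {S : ZMod n → Prop} (hS : ∃ i, S i)
    (hS' : ∃ i, ¬ S i)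
    (H : ∀ i m j, S i → (m = i + 1 ∨ m = i - 1) → Far i j → ¬ S m → S j) :
    ∃ j, ¬ S j ∧ ∀ k, k ≠ j → S k := by
  obtain ⟨h1, h2, h3, h4⟩ := small_ne_zero hn
  obtain ⟨i, hi, hi'⟩ : ∃ i, S i ∧ ¬ S (i + 1) := by
    by_contra! hcon
    obtain ⟨a, ha⟩ := hS
    obtain ⟨b, hb⟩ := hS'
    have : ∀ m : ℕ, S (a + m) := fun m => by
      induction m with
      | zero => simpa using ha
      | succ m ih => simpa [add_assoc] using hcon _ ih
    refine hb ?_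
    have := this (b - a).val
    rwa [ZMod.natCast_zmod_val, add_sub_cancel] at this
  refine ⟨i + 1, hi', fun k hk => ?_⟩
  by_cases hk0 : k = i
  · exact hk0 ▸ hi
  by_cases hk1 : k = i - 1
  · subst hk1
    by_contra hcon
    have e : S (i - 2) := H i (i - 1) (i - 2) hi (Or.inr rfl)
      ⟨fun h => h1 (by linear_combination -h), fun h => h2 (by linear_combination -h),
        fun h => h3 (by linear_combination -h)⟩ hcon
    exact hi' (H (i - 2) (i - 1) (i + 1) e (Or.inl (by ring))
      ⟨fun h => h4 (by linear_combination h), fun h => h3 (by linear_combination h),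
        fun h => h2 (by linear_combination h)⟩ hcon)
  · exact H i (i + 1) k hi (Or.inl rfl) ⟨hk1, hk0, hk⟩ hi'


/-! ### Existence of a positive eigenvector -/

/-- The perturbed operator `T + δ ∑ ℓ` is strictly monotone, so a maximiser of the
Collatz–Wielandt quotient over the simplex is an eigenvector. -/
lemma exists_eigen_perturbed {p : ZMod n → ZMod n → ℝ} (hp : IsCycleChain p) (hn : 5 ≤ n)
    {δ : ℝ} (hδ : 0 < δ) (hδ1 : δ ≤ 1) :
    ∃ r ∈ Set.Icc (1 / 2 : ℝ) (n + 1), ∃ ℓ ∈ stdSimplex ℝ (ZMod n),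
      ∀ k, T p ℓ k + δ = r * ℓ k := by
  obtain ⟨h1, h2, h3, h4⟩ := small_ne_zero hn
  have hn0 : (0 : ℝ) < n := by exact_mod_cast (by omega : 0 < n)
  have hcard : (Finset.univ : Finset (ZMod n)).card = n := by simp [ZMod.card]
  set C : Set (ℝ × (ZMod n → ℝ)) :=
    {z | z ∈ Set.Icc (1 / 2 : ℝ) (n + 1) ×ˢ stdSimplex ℝ (ZMod n) ∧
      ∀ k, z.1 * z.2 k ≤ T p z.2 k + δ} with hC
  have bound : ∀ r : ℝ, ∀ ℓ ∈ stdSimplex ℝ (ZMod n), (∀ k, r * ℓ k ≤ T p ℓ k + δ) →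
      r ≤ n + 1 := by
    intro r ℓ hℓ h
    have e := Finset.sum_le_sum fun k (_ : k ∈ Finset.univ) => h k
    rw [← Finset.mul_sum, hℓ.2, Finset.sum_add_distrib, Finset.sum_const, hcard] at e
    have e2 := sum_T_le hp hℓ.1
    rw [hℓ.2] at e2
    simp only [nsmul_eq_mul] at e
    nlinarith
  have hCc : IsCompact C := by
    refine (isCompact_Icc.prod (isCompact_stdSimplex ℝ _)).of_isClosed_subset ?_ fun z hz => hz.1
    simp only [hC, Set.ofPred_and, Set.ofPred_forall]
    refine IsClosed.inter ?_ (isClosed_iInter fun k => ?_)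
    · exact (isClosed_Icc.prod (isClosed_stdSimplex ℝ _))
    · refine isClosed_le (by fun_prop) ?_
      exact ((continuous_T hp k).comp continuous_snd).add continuous_const
  -- the alternating gradient on two edges at distance two shows that the uniform vector
  -- has Collatz–Wielandt quotient at least `1 / 2`
  have hone : ∀ k, 1 / 2 ≤ T p (fun _ => (1 : ℝ)) k := by
    intro k
    have a1 : k ≠ k + 2 := fun h => h2 (by linear_combination -h)
    have a2 : k + 1 ≠ k + 2 := fun h => h1 (by linear_combination -h)
    have a3 : k - 1 ≠ k + 2 := fun h => h3 (by linear_combination -h)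
    have hf : Feas (fun _ => (1 : ℝ)) ((0 : ZMod n → ℝ) + (Pi.single k 1 - Pi.single (k + 2) 1)) :=
      feas_push (feas_zero 0) (fun _ => le_rfl) (fun _ => zero_le_one) a1 zero_le_one
        (by simp) (by simp)
    refine le_trans ?_ (le_T hf k)
    simp only [flow, Pi.add_apply, Pi.sub_apply, Pi.single_apply, Pi.zero_apply, a1, a2, a3]
    simp only [add_eq_left, sub_eq_self, h1, if_true, if_false]
    linarith [hp.le_one (k + 1) k, hp.le_one k (k + 1)]
  have hne : C.Nonempty := by
    refine ⟨(1 / 2, (n : ℝ)⁻¹ • fun _ => (1 : ℝ)), ⟨⟨⟨le_rfl, by linarith⟩, ⟨fun k => ?_, ?_⟩⟩,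
      fun k => ?_⟩⟩
    · simp
    · simp [hn0.ne']
    · have e1 := smul_T_le p (fun _ => (1 : ℝ)) (n : ℝ)⁻¹ k
      have e2 := mul_le_mul_of_nonneg_left (hone k) (inv_nonneg.2 hn0.le)
      simp only [Pi.smul_apply, smul_eq_mul] at *
      linarith
  obtain ⟨⟨r, ℓ⟩, ⟨⟨hr, hℓ⟩, hrℓ⟩, hmax⟩ := hCc.exists_isMaxOn hne continuous_fst.continuousOn
  simp only at hr hℓ hrℓ
  refine ⟨r, hr, ℓ, hℓ, ?_⟩
  by_contra! hcon
  obtain ⟨i, hi⟩ := hcon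
  have hi' : r * ℓ i < T p ℓ i + δ := lt_of_le_of_ne (hrℓ i) (Ne.symm hi)
  have hr0 : 0 < r := by linarith [hr.1]
  set y : ZMod n → ℝ := fun k => T p ℓ k + δ with hy
  have hy0 : ∀ k, 0 < y k := fun k => by
    have := T_nonneg p ℓ k
    simp only [hy]; linarith
  set s := ∑ k, y k with hs
  have hsr : r < s := by
    have : ∑ k, r * ℓ k < ∑ k, y k :=
      Finset.sum_lt_sum (fun k _ => hrℓ k) ⟨i, Finset.mem_univ _, hi'⟩
    rwa [← Finset.mul_sum, hℓ.2, mul_one] at this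
  have hs0 : 0 < s := hr0.trans hsr
  have key : ∀ k, (r + δ * (s - r) / s) * y k ≤ T p y k + δ * s := by
    intro k
    have e1 : r * T p ℓ k ≤ T p y k := (smul_T_le p ℓ r k).trans
      (T_mono p (fun j => mul_nonneg hr0.le (hℓ.1 j)) (fun j => hrℓ j) k)
    have e2 : y k ≤ s := Finset.single_le_sum (fun j _ => (hy0 j).le) (Finset.mem_univ k)
    have e3 : δ * (s - r) / s * y k ≤ δ * (s - r) := by
      rw [div_mul_eq_mul_div, div_le_iff₀ hs0]
      exact mul_le_mul_of_nonneg_left e2 (mul_nonneg hδ.le (by linarith))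
    have e4 : r * y k = r * T p ℓ k + r * δ := by simp only [hy]; ring
    linarith
  have hmem : s⁻¹ • y ∈ stdSimplex ℝ (ZMod n) := by
    refine ⟨fun k => ?_, ?_⟩
    · exact mul_nonneg (inv_nonneg.2 hs0.le) (hy0 k).le
    · simp only [Pi.smul_apply, smul_eq_mul, ← Finset.mul_sum]
      exact inv_mul_cancel₀ hs0.ne'
  have hle : ∀ k, (r + δ * (s - r) / s) * (s⁻¹ • y) k ≤ T p (s⁻¹ • y) k + δ := by
    intro k
    have e1 := smul_T_le p y s⁻¹ k
    have e2 := mul_le_mul_of_nonneg_left (key k) (inv_nonneg.2 hs0.le)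
    have e3 : s⁻¹ * (δ * s) = δ := by field_simp
    rw [mul_add s⁻¹ (T p y k), e3] at e2
    simp only [Pi.smul_apply, smul_eq_mul]
    calc _ = s⁻¹ * ((r + δ * (s - r) / s) * y k) := by ring
      _ ≤ _ := by linarith
  have hgt : 0 < δ * (s - r) / s := div_pos (mul_pos hδ (by linarith)) hs0
  have hmem' : (r + δ * (s - r) / s, s⁻¹ • y) ∈ C :=
    ⟨⟨⟨by show 1 / 2 ≤ r + _; linarith [hr.1], bound _ _ hmem hle⟩, hmem⟩, hle⟩
  have hfin : r + δ * (s - r) / s ≤ r := hmax hmem'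
  linarith

/-- Letting the perturbation tend to zero: the admissible perturbation sizes form a compact set
containing `(0, 1]`. -/
lemma exists_eigen_simplex {p : ZMod n → ZMod n → ℝ} (hp : IsCycleChain p) (hn : 5 ≤ n) :
    ∃ r : ℝ, 0 < r ∧ ∃ ℓ ∈ stdSimplex ℝ (ZMod n), ∀ k, T p ℓ k = r * ℓ k := by
  set D : Set (ℝ × ℝ × (ZMod n → ℝ)) :=
    {z | z ∈ Set.Icc (0 : ℝ) 1 ×ˢ Set.Icc (1 / 2 : ℝ) (n + 1) ×ˢ stdSimplex ℝ (ZMod n) ∧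
      ∀ k, T p z.2.2 k + z.1 = z.2.1 * z.2.2 k} with hD
  have hDc : IsCompact D := by
    refine (isCompact_Icc.prod (isCompact_Icc.prod
      (isCompact_stdSimplex ℝ _))).of_isClosed_subset ?_ fun z hz => hz.1
    simp only [hD, Set.ofPred_and, Set.ofPred_forall]
    refine IsClosed.inter ?_ (isClosed_iInter fun k => ?_)
    · exact isClosed_Icc.prod (isClosed_Icc.prod (isClosed_stdSimplex ℝ _))
    · refine isClosed_eq ?_ (by fun_prop)
      exact ((continuous_T hp k).comp (continuous_snd.comp continuous_snd)).add continuous_fst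
  have hcl : IsClosed (Prod.fst '' D) := (hDc.image continuous_fst).isClosed
  have hsub : Set.Ioc (0 : ℝ) 1 ⊆ Prod.fst '' D := by
    rintro δ ⟨h0, h1⟩
    obtain ⟨r, hr, ℓ, hℓ, h⟩ := exists_eigen_perturbed hp hn h0 h1
    exact ⟨(δ, r, ℓ), ⟨⟨⟨h0.le, h1⟩, hr, hℓ⟩, h⟩, rfl⟩
  have h0 : (0 : ℝ) ∈ Prod.fst '' D := by
    refine hcl.closure_subset_iff.2 hsub ?_
    rw [closure_Ioc zero_ne_one]
    exact ⟨le_rfl, zero_le_one⟩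
  obtain ⟨⟨δ, r, ℓ⟩, ⟨⟨-, hr, hℓ⟩, h⟩, rfl⟩ := h0
  refine ⟨r, by have := hr.1; simp only at this; linarith, ℓ, hℓ, fun k => ?_⟩
  simpa using h k

/-- The eigenvector is positive: by irreducibility its zero set misses at most one edge, and
by the polygon inequality it cannot be supported on a single edge. -/
lemma exists_eigen {p : ZMod n → ZMod n → ℝ} (hp : IsCycleChain p) (hn : 5 ≤ n) :
    ∃ r ≤ 1, ∃ ℓ : ZMod n → ℝ, (∀ k, 0 < ℓ k) ∧ (∀ k, 2 * ℓ k ≤ ∑ i, ℓ i) ∧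
      ∀ k, T p ℓ k = r * ℓ k := by
  obtain ⟨r, hr, ℓ, hℓ, h⟩ := exists_eigen_simplex hp hn
  have hpoly : ∀ k, 2 * ℓ k ≤ ∑ i, ℓ i := fun k => by
    have e := polygon_T p ℓ k
    simp only [h, ← Finset.mul_sum] at e
    refine le_of_mul_le_mul_left ?_ hr
    linarith
  refine ⟨r, ?_, ℓ, fun k => ?_, hpoly, h⟩
  · have e := sum_T_le hp hℓ.1
    simp only [h, ← Finset.mul_sum, hℓ.2] at e
    linarith
  by_contra hk
  have hk0 : ℓ k = 0 := le_antisymm (not_lt.1 hk) (hℓ.1 k)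
  have hex : ∃ i, ¬ ℓ i = 0 := by
    by_contra! hcon
    have := hℓ.2
    simp [hcon] at this
  obtain ⟨j, hj, hj'⟩ := exists_forall_ne hn (S := fun i => ℓ i = 0) ⟨k, hk0⟩ hex (by
    intro i m j hi hm hfar hm'
    by_contra hj
    have e := T_lt hp hn (x := 0) (y := ℓ) (fun _ => le_rfl) hℓ.1 hm hfar
      (lt_of_le_of_ne (hℓ.1 m) (Ne.symm hm')) (lt_of_le_of_ne (hℓ.1 j) (Ne.symm hj))
    rw [h i, hi, mul_zero] at e
    exact absurd (T_nonneg p 0 i) (not_le.2 e))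
  have e := hpoly j
  rw [Finset.sum_eq_single j (fun b _ hb => hj' b hb) (by simp)] at e
  have := hℓ.1 j
  exact hj (by linarith)

/-! ### Uniqueness of the eigenvector -/

lemma eigen_le {p : ZMod n → ZMod n → ℝ} {x y : ZMod n → ℝ} {r s : ℝ}
    (hx : ∀ k, 0 < x k) (hy : ∀ k, 0 < y k)
    (hTx : ∀ k, T p x k = r * x k) (hTy : ∀ k, T p y k = s * y k) :
    ∃ c, 0 < c ∧ (∀ k, c * x k ≤ y k) ∧ (∃ k, c * x k = y k) ∧ r ≤ s := by
  obtain ⟨j, -, hj⟩ := Finset.exists_min_image Finset.univ (fun k => y k / x k)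
    ⟨0, Finset.mem_univ _⟩
  have hle : ∀ k, y j / x j * x k ≤ y k := fun k =>
    (le_div_iff₀ (hx k)).1 (hj k (Finset.mem_univ k))
  have hc : 0 < y j / x j := div_pos (hy j) (hx j)
  have hje : y j / x j * x j = y j := div_mul_cancel₀ _ (hx j).ne'
  refine ⟨y j / x j, hc, hle, ⟨j, hje⟩, ?_⟩
  have e := (smul_T_le p x (y j / x j) j).trans
    (T_mono p (fun k => (mul_pos hc (hx k)).le) hle j)
  rw [hTx, hTy] at e
  have e2 : y j / x j * (r * x j) = r * y j := by linear_combination r * hje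
  rw [e2] at e
  exact le_of_mul_le_mul_right e (hy j)

/-- Positive eigenvectors of the transport operator are unique up to scaling. If `c x ≤ y` touch
but differ, they differ in a single edge `j` by irreducibility; concavity of the operator
along the segment from `y` to `y` with the edge `j` collapsed excludes this. -/
lemma eigen_unique {p : ZMod n → ZMod n → ℝ} (hp : IsCycleChain p) (hn : 5 ≤ n)
    {x y : ZMod n → ℝ} {r s : ℝ} (hx : ∀ k, 0 < x k) (hy : ∀ k, 0 < y k)
    (hTx : ∀ k, T p x k = r * x k) (hTy : ∀ k, T p y k = s * y k) :
    ∃ c, 0 < c ∧ ∀ k, y k = c * x k := by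
  obtain ⟨h1, h2, h3, h4⟩ := small_ne_zero hn
  obtain ⟨c, hc, hle, hex, hrs⟩ := eigen_le hx hy hTx hTy
  obtain ⟨-, -, -, -, hsr⟩ := eigen_le hy hx hTy hTx
  obtain rfl : r = s := le_antisymm hrs hsr
  refine ⟨c, hc, ?_⟩
  by_contra! hcon
  obtain ⟨i, hi⟩ := hcon
  obtain ⟨j, hj, hj'⟩ := exists_forall_ne hn (S := fun k => c * x k = y k) hex ⟨i, hi.symm⟩ (by
    intro i m j hi hm hfar hm'
    by_contra hj
    have e := T_lt hp hn (x := c • x) (y := y) (fun k => (mul_pos hc (hx k)).le) hle hm hfar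
      (lt_of_le_of_ne (hle m) hm') (lt_of_le_of_ne (hle j) hj)
    have e2 := smul_T_le p x c i
    rw [hTy, ← hi] at e
    rw [hTx] at e2
    linarith)
  have hjlt : c * x j < y j := lt_of_le_of_ne (hle j) hj
  set θ := c * x j / y j with hθ
  have hθ0 : 0 < θ := div_pos (mul_pos hc (hx j)) (hy j)
  have hθ1 : θ < 1 := (div_lt_one (hy j)).2 hjlt
  have hθy : θ * y j = c * x j := div_mul_cancel₀ _ (hy j).ne'
  obtain ⟨q, hq, H⟩ := exists_push hp hn (i := j) (m := j + 1) (j := j + 2) (Or.inl rfl)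
    ⟨fun h => h3 (by linear_combination h), fun h => h2 (by linear_combination h),
      fun h => h1 (by linear_combination h)⟩
  set t := min (y (j + 1)) (y (j + 2)) with ht
  have ht0 : 0 < t := lt_min (hy _) (hy _)
  obtain ⟨g, hg, e⟩ := exists_T p y j
  -- `θ • g` has slack `(1 - θ) * y` on every edge but `j`, which the push uses up
  have hzj : ∀ k, k ≠ j → θ * y k + (1 - θ) * y k ≤ c * x k := fun k hk => by
    rw [hj' k hk]; exact le_of_eq (by ring)
  have hf : Feas (c • x) (θ • g + (Pi.single (j + 1) ((1 - θ) * t)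
      - Pi.single (j + 2) ((1 - θ) * t))) := by
    refine feas_push (x := θ • y) (hg.smul θ) (fun k => (mul_pos hθ0 (hy k)).le) (fun k => ?_)
      (fun h => h1 (by linear_combination -h)) (mul_nonneg (by linarith) ht0.le) ?_ ?_
    · simp only [Pi.smul_apply, smul_eq_mul]
      by_cases hk : k = j
      · rw [hk, hθy]
      · have := hzj k hk
        have := mul_pos (sub_pos.2 hθ1) (hy k)
        linarith
    · have e1 := hzj (j + 1) (fun h => h1 (by linear_combination h))
      have e2 := mul_le_mul_of_nonneg_left (min_le_left (y (j + 1)) (y (j + 2)))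
        (sub_pos.2 hθ1).le
      simp only [Pi.smul_apply, smul_eq_mul]
      linarith
    · have e1 := hzj (j + 2) (fun h => h2 (by linear_combination h))
      have e2 := mul_le_mul_of_nonneg_left (min_le_right (y (j + 1)) (y (j + 2)))
        (sub_pos.2 hθ1).le
      simp only [Pi.smul_apply, smul_eq_mul]
      linarith
  have e1 := le_T (p := p) hf j
  rw [H, flow_smul, e, hTy] at e1
  have e2 : T p (c • x) j ≤ c * (r * x j) := by
    have := smul_T_le p (c • x) c⁻¹ j
    rw [smul_smul, inv_mul_cancel₀ hc.ne', one_smul, hTx, inv_mul_le_iff₀ hc] at this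
    exact this
  have e3 : θ * (r * y j) = c * (r * x j) := by linear_combination r * hθy
  have e4 := mul_pos hq (mul_pos (sub_pos.2 hθ1) ht0)
  linarith

/-! ### Gradients and potentials on the cycle -/

lemma sum_range_cycle (g : ZMod n → ℝ) (x : ZMod n) :
    ∑ j ∈ Finset.range n, g (x + j) = ∑ k, g k := by
  rw [← Equiv.sum_comp (Equiv.addLeft x) g]
  refine Finset.sum_bij' (fun j _ => (j : ZMod n)) (fun k _ => k.val) ?_ ?_ ?_ ?_ ?_
  · simp
  · intro k _
    exact Finset.mem_range.2 (ZMod.val_lt k)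
  · intro j hj
    exact ZMod.val_cast_of_lt (Finset.mem_range.1 hj)
  · intro k _
    exact ZMod.natCast_zmod_val k
  · simp

lemma exists_potential {g : ZMod n → ℝ} (hg : ∑ k, g k = 0) :
    ∃ f : ZMod n → ℝ, ∀ k, f (k + 1) - f k = g k := by
  refine ⟨fun x => ∑ j ∈ Finset.range x.val, g j, fun k => ?_⟩
  have hk : ((k.val : ℕ) : ZMod n) = k := ZMod.natCast_zmod_val k
  have hs : ∑ j ∈ Finset.range (k.val + 1), g j = ∑ j ∈ Finset.range k.val, g j + g k := by
    rw [Finset.sum_range_succ, hk]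
  rcases Nat.lt_or_ge (k.val + 1) n with h | h
  · have hv : (k + 1).val = k.val + 1 := by
      conv_lhs => rw [← hk]
      exact_mod_cast ZMod.val_cast_of_lt h
    simp only [hv, hs]
    ring
  · have hkn : k.val + 1 = n := le_antisymm (ZMod.val_lt k) h
    have h0 : k + 1 = 0 := by
      have : ((k.val + 1 : ℕ) : ZMod n) = 0 := by rw [hkn]; exact ZMod.natCast_self n
      rwa [Nat.cast_add, hk, Nat.cast_one] at this
    have e := sum_range_cycle g 0
    simp only [zero_add, hg] at e
    rw [hkn, e] at hs
    simp only [h0, ZMod.val_zero, Finset.range_zero, Finset.sum_empty]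
    linarith

lemma lapMC_eq {p : ZMod n → ZMod n → ℝ} (hn : 5 ≤ n) (hp0 : ∀ x y, 0 ≤ p x y)
    (hadj : ∀ x y : ZMod n, 0 < p x y ↔ (y = x + 1 ∨ y = x - 1)) (f : ZMod n → ℝ) (x : ZMod n) :
    Paper.lapMC p f x = p x (x + 1) * (f (x + 1) - f x) + p x (x - 1) * (f (x - 1) - f x) := by
  have h2 := (small_ne_zero hn).2.1
  refine Fintype.sum_eq_add _ _ (fun h => h2 (by linear_combination h)) fun y hy => ?_
  have : ¬ 0 < p x y := fun h => by
    rcases (hadj x y).1 h with h | h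
    · exact hy.1 h
    · exact hy.2 h
  rw [le_antisymm (not_lt.1 this) (hp0 x y), zero_mul]

lemma isCycleChain {p : ZMod n → ZMod n → ℝ} (hp0 : ∀ x y, 0 ≤ p x y) (hp1 : ∀ x y, p x y ≤ 1)
    (hadj : ∀ x y : ZMod n, 0 < p x y ↔ (y = x + 1 ∨ y = x - 1)) : IsCycleChain p :=
  ⟨fun k => (hadj _ _).2 (Or.inl rfl), fun k => (hadj _ _).2 (Or.inr rfl), hp0, hp1⟩

lemma kappaMC_comm {p d : ZMod n → ZMod n → ℝ} (hd : ∀ x y, d x y = d y x) (x y : ZMod n) :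
    Paper.kappaMC p d x y = Paper.kappaMC p d y x := by
  have hneg : ∀ (f : ZMod n → ℝ) u v, Paper.grad d (-f) u v = Paper.grad d f v u := by
    intro f u v
    simp only [Paper.grad, Pi.neg_apply, hd u v]
    congr 1
    ring
  have hlap : ∀ f : ZMod n → ℝ, Paper.lapMC p (-f) = -Paper.lapMC p f := by
    intro f
    ext u
    simp only [Paper.lapMC, Pi.neg_apply, ← Finset.sum_neg_distrib]
    exact Finset.sum_congr rfl fun v _ => by ring
  have habs : ∀ (f : ZMod n → ℝ) u v, |Paper.grad d f v u| = |Paper.grad d f u v| := by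
    intro f u v
    simp only [Paper.grad, hd u v]
    rw [abs_div, abs_div, abs_sub_comm]
  have hnorm : ∀ f : ZMod n → ℝ, Paper.gradNorm p d (-f) = Paper.gradNorm p d f := by
    intro f
    simp only [Paper.gradNorm, hneg, habs]
  have hsub : ∀ u v, {r : ℝ | ∃ f : ZMod n → ℝ, Paper.grad d f v u = 1 ∧
      Paper.gradNorm p d f = 1 ∧ r = Paper.grad d (Paper.lapMC p f) u v} ⊆
      {r : ℝ | ∃ f : ZMod n → ℝ, Paper.grad d f u v = 1 ∧
      Paper.gradNorm p d f = 1 ∧ r = Paper.grad d (Paper.lapMC p f) v u} := by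
    rintro u v r ⟨f, h1, h2, h3⟩
    exact ⟨-f, by rw [hneg, h1], by rw [hnorm, h2], by rw [hlap, hneg, h3]⟩
  unfold Paper.kappaMC
  rw [Set.Subset.antisymm (hsub x y) (hsub y x)]

/-- The bridge between curvature and transport: for edge lengths satisfying the polygon
inequality, `T ℓ k = (1 - κ / 4) ℓ k`, where `1 / 4` is the laziness parameter in `flow`. -/
lemma kappaMC_right {p d : ZMod n → ZMod n → ℝ} (hn : 5 ≤ n) (hp0 : ∀ x y, 0 ≤ p x y)
    (hp1 : ∀ x y, p x y ≤ 1) (hadj : ∀ x y : ZMod n, 0 < p x y ↔ (y = x + 1 ∨ y = x - 1))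
    (hd : ∀ x y, d x y = d y x) (hpos : ∀ k, 0 < d k (k + 1))
    (hpoly : ∀ k, 2 * d k (k + 1) ≤ ∑ i, d i (i + 1)) (k : ZMod n) :
    Paper.kappaMC p d k (k + 1) = 4 * (1 - T p (fun i => d i (i + 1)) k / d k (k + 1)) := by
  have hp := isCycleChain hp0 hp1 hadj
  have hbdd : ∀ f : ZMod n → ℝ,
      BddAbove {r : ℝ | ∃ x y, Paper.Adj p x y ∧ r = |Paper.grad d f x y|} := by
    intro f
    refine ((Set.finite_range fun z : ZMod n × ZMod n => |Paper.grad d f z.1 z.2|).subset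
      ?_).bddAbove
    rintro r ⟨x, y, -, rfl⟩
    exact ⟨(x, y), rfl⟩
  have hr : ∀ i : ZMod n, Paper.Adj p i (i + 1) := fun i => (hadj _ _).2 (Or.inl rfl)
  have hl : ∀ i : ZMod n, Paper.Adj p (i + 1) i := fun i => (hadj _ _).2 (Or.inr (by ring))
  have hval : ∀ f : ZMod n → ℝ, f (k + 1) - f k = d k (k + 1) →
      Paper.grad d (Paper.lapMC p f) k (k + 1) =
        4 * (1 - flow p (fun i => f (i + 1) - f i) k / d k (k + 1)) := by
    intro f hf
    have hne := (hpos k).ne'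
    rw [Paper.grad, lapMC_eq hn hp0 hadj, lapMC_eq hn hp0 hadj]
    simp only [flow, add_sub_cancel_right, sub_add_cancel]
    rw [← hf] at hne ⊢
    field_simp
    ring
  have hleast : IsLeast {r : ℝ | ∃ f : ZMod n → ℝ, Paper.grad d f (k + 1) k = 1 ∧
      Paper.gradNorm p d f = 1 ∧ r = Paper.grad d (Paper.lapMC p f) k (k + 1)}
      (4 * (1 - T p (fun i => d i (i + 1)) k / d k (k + 1))) := by
    constructor
    · obtain ⟨g₀, hg₀, e₀⟩ := exists_T p (fun i => d i (i + 1)) k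
      obtain ⟨g, hg, hgk, hle⟩ := lazy hp (small_ne_zero hn).2.1 (fun i => (hpos i).le) k
        (hpoly k) hg₀
      have e : flow p g k = T p (fun i => d i (i + 1)) k :=
        le_antisymm (le_T hg k) (e₀ ▸ hle)
      obtain ⟨f, hf⟩ := exists_potential hg.2
      have hgf : (fun i => f (i + 1) - f i) = g := funext hf
      have hfk : f (k + 1) - f k = d k (k + 1) := by rw [hf, hgk]
      have hone : Paper.grad d f (k + 1) k = 1 := by
        rw [Paper.grad, hfk, hd (k + 1) k, div_self (hpos k).ne']
      refine ⟨f, hone, ?_, by rw [hval f hfk, hgf, e]⟩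
      refine IsGreatest.csSup_eq ⟨⟨k + 1, k, hl k, by rw [hone, abs_one]⟩, ?_⟩
      have hb : ∀ i, |f (i + 1) - f i| ≤ d i (i + 1) := fun i => by
        rw [hf]
        have := hg.1 i
        rwa [abs_of_nonneg (hpos i).le] at this
      rintro r ⟨x, y, hxy, rfl⟩
      rcases (hadj x y).1 hxy with rfl | h
      · rw [Paper.grad, abs_div, abs_of_pos (hpos x), abs_sub_comm]
        exact (div_le_one (hpos x)).2 (hb x)
      · obtain rfl : x = y + 1 := by rw [h]; ring
        rw [Paper.grad, hd (y + 1) y, abs_div, abs_of_pos (hpos y)]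
        exact (div_le_one (hpos y)).2 (hb y)
    · rintro r ⟨f, h1, h2, rfl⟩
      have hfk : f (k + 1) - f k = d k (k + 1) := by
        rw [Paper.grad, hd (k + 1) k, div_eq_one_iff_eq (hpos k).ne'] at h1
        exact h1
      rw [hval f hfk]
      have hfeas : Feas (fun i => d i (i + 1)) (fun i => f (i + 1) - f i) := by
        refine ⟨fun i => ?_, ?_⟩
        · rw [abs_of_pos (hpos i)]
          have h3 : |Paper.grad d f (i + 1) i| ≤ 1 := by
            rw [← h2]
            exact le_csSup (hbdd f) ⟨_, _, hl i, rfl⟩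
          rwa [Paper.grad, hd (i + 1) i, abs_div, abs_of_pos (hpos i), div_le_one (hpos i)] at h3
        · rw [Finset.sum_sub_distrib, sub_eq_zero]
          exact Equiv.sum_comp (Equiv.addRight (1 : ZMod n)) f
      have h4 := div_le_div_of_nonneg_right (le_T (p := p) hfeas k) (hpos k).le
      linarith
  exact hleast.csInf_eq

/-! ### Path distances and edge lengths -/

lemma sum_fin_sub {V : Type*} (f : V → ℝ) : ∀ {m : ℕ} (c : Fin (m + 1) → V),
    ∑ i : Fin m, (f (c i.succ) - f (c i.castSucc)) = f (c (Fin.last m)) - f (c 0)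
  | 0, c => by simp
  | m + 1, c => by
    rw [Fin.sum_univ_castSucc]
    have := sum_fin_sub f (m := m) (fun i => c i.castSucc)
    simp only [Fin.succ_castSucc, Fin.castSucc_zero] at this ⊢
    rw [this]
    simp

/-- A path distance is determined by its values on edges. -/
lemma eq_mul_of_edges {V : Type*} {p d d' : V → V → ℝ} (hd : Paper.IsPathDistance p d)
    (hd' : Paper.IsPathDistance p d') {c : ℝ} (hc : 0 < c)
    (h : ∀ x y, Paper.Adj p x y → d' x y = c * d x y) (x y : V) : d' x y = c * d x y := by
  have key : ∀ (m : ℕ) (γ : Fin (m + 1) → V), (∀ i : Fin m, Paper.Adj p (γ i.castSucc) (γ i.succ)) →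
      ∑ i : Fin m, d' (γ i.castSucc) (γ i.succ) =
        c * ∑ i : Fin m, d (γ i.castSucc) (γ i.succ) := fun m γ hγ => by
    rw [Finset.mul_sum]
    exact Finset.sum_congr rfl fun i _ => h _ _ (hγ i)
  apply le_antisymm
  · rw [mul_comm, ← div_le_iff₀ hc]
    refine (hd.2.2.2 x y).2 ?_
    rintro s ⟨m, γ, h0, h1, hγ, rfl⟩
    rw [div_le_iff₀ hc, mul_comm, ← key m γ hγ]
    exact (hd'.2.2.2 x y).1 ⟨m, γ, h0, h1, hγ, rfl⟩
  · refine (hd'.2.2.2 x y).2 ?_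
    rintro s ⟨m, γ, h0, h1, hγ, rfl⟩
    rw [key m γ hγ]
    exact mul_le_mul_of_nonneg_left ((hd.2.2.2 x y).1 ⟨m, γ, h0, h1, hγ, rfl⟩) hc.le

/-- Going around the cycle the other way bounds each edge of a path distance. -/
lemma polygon_of_isPathDistance {p d : ZMod n → ZMod n → ℝ}
    (hadj : ∀ x y : ZMod n, 0 < p x y ↔ (y = x + 1 ∨ y = x - 1))
    (hd : Paper.IsPathDistance p d) (k : ZMod n) :
    2 * d k (k + 1) ≤ ∑ i, d i (i + 1) := by
  obtain ⟨m, hm⟩ : ∃ m, n = m + 1 := Nat.exists_eq_succ_of_ne_zero (NeZero.ne n)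
  have hk : k + 1 + (m : ZMod n) = k := by
    have : ((m + 1 : ℕ) : ZMod n) = 0 := by rw [← hm]; exact ZMod.natCast_self n
    push_cast at this
    linear_combination this
  have e := (hd.2.2.2 (k + 1) k).1 ⟨m, fun i => k + 1 + ((i : ℕ) : ZMod n), by simp, by simp [hk],
    fun i => (hadj _ _).2 (Or.inl (by simp [add_assoc])), rfl⟩
  have e2 := sum_range_cycle (fun i => d i (i + 1)) (k + 1)
  have hr : Finset.range n = Finset.range (m + 1) := by rw [hm]
  rw [hr, Finset.sum_range_succ, hk,
    ← Fin.sum_univ_eq_sum_range (fun j => d (k + 1 + (j : ZMod n)) (k + 1 + (j : ZMod n) + 1))] at e2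
  rw [hd.1 (k + 1) k] at e
  simp only [Fin.val_castSucc, Fin.val_succ, Nat.cast_add, Nat.cast_one, ← add_assoc] at e
  linarith

/-- The length of an edge `x ∼ y` of the cycle, when `ℓ k` is the length of `{k, k + 1}`
(a junk value if `x` and `y` are not adjacent). -/
noncomputable def edgeLen (ℓ : ZMod n → ℝ) (x y : ZMod n) : ℝ :=
  if y = x + 1 then ℓ x else ℓ y

/-- The lengths of the paths from `x` to `y`. -/
def PathLen (p : ZMod n → ZMod n → ℝ) (ℓ : ZMod n → ℝ) (x y : ZMod n) : Set ℝ :=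
  {s : ℝ | ∃ (m : ℕ) (c : Fin (m + 1) → ZMod n), c 0 = x ∧ c (Fin.last m) = y ∧
        (∀ i : Fin m, Paper.Adj p (c i.castSucc) (c i.succ)) ∧
        s = ∑ i : Fin m, edgeLen ℓ (c i.castSucc) (c i.succ)}

/-- Edge lengths satisfying the polygon inequality extend to a path distance: the infimum
of path lengths does not shorten edges, because Lipschitz functions realise each edge length. -/
lemma exists_pathDistance {p : ZMod n → ZMod n → ℝ} (hn : 5 ≤ n) (hp0 : ∀ x y, 0 ≤ p x y)
    (hp1 : ∀ x y, p x y ≤ 1) (hadj : ∀ x y : ZMod n, 0 < p x y ↔ (y = x + 1 ∨ y = x - 1))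
    {ℓ : ZMod n → ℝ} (hpos : ∀ k, 0 < ℓ k) (hpoly : ∀ k, 2 * ℓ k ≤ ∑ i, ℓ i) :
    ∃ d, Paper.IsPathDistance p d ∧ ∀ k, d k (k + 1) = ℓ k := by
  have h2 := (small_ne_zero hn).2.1
  have elr : ∀ k, edgeLen ℓ k (k + 1) = ℓ k := fun k => by simp [edgeLen]
  have ell : ∀ k, edgeLen ℓ (k + 1) k = ℓ k := fun k => by
    have : k ≠ k + 1 + 1 := fun h => h2 (by linear_combination -h)
    simp [edgeLen, this]
  have cases_adj : ∀ x y, Paper.Adj p x y → y = x + 1 ∨ x = y + 1 := fun x y h => by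
    rcases (hadj x y).1 h with h | h
    · exact Or.inl h
    · exact Or.inr (by rw [h]; ring)
  have elpos : ∀ x y, 0 < edgeLen ℓ x y := fun x y => by
    unfold edgeLen; split_ifs <;> exact hpos _
  have elsymm : ∀ x y, Paper.Adj p x y → edgeLen ℓ x y = edgeLen ℓ y x := fun x y h => by
    rcases cases_adj x y h with rfl | rfl <;> rw [elr, ell]
  have adjsymm : ∀ x y, Paper.Adj p x y → Paper.Adj p y x := fun x y h => by
    rcases cases_adj x y h with rfl | rfl
    · exact (hadj _ _).2 (Or.inr (by ring))
    · exact (hadj _ _).2 (Or.inl rfl)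
  have hne : ∀ x y, (PathLen p ℓ x y).Nonempty := fun x y =>
    ⟨_, (y - x).val, fun i => x + ((i : ℕ) : ZMod n), by simp, by simp,
      fun i => (hadj _ _).2 (Or.inl (by simp [add_assoc])), rfl⟩
  have hnn : ∀ x y, ∀ s ∈ PathLen p ℓ x y, 0 ≤ s := by
    rintro x y s ⟨m, c, -, -, -, rfl⟩
    exact Finset.sum_nonneg fun i _ => (elpos _ _).le
  have hbdd : ∀ x y, BddBelow (PathLen p ℓ x y) := fun x y => ⟨0, hnn x y⟩
  have hglb : ∀ x y, IsGLB (PathLen p ℓ x y) (sInf (PathLen p ℓ x y)) := fun x y =>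
    isGLB_csInf (hne x y) (hbdd x y)
  have hsub : ∀ x y, PathLen p ℓ x y ⊆ PathLen p ℓ y x := by
    rintro x y s ⟨m, c, h0, h1, hc, rfl⟩
    refine ⟨m, fun i => c i.rev, by simp [h1], by simp [h0], fun i => ?_, ?_⟩
    · have := hc i.rev
      simp only [Fin.rev_castSucc, Fin.rev_succ]
      exact adjsymm _ _ this
    · rw [← Equiv.sum_comp Fin.revPerm]
      refine Finset.sum_congr rfl fun i _ => ?_
      simp only [Fin.revPerm_apply, Fin.rev_castSucc, Fin.rev_succ]
      exact elsymm _ _ (hc i.rev)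
  have hsymm : ∀ x y, sInf (PathLen p ℓ x y) = sInf (PathLen p ℓ y x) := fun x y => by
    rw [Set.Subset.antisymm (hsub x y) (hsub y x)]
  have hedge : ∀ k, sInf (PathLen p ℓ k (k + 1)) = ℓ k := by
    intro k
    apply le_antisymm
    · refine csInf_le (hbdd _ _) ⟨1, ![k, k + 1], by simp, by simp, fun i => ?_, ?_⟩
      · fin_cases i
        exact (hadj _ _).2 (Or.inl (by simp))
      · simp [elr]
    · obtain ⟨g, hg, hgk, -⟩ := lazy (isCycleChain hp0 hp1 hadj) h2 (fun i => (hpos i).le) k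
        (hpoly k) (feas_zero ℓ)
      obtain ⟨f, hf⟩ := exists_potential hg.2
      refine le_csInf (hne _ _) ?_
      rintro s ⟨m, c, h0, h1, hc, rfl⟩
      have e := sum_fin_sub f c
      rw [h0, h1, hf, hgk] at e
      rw [← e]
      refine Finset.sum_le_sum fun i _ => ?_
      have hb : ∀ i, |f (i + 1) - f i| ≤ ℓ i := fun i => by
        rw [hf]
        have := hg.1 i
        rwa [abs_of_nonneg (hpos i).le] at this
      rcases cases_adj _ _ (hc i) with h | h <;> rw [h]
      · rw [elr]
        exact (abs_le.1 (hb _)).2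
      · rw [ell]
        linarith [(abs_le.1 (hb (c i.succ))).1]
  have heq : ∀ x y, Paper.Adj p x y → sInf (PathLen p ℓ x y) = edgeLen ℓ x y := fun x y h => by
    rcases cases_adj x y h with rfl | rfl
    · rw [hedge, elr]
    · rw [hsymm, hedge, ell]
  refine ⟨fun x y => sInf (PathLen p ℓ x y), ⟨hsymm, fun x y => ⟨fun h => ?_, ?_⟩,
    fun x y => le_csInf (hne x y) (hnn x y), fun x y => ?_⟩, hedge⟩
  · -- a path between distinct points has at least one edge
    by_contra hxy
    obtain ⟨j, -, hj⟩ := Finset.exists_min_image Finset.univ ℓ ⟨0, Finset.mem_univ _⟩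
    have : ℓ j ≤ sInf (PathLen p ℓ x y) := by
      refine le_csInf (hne _ _) ?_
      rintro s ⟨m, c, h0, h1, hc, rfl⟩
      cases m with
      | zero => exact absurd (h0.symm.trans h1) hxy
      | succ m =>
        have h3 : ℓ j ≤ edgeLen ℓ (c (Fin.castSucc 0)) (c (Fin.succ 0)) := by
          unfold edgeLen; split_ifs <;> exact hj _ (Finset.mem_univ _)
        exact h3.trans (Finset.single_le_sum
          (f := fun i : Fin (m + 1) => edgeLen ℓ (c i.castSucc) (c i.succ))
          (fun i _ => (elpos _ _).le) (Finset.mem_univ 0))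
    exact absurd (hpos j) (not_lt.2 (this.trans h.le))
  · rintro rfl
    refine le_antisymm (csInf_le (hbdd _ _) ⟨0, fun _ => x, rfl, rfl, fun i => i.elim0, by simp⟩)
      (le_csInf (hne _ _) (hnn _ _))
  · convert hglb x y using 1
    ext s
    constructor
    · rintro ⟨m, c, h0, h1, hc, rfl⟩
      exact ⟨m, c, h0, h1, hc, Finset.sum_congr rfl fun i _ => heq _ _ (hc i)⟩
    · rintro ⟨m, c, h0, h1, hc, rfl⟩
      exact ⟨m, c, h0, h1, hc, Finset.sum_congr rfl fun i _ => (heq _ _ (hc i)).symm⟩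

end

end MarkovCycle

open Paper in
/-- **Theorem (constant curvature metrics on Markov cycles).**
Let `C_n` (`n ≥ 5`) be a possibly non-reversible Markov chain on the cycle `ZMod n`, i.e.
`p(i,j) > 0` iff `j = i ± 1`.  Then there is a general path distance `d` whose Ollivier
curvature is constant on edges; its constant value `K` is non-negative; and this constant
curvature metric is unique up to multiplication by a positive constant. -/
theorem cycle_markov_constant_curvature_metric
    (n : ℕ) [NeZero n] (hn : 5 ≤ n) (p : ZMod n → ZMod n → ℝ)
    (hp0 : ∀ x y, 0 ≤ p x y) (hp1 : ∀ x y, p x y ≤ 1) (hrow : ∀ x, ∑ y, p x y = 1)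
    (hadj : ∀ x y : ZMod n, 0 < p x y ↔ (y = x + 1 ∨ y = x - 1)) :
    ∃ d : ZMod n → ZMod n → ℝ, IsPathDistance p d ∧
      ∃ K : ℝ, 0 ≤ K ∧ (∀ x y, Adj p x y → kappaMC p d x y = K) ∧
        ∀ d' : ZMod n → ZMod n → ℝ, IsPathDistance p d' →
          (∃ K' : ℝ, ∀ x y, Adj p x y → kappaMC p d' x y = K') →
          ∃ c : ℝ, 0 < c ∧ ∀ x y, d' x y = c * d x y := by
  have hp := MarkovCycle.isCycleChain hp0 hp1 hadj
  obtain ⟨r, hr, ℓ, hpos, hpoly, hT⟩ := MarkovCycle.exists_eigen hp hn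
  obtain ⟨d, hd, hdℓ⟩ := MarkovCycle.exists_pathDistance hn hp0 hp1 hadj hpos hpoly
  have hfun : (fun i => d i (i + 1)) = ℓ := funext hdℓ
  refine ⟨d, hd, 4 * (1 - r), by linarith, ?_, ?_⟩
  · have key : ∀ k, kappaMC p d k (k + 1) = 4 * (1 - r) := fun k => by
      rw [MarkovCycle.kappaMC_right hn hp0 hp1 hadj hd.1 (fun i => by rw [hdℓ]; exact hpos i)
        (fun i => by simpa only [hdℓ] using hpoly i), hfun, hT, hdℓ,
        mul_div_cancel_right₀ _ (hpos k).ne']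
    intro x y hxy
    rcases (hadj x y).1 hxy with rfl | h
    · exact key x
    · obtain rfl : x = y + 1 := by rw [h]; ring
      rw [MarkovCycle.kappaMC_comm hd.1, key]
  · rintro d' hd' ⟨K', hK'⟩
    have h1 := (MarkovCycle.small_ne_zero hn).1
    have hpos' : ∀ k, 0 < d' k (k + 1) := fun k =>
      lt_of_le_of_ne (hd'.2.2.1 _ _) fun h => h1 (by
        have := (hd'.2.1 _ _).1 h.symm
        linear_combination -this)
    have hT' : ∀ k, MarkovCycle.T p (fun i => d' i (i + 1)) k = (1 - K' / 4) * d' k (k + 1) := by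
      intro k
      have e := MarkovCycle.kappaMC_right hn hp0 hp1 hadj hd'.1 hpos'
        (MarkovCycle.polygon_of_isPathDistance hadj hd') k
      rw [hK' k (k + 1) ((hadj _ _).2 (Or.inl rfl))] at e
      rw [← div_eq_iff (hpos' k).ne']
      linarith
    obtain ⟨c, hc, h⟩ := MarkovCycle.eigen_unique hp hn hpos hpos' hT hT'
    refine ⟨c, hc, MarkovCycle.eq_mul_of_edges hd hd' hc fun x y hxy => ?_⟩
    rcases (hadj x y).1 hxy with rfl | h'
    · rw [h, hdℓ]
    · obtain rfl : x = y + 1 := by rw [h']; ring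
      rw [hd'.1, hd.1, h, hdℓ]
end
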